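/- arXiv:0811.0654 — 6 statements merged into one kernel-verified Lean document; each statement's English description precedes it below -/
import Mathlib

section
/- For every natural number n, the number of partitions of 5n + 4 is divisible by 5, i.e. p(5n + 4) ≡ 0 (mod 5). -/
/-!
Let `E = ∏ (1 - X ^ i)` and `P = ∑ p(n) X ^ n`, so that `P * E = 1`. Modulo `5` one has
`P = E ^ 4 * P ^ 5`, and `P ^ 5` is a power series in `X ^ 5` by the Frobenius identity. It is
therefore enough that `E ^ 4` has no terms with exponent congruent to `4` modulo `5`
(`coeff_pentagonalSeries_pow_four`).

By the pentagonal number theorem `E = ∑ (-1) ^ k X ^ (k (3k - 1) / 2)`. Pentagonal numbers are `0`,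
`1` or `2` modulo `5`, so `E = a + b + c` with `a`, `b`, `c` supported on these residues
(`pentagonalSeries_eq_residueParts`). The terms of `E ^ 4` with exponent `≡ 4` are
`b ^ 4 + 12 a b² c + 6 a² c² ≡ (b² + ac) ^ 2`, so everything follows from `b² + ac = 0`
(`residuePart_relation`).

This relation replaces Jacobi's formula for `E ^ 3`. A coefficient of `b² + ac` is a signed count of
pairs `(k, l)` with a fixed sum of pentagonal numbers. Put `x = 6k - 1`, `y = 6l - 1`, so that the
sum is governed by `x² + y²`; up to interchanging coordinates, the pairs that occur are those with
`y ≡ 2x` modulo `5`. The orthogonal reflection `(x, y) ↦ ((3x - 4y) / 5, -(4x + 3y) / 5)` is an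
involution of this lattice which reverses the sign `(-1) ^ (k + l)`, so the count is zero
(`sum_lattice_eq_zero`).
-/

/-- `p n` is the number of partitions of `n`. -/
def partitionCount (n : ℕ) : ℕ := Fintype.card (Nat.Partition n)

open PowerSeries Finset

/-- The part of a power series supported on the exponents congruent to `r` modulo `5`. -/
noncomputable def residuePart {R : Type*} [CommRing R] (r : ZMod 5) (f : R⟦X⟧) : R⟦X⟧ :=
  .mk fun n ↦ if (n : ZMod 5) = r then f.coeff n else 0

/-- `f` is supported on exponents congruent to `r` modulo `5`. -/
def SupportedOn {R : Type*} [CommRing R] (r : ZMod 5) (f : R⟦X⟧) : Prop :=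
  ∀ n : ℕ, (n : ZMod 5) ≠ r → f.coeff n = 0

theorem supportedOn_residuePart {R : Type*} [CommRing R] (r : ZMod 5) (f : R⟦X⟧) :
    SupportedOn r (residuePart r f) := fun n hn ↦ by simp [residuePart, hn]

theorem SupportedOn.mul {R : Type*} [CommRing R] {r s : ZMod 5} {f g : R⟦X⟧}
    (hf : SupportedOn r f) (hg : SupportedOn s g) : SupportedOn (r + s) (f * g) := by
  intro n hn
  rw [coeff_mul]
  refine sum_eq_zero fun p hp ↦ ?_
  have hsum : (p.1 : ZMod 5) + p.2 = n := by exact_mod_cast congrArg _ (mem_antidiagonal.mp hp)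
  by_cases h1 : (p.1 : ZMod 5) = r
  · by_cases h2 : (p.2 : ZMod 5) = s
    · exact absurd (by rw [← hsum, h1, h2]) hn
    · rw [hg _ h2, mul_zero]
  · rw [hf _ h1, zero_mul]

/-- Reduction modulo `5` of `k (3k - 1) / 2`, where `3` is the inverse of `2`. -/
theorem pentagonal_cast (k : ℤ) : ((pentagonal k : ℕ) : ZMod 5) = 3 * (k * (3 * k - 1)) := by
  have h := congrArg (fun z : ℤ ↦ (z : ZMod 5)) (two_mul_natCast_pentagonal k)
  push_cast at h
  rw [← h, ← mul_assoc, show (3 * 2 : ZMod 5) = 1 from rfl, one_mul]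

/-- Pentagonal numbers are `0`, `1` or `2` modulo `5`, and the residue is determined by that of the
index. -/
theorem pentagonal_cast_cases (k : ℤ) :
    (((pentagonal k : ℕ) : ZMod 5) = 0 ↔ k % 5 = 0 ∨ k % 5 = 2) ∧
    (((pentagonal k : ℕ) : ZMod 5) = 1 ↔ k % 5 = 1) ∧
    (((pentagonal k : ℕ) : ZMod 5) = 2 ↔ k % 5 = 3 ∨ k % 5 = 4) := by
  rw [pentagonal_cast]
  have hk : (k : ZMod 5) = ((k % 5 : ℤ) : ZMod 5) := by
    rw [ZMod.intCast_eq_intCast_iff]; exact (Int.mod_modEq k 5).symm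
  rw [hk]
  have h1 := Int.emod_nonneg k (show (5 : ℤ) ≠ 0 by norm_num)
  have h2 := Int.emod_lt_of_pos k (show (0 : ℤ) < 5 by norm_num)
  generalize k % 5 = m at *
  interval_cases m <;> decide

theorem abs_le_pentagonal (k : ℤ) : |k| ≤ pentagonal k := by
  have h := two_mul_natCast_pentagonal k
  rcases lt_trichotomy k 0 with hk | rfl | hk
  · rw [abs_of_neg hk]; nlinarith
  · simp
  · rw [abs_of_pos hk]; nlinarith

/-- The pairs of integers whose pentagonal numbers add up to `n`. The bounds only serve to make
finiteness evident. -/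
noncomputable def pentagonalPairs (n : ℕ) : Finset (ℤ × ℤ) :=
  (Icc (-n : ℤ) n ×ˢ Icc (-n : ℤ) n).filter fun z ↦ pentagonal z.1 + pentagonal z.2 = n

theorem mem_pentagonalPairs {n : ℕ} {z : ℤ × ℤ} :
    z ∈ pentagonalPairs n ↔ pentagonal z.1 + pentagonal z.2 = n := by
  have h1 := abs_le.mp (abs_le_pentagonal z.1)
  have h2 := abs_le.mp (abs_le_pentagonal z.2)
  simp only [pentagonalPairs, mem_filter, mem_product, mem_Icc]
  constructor
  · exact fun h ↦ h.2
  · intro h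
    refine ⟨?_, h⟩
    omega

/-- The sign `(-1) ^ (k + l)` attached to a pair `(k, l)`. -/
def pairSign (R : Type*) [CommRing R] (z : ℤ × ℤ) : R := ((Int.negOnePow (z.1 + z.2) : ℤˣ) : ℤ)

/-- The coefficients of a product of two residue parts of Euler's product, as signed counts of
pairs of indices; this is where the pentagonal number description of the coefficients enters. -/
theorem coeff_residuePart_mul (R : Type*) [CommRing R] (r s : ZMod 5) (n : ℕ) :
    (residuePart r (pentagonalSeries R) * residuePart s (pentagonalSeries R)).coeff n =
      ∑ z ∈ (pentagonalPairs n).filter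
        (fun z ↦ (pentagonal z.1 : ZMod 5) = r ∧ (pentagonal z.2 : ZMod 5) = s), pairSign R z := by
  rw [coeff_mul]
  symm
  refine sum_of_injOn (fun z ↦ (pentagonal z.1, pentagonal z.2)) ?_ ?_ ?_ ?_
  · intro z _ w _ h
    simpa [Prod.ext_iff] using h
  · intro z hz
    simp only [coe_filter, Set.mem_ofPred_eq, mem_pentagonalPairs] at hz
    simpa using hz.1
  · rintro ⟨i, j⟩ hij hnot
    simp only [residuePart, coeff_mk]
    split_ifs with hi hj
    · by_cases h1 : i ∈ Set.range pentagonal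
      · by_cases h2 : j ∈ Set.range pentagonal
        · obtain ⟨k, rfl⟩ := h1
          obtain ⟨l, rfl⟩ := h2
          refine absurd ⟨(k, l), ?_, rfl⟩ hnot
          simp only [coe_filter, Set.mem_ofPred_eq, mem_pentagonalPairs]
          exact ⟨by simpa using hij, hi, hj⟩
        · rw [coeff_pentagonalSeries_eq_zero R h2, mul_zero]
      · rw [coeff_pentagonalSeries_eq_zero R h1, zero_mul]
    all_goals simp
  · intro z hz
    have hz := (mem_filter.mp hz).2
    simp [residuePart, hz.1, hz.2, pairSign, Int.negOnePow_add]

/-- The lattice sum vanishes: in the coordinates `(x, y) = (6k - 1, 6l - 1)` the condition is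
`y ≡ 2x` modulo `5`, and the reflection `(x, y) ↦ ((3x - 4y) / 5, -(4x + 3y) / 5)` preserves
`x ^ 2 + y ^ 2`, hence the sum of the two pentagonal numbers, while reversing the sign. -/
theorem sum_lattice_eq_zero (R : Type*) [CommRing R] (n : ℕ) :
    ∑ z ∈ (pentagonalPairs n).filter (fun z ↦ (z.2 - 2 * z.1 + 1) % 5 = 0), pairSign R z = 0 := by
  refine sum_involution
    (fun z _ ↦ ((3 * z.1 - 4 * z.2 + 1) / 5, (-4 * z.1 - 3 * z.2 + 2) / 5)) ?_ ?_ ?_ ?_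
  · rintro ⟨k, l⟩ hz
    have hz := (mem_filter.mp hz).2
    -- The sum of the two coordinates changes parity.
    have hodd : Odd ((3 * k - 4 * l + 1) / 5 + (-4 * k - 3 * l + 2) / 5 - (k + l)) := by
      rw [Int.odd_iff]; dsimp only at hz; omega
    simp only [pairSign]
    obtain ⟨m, hm⟩ := hodd
    rw [show (3 * k - 4 * l + 1) / 5 + (-4 * k - 3 * l + 2) / 5 = (k + l) + (2 * m + 1) by omega,
      Int.negOnePow_add (k + l), Int.negOnePow_two_mul_add_one]
    simp
  · rintro ⟨k, l⟩ hz _ heq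
    have hz := (mem_filter.mp hz).2
    simp only [Prod.mk.injEq] at heq hz
    omega
  · rintro ⟨k, l⟩ hz
    simp only [mem_filter, mem_pentagonalPairs] at hz ⊢
    obtain ⟨hn, hz⟩ := hz
    -- On the lattice the divisions by `5` are exact, so both coordinates are linear in `k`, `m`.
    obtain ⟨m, rfl⟩ : ∃ m, l = 2 * k - 1 + 5 * m := ⟨(l - 2 * k + 1) / 5, by omega⟩
    rw [show (3 * k - 4 * (2 * k - 1 + 5 * m) + 1) / 5 = 1 - k - 4 * m by omega,
      show (-4 * k - 3 * (2 * k - 1 + 5 * m) + 2) / 5 = 1 - 2 * k - 3 * m by omega]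
    refine ⟨?_, by omega⟩
    have h1 := two_mul_natCast_pentagonal k
    have h2 := two_mul_natCast_pentagonal (2 * k - 1 + 5 * m)
    have h3 := two_mul_natCast_pentagonal (1 - k - 4 * m)
    have h4 := two_mul_natCast_pentagonal (1 - 2 * k - 3 * m)
    zify at hn ⊢
    linarith
  · rintro ⟨k, l⟩ hz
    have hz := (mem_filter.mp hz).2
    simp only [Prod.mk.injEq] at hz ⊢
    omega

/-- The relation `b² + ac = 0` between the residue parts `a`, `b`, `c` of Euler's product: both
terms together count the pairs `(k, l)` with `l ≡ 2k - 1` modulo `5`, once the factors of half of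
the product `ac` are interchanged. -/
theorem residuePart_relation (R : Type*) [CommRing R] :
    residuePart 1 (pentagonalSeries R) * residuePart 1 (pentagonalSeries R) +
      residuePart 0 (pentagonalSeries R) * residuePart 2 (pentagonalSeries R) = 0 := by
  ext n
  rw [map_add, coeff_residuePart_mul, coeff_residuePart_mul, map_zero,
    ← sum_lattice_eq_zero R n]
  simp only [(pentagonal_cast_cases _).1, (pentagonal_cast_cases _).2.1,
    (pentagonal_cast_cases _).2.2]
  -- The residues of `(k, l)` in `ac` are `(0, 3)`, `(0, 4)`, `(2, 3)`, `(2, 4)`; interchanging the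
  -- coordinates moves the first and the last one into the lattice `l ≡ 2k - 1`.
  have key : ∑ z ∈ (pentagonalPairs n).filter (fun z : ℤ × ℤ ↦
        (z.1 % 5 = 0 ∧ z.2 % 5 = 3) ∨ (z.1 % 5 = 2 ∧ z.2 % 5 = 4)), pairSign R z =
      ∑ z ∈ (pentagonalPairs n).filter (fun z : ℤ × ℤ ↦
        (z.1 % 5 = 3 ∧ z.2 % 5 = 0) ∨ (z.1 % 5 = 4 ∧ z.2 % 5 = 2)), pairSign R z := by
    refine sum_nbij' Prod.swap Prod.swap ?_ ?_ ?_ ?_ ?_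
    · rintro ⟨k, l⟩ hz
      simp only [mem_filter, mem_pentagonalPairs, Prod.fst_swap, Prod.snd_swap] at hz ⊢
      omega
    · rintro ⟨k, l⟩ hz
      simp only [mem_filter, mem_pentagonalPairs, Prod.fst_swap, Prod.snd_swap] at hz ⊢
      omega
    · simp
    · simp
    · intro z _
      simp [pairSign, add_comm]
  simp only [sum_filter] at key ⊢
  rw [← sub_eq_zero, ← sum_sub_distrib] at key
  rw [← sum_add_distrib, ← sub_eq_zero, ← sum_sub_distrib]
  refine Eq.trans (sum_congr rfl fun z _ ↦ ?_) key
  have h1 := Int.emod_nonneg z.1 (show (5 : ℤ) ≠ 0 by norm_num)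
  have h2 := Int.emod_lt_of_pos z.1 (show (0 : ℤ) < 5 by norm_num)
  have h3 := Int.emod_nonneg z.2 (show (5 : ℤ) ≠ 0 by norm_num)
  have h4 := Int.emod_lt_of_pos z.2 (show (0 : ℤ) < 5 by norm_num)
  have h5 : (z.2 - 2 * z.1 + 1) % 5 = (z.2 % 5 - 2 * (z.1 % 5) + 1) % 5 := by omega
  rw [h5]
  generalize z.1 % 5 = u at *
  generalize z.2 % 5 = v at *
  interval_cases u <;> interval_cases v <;> simp

theorem pentagonalSeries_eq_residueParts (R : Type*) [CommRing R] :
    pentagonalSeries R = residuePart 0 (pentagonalSeries R) +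
      residuePart 1 (pentagonalSeries R) + residuePart 2 (pentagonalSeries R) := by
  ext n
  simp only [map_add, residuePart, coeff_mk]
  by_cases h : n ∈ Set.range pentagonal
  · obtain ⟨k, rfl⟩ := h
    have h : ((pentagonal k : ℕ) : ZMod 5) = 0 ∨ ((pentagonal k : ℕ) : ZMod 5) = 1 ∨
        ((pentagonal k : ℕ) : ZMod 5) = 2 := by
      have := pentagonal_cast_cases k
      rw [this.1, this.2.1, this.2.2]
      omega
    rcases h with h | h | h <;> rw [h] <;> simp +decide
  · simp [coeff_pentagonalSeries_eq_zero R h]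

/-- Modulo `5`, the fourth power of Euler's product has no terms with exponent `≡ 4`. -/
theorem coeff_pentagonalSeries_pow_four {n : ℕ} (hn : (n : ZMod 5) = 4) :
    (pentagonalSeries (ZMod 5) ^ 4).coeff n = 0 := by
  have hrel := residuePart_relation (ZMod 5)
  have ha := supportedOn_residuePart 0 (pentagonalSeries (ZMod 5))
  have hb := supportedOn_residuePart 1 (pentagonalSeries (ZMod 5))
  have hc := supportedOn_residuePart 2 (pentagonalSeries (ZMod 5))
  rw [pentagonalSeries_eq_residueParts]
  generalize residuePart 0 (pentagonalSeries (ZMod 5)) = a at *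
  generalize residuePart 1 (pentagonalSeries (ZMod 5)) = b at *
  generalize residuePart 2 (pentagonalSeries (ZMod 5)) = c at *
  have h5 : (5 : (ZMod 5)⟦X⟧) = 0 := by
    rw [← map_ofNat (C (R := ZMod 5)) 5, show (OfNat.ofNat 5 : ZMod 5) = 0 from rfl, map_zero]
  have h0 := ha.mul ha
  have h1 := ha.mul hb
  have h2 := ha.mul hc
  have h3 := hb.mul hc
  have h4 := hc.mul hc
  -- By the relation, the square is `a² + 2ab + ac + 2bc + c²`. Squaring again, the terms with
  -- exponents congruent to `4` are `2a²c² + 8ab²c + (ac)² = -5a²c²`.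
  have hexp : (a + b + c) ^ 4 =
      ((a * a) * (a * a) + 4 • ((a * b) * (c * c)) + 4 • ((a * c) * (b * c)))
      + (4 • ((a * a) * (a * b)) + 4 • ((b * c) * (b * c)) + 2 • ((a * c) * (c * c)))
      + (2 • ((a * a) * (a * c)) + 4 • ((a * b) * (a * b)) + 4 • ((b * c) * (c * c)))
      + (4 • ((a * a) * (b * c)) + 4 • ((a * b) * (a * c)) + (c * c) * (c * c)) := by
    simp only [nsmul_eq_mul]
    push_cast
    linear_combination ((a + b + c) ^ 2 + (a * a + 2 * a * b + a * c + 2 * b * c + c * c)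
      + 8 * a * c) * hrel - a ^ 2 * c ^ 2 * h5
  rw [hexp]
  simp only [map_add, map_nsmul]
  rw [(h0.mul h0) n (by rw [hn]; decide), (h1.mul h4) n (by rw [hn]; decide),
    (h2.mul h3) n (by rw [hn]; decide), (h0.mul h1) n (by rw [hn]; decide),
    (h3.mul h3) n (by rw [hn]; decide), (h2.mul h4) n (by rw [hn]; decide),
    (h0.mul h2) n (by rw [hn]; decide), (h1.mul h1) n (by rw [hn]; decide),
    (h3.mul h4) n (by rw [hn]; decide), (h0.mul h3) n (by rw [hn]; decide),
    (h1.mul h2) n (by rw [hn]; decide), (h4.mul h4) n (by rw [hn]; decide)]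
  simp

/-- Euler's generating function: the partition numbers are the coefficients of the inverse of
`∏ (1 - X ^ i)`. -/
theorem partitionSeries_mul_pentagonalSeries (R : Type*) [CommRing R] :
    (.mk fun n ↦ (Fintype.card (Nat.Partition n) : R) : R⟦X⟧) * pentagonalSeries R = 1 := by
  let : TopologicalSpace R := ⊥
  have : DiscreteTopology R := ⟨rfl⟩
  open scoped PowerSeries.WithPiTopology in
  have h1 := Nat.Partition.hasProd_powerSeriesMk_card_restricted R (fun _ ↦ True)
  have h2 := h1.mul (WithPiTopology.hasProd_one_sub_X_pow R)
  have h3 : (fun i : ℕ ↦ (if True then ∑' j : ℕ, (X : R⟦X⟧) ^ ((i + 1) * j) else 1) *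
      (1 - X ^ (i + 1))) = fun _ ↦ 1 := by
    funext i
    simp only [if_true, pow_mul]
    exact WithPiTopology.tsum_pow_mul_one_sub_of_constantCoeff_eq_zero (by simp)
  rw [h3] at h2
  simpa [Nat.Partition.restricted] using h2.unique hasProd_one

theorem ramanujan_mod_5 (n : ℕ) : partitionCount (5 * n + 4) ≡ 0 [MOD 5] := by
  rw [← ZMod.natCast_eq_natCast_iff, Nat.cast_zero]
  set P : (ZMod 5)⟦X⟧ := .mk fun n ↦ (Fintype.card (Nat.Partition n) : ZMod 5) with hP
  have hPE : P * pentagonalSeries (ZMod 5) = 1 := partitionSeries_mul_pentagonalSeries (ZMod 5)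
  have hfact : P = pentagonalSeries (ZMod 5) ^ 4 * P ^ 5 := by
    calc P = P * (P * pentagonalSeries (ZMod 5)) ^ 4 := by rw [hPE, one_pow, mul_one]
      _ = _ := by ring
  have hsupp : SupportedOn 0 (P ^ 5) := by
    intro m hm
    have : Fact (Nat.Prime 5) := ⟨by norm_num⟩
    have hfrob : P ^ 5 = P.expand 5 (by norm_num) := by
      have := MvPowerSeries.map_frobenius_expand 5 (by norm_num) (f := P)
      rw [ZMod.frobenius_zmod] at this
      exact (by simpa using this.symm : P ^ 5 = MvPowerSeries.expand 5 _ P)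
    rw [hfrob]
    exact coeff_expand_of_not_dvd _ _ _ fun h ↦ hm ((ZMod.natCast_eq_zero_iff m 5).mpr h)
  have hcoeff : P.coeff (5 * n + 4) = 0 := by
    rw [hfact, coeff_mul]
    refine sum_eq_zero fun p hp ↦ ?_
    by_cases h : (p.2 : ZMod 5) = 0
    · rw [coeff_pentagonalSeries_pow_four, zero_mul]
      have := congrArg (fun m : ℕ ↦ (m : ZMod 5)) (mem_antidiagonal.mp hp)
      push_cast at this
      rw [h, add_zero, show (5 : ZMod 5) = 0 from rfl, zero_mul, zero_add] at this
      exact this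
    · rw [hsupp _ h, mul_zero]
  simpa [hP, partitionCount] using hcoeff
end

section
/- For every natural number n, the number of partitions of 7n + 5 is divisible by 7, i.e. p(7n + 5) ≡ 0 (mod 7). -/
open PowerSeries Finset

/-! ### Gaussian binomial coefficients -/

/-- The Gaussian binomial coefficient `[m choose j]` with `q = X`, as a power series over `ZMod 7`,
defined by a `q`-Pascal recursion; it is `0` for `j > m`, whatever the truncated exponent `m - j`. -/
noncomputable def qBinom : ℕ → ℕ → (ZMod 7)⟦X⟧
  | _, 0 => 1
  | 0, _ + 1 => 0
  | m + 1, j + 1 => qBinom m (j + 1) + X ^ (m - j) * qBinom m j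

/-- The finite Euler product `(1 - X)(1 - X²)⋯(1 - Xⁿ)` over `ZMod 7`. -/
noncomputable def eulerProd (n : ℕ) : (ZMod 7)⟦X⟧ := ∏ i ∈ range n, (1 - X ^ (i + 1))

lemma eulerProd_succ (n : ℕ) : eulerProd (n + 1) = eulerProd n * (1 - X ^ (n + 1)) := by
  simp [eulerProd, prod_range_succ]

lemma qBinom_zero_right (m : ℕ) : qBinom m 0 = 1 := by cases m <;> rfl

lemma qBinom_succ_succ (m j : ℕ) :
    qBinom (m + 1) (j + 1) = qBinom m (j + 1) + X ^ (m - j) * qBinom m j := rfl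

lemma qBinom_eq_zero (m : ℕ) : ∀ j, m < j → qBinom m j = 0 := by
  induction m with
  | zero => intro j hj; obtain ⟨j, rfl⟩ := Nat.exists_eq_add_one_of_ne_zero hj.ne'; rfl
  | succ m ih =>
    intro j hj
    obtain ⟨j, rfl⟩ := Nat.exists_eq_add_one_of_ne_zero (by omega : j ≠ 0)
    rw [qBinom_succ_succ, ih _ (by omega), ih _ (by omega)]; simp

lemma qBinom_self (m : ℕ) : qBinom m m = 1 := by
  induction m with
  | zero => rfl
  | succ m ih => rw [qBinom_succ_succ, qBinom_eq_zero m _ (by omega), ih]; simp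

/-- The product formula for `[j + k choose j]`, cleared of denominators. -/
lemma qBinom_add_mul (k : ℕ) :
    ∀ j, qBinom (j + k) j * (eulerProd j * eulerProd k) = eulerProd (j + k) := by
  induction k with
  | zero => intro j; simp [qBinom_self, eulerProd]
  | succ k ihk =>
    intro j
    induction j with
    | zero => simp [qBinom_zero_right, eulerProd]
    | succ j ihj =>
      have h1 := ihk (j + 1)
      rw [show j + 1 + (k + 1) = (j + k + 1) + 1 by ring, qBinom_succ_succ,
        show j + k + 1 - j = k + 1 by omega, eulerProd_succ (j + k + 1), eulerProd_succ k,
        eulerProd_succ j]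
      rw [show j + 1 + k = j + k + 1 by ring, eulerProd_succ j] at h1
      rw [show j + (k + 1) = j + k + 1 by ring, eulerProd_succ k] at ihj
      linear_combination (1 - X ^ (k + 1)) * h1 + X ^ (k + 1) * (1 - X ^ (j + 1)) * ihj

/-- The finite `q`-binomial theorem, in homogeneous form. The ring `A` receives the power series
through `f`, so that `z` may be a polynomial variable. -/
lemma qBinom_theorem {A : Type*} [CommRing A] (f : (ZMod 7)⟦X⟧ →+* A) (y z : A) (m : ℕ) :
    ∏ i ∈ range m, (y + z * f X ^ i) =
      ∑ j ∈ range (m + 1), f (qBinom m j) * f X ^ (j.choose 2) * z ^ j * y ^ (m - j) := by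
  induction m with
  | zero => simp [qBinom_zero_right]
  | succ m ih =>
    rw [prod_range_succ, ih, mul_add, sum_mul, sum_mul, sum_range_succ' _ (m + 1)]
    have h1 : ∑ j ∈ range (m + 1), f (qBinom m j) * f X ^ (j.choose 2) * z ^ j * y ^ (m - j) * y
        = ∑ j ∈ range (m + 1),
            f (qBinom m (j + 1)) * f X ^ ((j + 1).choose 2) * z ^ (j + 1) * y ^ (m - j)
          + y ^ (m + 1) := by
      have h2 := sum_range_succ' (fun j =>
        f (qBinom m j) * f X ^ (j.choose 2) * z ^ j * y ^ (m + 1 - j)) (m + 1)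
      rw [sum_range_succ, qBinom_eq_zero m (m + 1) (by omega)] at h2
      simp only [map_zero, zero_mul, add_zero, qBinom_zero_right, map_one, Nat.choose_zero_succ,
        pow_zero, one_mul, Nat.sub_zero, Nat.add_sub_add_right] at h2
      rw [← h2]
      refine sum_congr rfl fun j hj => ?_
      have hj : j ≤ m := by simpa [Nat.lt_succ_iff] using hj
      rw [Nat.sub_add_comm hj, pow_succ]
      ring
    rw [h1]
    simp only [qBinom_zero_right, map_one, Nat.choose_zero_succ, pow_zero, one_mul, Nat.sub_zero]
    rw [add_right_comm, ← sum_add_distrib]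
    congr 1
    refine sum_congr rfl fun j hj => ?_
    have hj : j ≤ m := by simpa [Nat.lt_succ_iff] using hj
    rw [qBinom_succ_succ, Nat.add_sub_add_right, Nat.choose_succ_succ' j 1, Nat.choose_one_right]
    have : f X ^ m = f X ^ (m - j) * f X ^ j := by rw [← pow_add]; congr 1; omega
    rw [this, map_add, map_mul, map_pow]
    ring

/-! ### The Euler function and the partition generating function -/

/-- The generating function of the partition numbers modulo 7. -/
noncomputable def partGen : (ZMod 7)⟦X⟧ := PowerSeries.mk fun n => (partitionCount n : ZMod 7)

open scoped PowerSeries.WithPiTopology in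
lemma partGen_mul : partGen * pentagonalSeries (ZMod 7) = 1 := by
  let _ : TopologicalSpace (ZMod 7) := ⊥
  have _ : DiscreteTopology (ZMod 7) := ⟨rfl⟩
  have h := Nat.Partition.hasProd_powerSeriesMk_card_restricted (ZMod 7) (fun _ => True)
  have h2 := h.mul (WithPiTopology.hasProd_one_sub_X_pow (ZMod 7))
  have h3 : HasProd (fun _ : ℕ => (1 : (ZMod 7)⟦X⟧)) 1 := hasProd_one
  have : (fun i : ℕ => (if True then ∑' j : ℕ, (X : (ZMod 7)⟦X⟧) ^ ((i + 1) * j) else 1)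
      * (1 - X ^ (i + 1))) = fun _ => 1 := by
    ext1 i
    simp_rw [if_true, pow_mul]
    exact WithPiTopology.tsum_pow_mul_one_sub_of_constantCoeff_eq_zero (by simp)
  rw [this] at h2
  convert h2.unique h3 using 2
  simp [partGen, partitionCount, Nat.Partition.restricted]

/-- The finite Euler products converge `X`-adically to the Euler function. -/
lemma exists_dvd_eulerProd_sub (M : ℕ) :
    ∃ N, ∀ m ≥ N, X ^ M ∣ eulerProd m - pentagonalSeries (ZMod 7) := by
  have h : ∀ᶠ m in Filter.atTop, ∀ d ∈ Set.Iio M,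
      (eulerProd m).coeff d = (pentagonalSeries (ZMod 7)).coeff d := by
    rw [Filter.eventually_all_finite (Set.finite_Iio M)]
    intro d _
    exact Filter.tendsto_finset_range.eventually
      (coeff_prod_one_sub_X_pow_eventually_eq (ZMod 7) d)
  obtain ⟨N, hN⟩ := Filter.eventually_atTop.1 h
  refine ⟨N, fun m hm => X_pow_dvd_iff.2 fun d hd => ?_⟩
  rw [map_sub, hN m hm d hd, sub_self]

/-- If all Euler products involved agree with the Euler function `φ` modulo `X ^ M`, then
`[a + b choose a] ≡ φ / (φ * φ)`, so that multiplying by an Euler product gives `1`. -/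
lemma dvd_qBinom_mul_sub_one {M a b n : ℕ}
    (ha : X ^ M ∣ eulerProd a - pentagonalSeries (ZMod 7))
    (hb : X ^ M ∣ eulerProd b - pentagonalSeries (ZMod 7))
    (hn : X ^ M ∣ eulerProd n - pentagonalSeries (ZMod 7))
    (hab : X ^ M ∣ eulerProd (a + b) - pentagonalSeries (ZMod 7)) :
    X ^ M ∣ qBinom (a + b) a * eulerProd n - 1 := by
  obtain ⟨u, hu⟩ := ha
  obtain ⟨v, hv⟩ := hb
  obtain ⟨w, hw⟩ := hn
  obtain ⟨x, hx⟩ := hab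
  have hG := partGen_mul
  have hB := qBinom_add_mul b a
  rw [sub_eq_iff_eq_add] at hu hv hw hx
  rw [hu, hv, hx] at hB
  rw [hw]
  set φ := pentagonalSeries (ZMod 7)
  set B := qBinom (a + b) a
  refine ⟨B * w + partGen * (x - B * (u * φ + v * φ + X ^ M * u * v)), ?_⟩
  linear_combination partGen * hB - (B * φ - 1) * hG

/-- The Frobenius map in characteristic 7, whose effect on the coefficients is trivial. -/
lemma pow_seven_eq : (pentagonalSeries (ZMod 7)) ^ 7
    = expand 7 (by norm_num) (pentagonalSeries (ZMod 7)) := by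
  have _ : Fact (Nat.Prime 7) := ⟨by norm_num⟩
  have h : (expand 7 (by norm_num) (pentagonalSeries (ZMod 7))).map (frobenius (ZMod 7) 7) =
      (pentagonalSeries (ZMod 7)) ^ 7 :=
    MvPowerSeries.map_frobenius_expand 7 (by norm_num)
  rw [← h, ZMod.frobenius_zmod]
  simp

/-! ### Jacobi's identity modulo 7 -/

lemma prod_X_pow_sub_left (n : ℕ) :
    ∏ i ∈ range n, ((X : (ZMod 7)⟦X⟧) ^ n - X ^ i) =
      (-1) ^ n * X ^ (n.choose 2) * eulerProd n := by
  have h : ∀ i ∈ range n, (X : (ZMod 7)⟦X⟧) ^ n - X ^ i = (-1) * X ^ i * (1 - X ^ (n - i)) := by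
    intro i hi
    have : (X : (ZMod 7)⟦X⟧) ^ n = X ^ i * X ^ (n - i) := by
      rw [← pow_add]; congr 1; have := mem_range.1 hi; omega
    rw [this]; ring
  rw [prod_congr rfl h, prod_mul_distrib, prod_mul_distrib, prod_const, card_range,
    prod_pow_eq_pow_sum, sum_range_id, Nat.choose_two_right, eulerProd,
    ← prod_range_reflect (fun i => 1 - (X : (ZMod 7)⟦X⟧) ^ (i + 1)) n]
  congr 1
  refine prod_congr rfl fun i hi => ?_
  have := mem_range.1 hi
  congr 2; omega

lemma prod_X_pow_sub_right (n : ℕ) :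
    ∏ i ∈ range n, ((X : (ZMod 7)⟦X⟧) ^ n - X ^ (n + 1 + i)) = X ^ (n ^ 2) * eulerProd n := by
  have h : ∀ i ∈ range n, (X : (ZMod 7)⟦X⟧) ^ n - X ^ (n + 1 + i) = X ^ n * (1 - X ^ (i + 1)) := by
    intro i hi; ring
  rw [prod_congr rfl h, prod_mul_distrib, prod_const, card_range, ← pow_mul, ← sq, eulerProd]

/-- A finite form of Jacobi's identity for the cube of the Euler product. It is the derivative at
`T = 1` of the `q`-binomial theorem for `∏ i ≤ 2n, (Xⁿ - T Xⁱ)`, whose factor `i = n` vanishes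
there. -/
lemma finite_jacobi (n : ℕ) :
    (-1) ^ (n + 1) * X ^ (n + n.choose 2 + n ^ 2) * eulerProd n ^ 2 =
      ∑ j ∈ range (2 * n + 2), X ^ (j.choose 2 + n * (2 * n + 1 - j)) *
        (((-1) ^ j * (j : (ZMod 7)⟦X⟧)) * qBinom (2 * n + 1) j) := by
  have key := qBinom_theorem (Polynomial.C : (ZMod 7)⟦X⟧ →+* _) (Polynomial.C (X ^ n))
    (-Polynomial.X) (2 * n + 1)
  rw [show 2 * n + 1 = n + 1 + n by ring, prod_range_add, prod_range_succ] at key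
  have hL : Polynomial.C (X ^ n) + -Polynomial.X * Polynomial.C (X : (ZMod 7)⟦X⟧) ^ n
      = Polynomial.C (X ^ n) * (1 - Polynomial.X) := by
    rw [map_pow]; ring
  have hR : ∀ j, Polynomial.C (qBinom (n + 1 + n) j) * Polynomial.C X ^ (j.choose 2) *
      (-Polynomial.X) ^ j * Polynomial.C (X ^ n) ^ (n + 1 + n - j) =
      Polynomial.C (X ^ (j.choose 2 + n * (n + 1 + n - j)) * ((-1) ^ j * qBinom (n + 1 + n) j)) *
        Polynomial.X ^ j := by
    intro j
    rw [neg_pow]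
    simp only [map_mul, map_pow, map_neg, map_one, pow_add, pow_mul]
    ring
  simp only [hR] at key
  rw [hL] at key
  have key2 := congrArg (fun p => (Polynomial.derivative p).eval 1) key
  simp only [Polynomial.derivative_mul, Polynomial.derivative_sum, Polynomial.eval_add,
    Polynomial.eval_mul, Polynomial.eval_finsetSum, Polynomial.derivative_C,
    Polynomial.derivative_X_pow, Polynomial.derivative_sub, Polynomial.derivative_one,
    Polynomial.derivative_X, Polynomial.eval_C, Polynomial.eval_sub, Polynomial.eval_one,
    Polynomial.eval_X, Polynomial.eval_prod, Polynomial.eval_neg, Polynomial.eval_pow,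
    sub_self, mul_zero, zero_mul, add_zero, zero_add, zero_sub, one_pow,
    mul_one, neg_mul, one_mul, mul_neg, ← sub_eq_add_neg, prod_X_pow_sub_left,
    prod_X_pow_sub_right] at key2
  rw [show 2 * n + 2 = n + 1 + n + 1 by ring, show 2 * n + 1 = n + 1 + n by ring]
  calc _ = _ := ?_
    _ = _ := key2
    _ = _ := ?_
  · ring
  · refine sum_congr rfl fun j _ => ?_
    ring

/-- The cube of the Euler function is supported modulo 7 on exponents `≡ 0, 1, 3 [MOD 7]`. -/
lemma coeff_cube_eq_zero (d : ℕ) (h0 : d % 7 ≠ 0) (h1 : d % 7 ≠ 1) (h3 : d % 7 ≠ 3) :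
    (pentagonalSeries (ZMod 7) ^ 3).coeff d = 0 := by
  have _ : Fact (Nat.Prime 7) := ⟨by norm_num⟩
  obtain ⟨N, hN⟩ := exists_dvd_eulerProd_sub (d + 1)
  -- The choice `n ≡ 3 [MOD 7]` makes the weight `j` vanish modulo 7 for `j - n ≡ 4`,
  -- the only residue for which `(j - n)(j - n - 1)/2 ≡ 6`.
  obtain ⟨n, hn, hn7⟩ : ∃ n, N + d + 2 ≤ n ∧ n % 7 = 3 :=
    ⟨7 * (N + d + 2) + 3, by omega, by omega⟩
  have hexp : ∀ j ∈ range (2 * n + 2), ∃ T, j.choose 2 + n * (2 * n + 1 - j) =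
      (n + n.choose 2 + n ^ 2) + T ∧ (2 * T : ℤ) = ((j : ℤ) - n) * (j - n - 1) := by
    intro j hj
    have hj : j ≤ 2 * n + 1 := by have := mem_range.1 hj; omega
    have c1 : ∀ k : ℕ, (2 * (k.choose 2 : ℕ) : ℤ) = k * (k - 1) := by
      intro k
      induction k with
      | zero => simp
      | succ k ih => rw [Nat.choose_succ_succ' k 1, Nat.choose_one_right]; push_cast; linarith
    have e := c1 j
    have e' := c1 n
    have hpos : (0 : ℤ) ≤ ((j : ℤ) - n) * (j - n - 1) := by
      rcases le_or_gt j n with h | h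
      · have : (j : ℤ) ≤ n := by exact_mod_cast h
        nlinarith
      · have : (n : ℤ) + 1 ≤ j := by exact_mod_cast h
        nlinarith
    have hsub : ((n * (2 * n + 1 - j) : ℕ) : ℤ) = n * (2 * n + 1 - j) := by
      push_cast [Nat.cast_sub hj]; ring
    obtain ⟨T, hT⟩ := Nat.exists_eq_add_of_le
      (show n + n.choose 2 + n ^ 2 ≤ j.choose 2 + n * (2 * n + 1 - j) by
        zify; rw [← Nat.cast_mul] at *; nlinarith)
    refine ⟨T, hT, ?_⟩
    have hT' := congrArg (Nat.cast : ℕ → ℤ) hT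
    rw [Nat.cast_add, hsub] at hT'
    push_cast at hT'
    linear_combination (-2) * hT' + e - e'
  choose! T hT hT2 using hexp
  -- Cancelling the common power of `X` leaves the exponents `T j`.
  have hJ := finite_jacobi n
  rw [sum_congr rfl (fun j hj => by rw [hT j hj, pow_add, mul_assoc]), ← mul_sum,
    mul_comm _ (X ^ _), mul_assoc] at hJ
  have hJ := mul_left_cancel₀ (pow_ne_zero _ X_ne_zero) hJ
  have hc : (eulerProd n ^ 3).coeff d = 0 := by
    have : eulerProd n ^ 3 = (-1) ^ (n + 1) * ∑ j ∈ range (2 * n + 2),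
        X ^ T j * (((-1) ^ j * (j : (ZMod 7)⟦X⟧)) * (qBinom (2 * n + 1) j * eulerProd n)) := by
      have hs : ((-1 : (ZMod 7)⟦X⟧) ^ (n + 1)) * (-1) ^ (n + 1) = 1 := by
        rw [← mul_pow]; simp
      have h2 := congrArg (fun s => (-1 : (ZMod 7)⟦X⟧) ^ (n + 1) * (s * eulerProd n)) hJ
      simp only [sum_mul, mul_assoc] at h2 ⊢
      rw [← h2]
      linear_combination (-eulerProd n ^ 3) * hs
    have hs : ((-1 : (ZMod 7)⟦X⟧) ^ (n + 1)) = C ((-1) ^ (n + 1)) := by simp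
    rw [this, hs, coeff_C_mul, map_sum, sum_eq_zero, mul_zero]
    intro j hj
    have hj' : j < 2 * n + 2 := mem_range.1 hj
    have hs : ((-1 : (ZMod 7)⟦X⟧) ^ j * (j : (ZMod 7)⟦X⟧)) = C ((-1) ^ j * (j : ZMod 7)) := by simp
    rw [coeff_X_pow_mul', hs]
    split_ifs with hle
    · have h2 := hT2 j hj
      have hle' : (T j : ℤ) ≤ d := by exact_mod_cast hle
      -- An index `j` close to either end of the range would make `T j` exceed `d`.
      have hjl : N ≤ j := by
        by_contra! hlt
        have : (j : ℤ) + d + 2 ≤ n := by omega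
        nlinarith
      have hjr : N ≤ 2 * n + 1 - j := by
        by_contra! hlt
        have : (n : ℤ) + d + 2 ≤ j := by omega
        nlinarith
      have hdv := dvd_qBinom_mul_sub_one (hN j hjl) (hN _ hjr) (hN n (by omega))
        (hN (j + (2 * n + 1 - j)) (by omega))
      rw [show j + (2 * n + 1 - j) = 2 * n + 1 by omega] at hdv
      have hz := X_pow_dvd_iff.1 hdv (d - T j) (by omega)
      rw [map_sub, sub_eq_zero, coeff_one] at hz
      rw [coeff_C_mul, hz]
      split_ifs with hd
      · have hTd : T j = d := by omega
        have h7 : (7 : ℤ) ∣ j := by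
          obtain ⟨k, hk⟩ : ∃ k : ℤ, (j : ℤ) = n + k := ⟨j - n, by ring⟩
          have h2' : 2 * (d : ℤ) = k * (k - 1) := by rw [← hTd, h2, hk]; ring
          have h2'' : 2 * (d : ℤ) ≡ k % 7 * (k % 7 - 1) [ZMOD 7] := by
            rw [h2']
            exact ((Int.mod_modEq k 7).mul ((Int.mod_modEq k 7).sub_right 1)).symm
          rw [Int.ModEq] at h2''
          have hk7 : k % 7 = 0 ∨ k % 7 = 1 ∨ k % 7 = 2 ∨ k % 7 = 3 ∨ k % 7 = 4 ∨ k % 7 = 5 ∨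
            k % 7 = 6 := by omega
          rcases hk7 with h | h | h | h | h | h | h <;> rw [h] at h2'' <;> norm_num at h2'' <;>
            omega
        have : (j : ZMod 7) = 0 := by
          rw [ZMod.natCast_eq_zero_iff]; exact_mod_cast h7
        rw [this]; simp
      · simp
    · rfl
  have hdv : X ^ (d + 1) ∣ eulerProd n ^ 3 - pentagonalSeries (ZMod 7) ^ 3 :=
    (hN n (by omega)).trans (sub_dvd_pow_sub_pow _ _ 3)
  have := X_pow_dvd_iff.1 hdv d (by omega)
  rw [map_sub, hc, zero_sub, neg_eq_zero] at this
  exact this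

/-- Sums of two elements of `{0, 1, 3}` never are `5` modulo 7. -/
lemma coeff_pow_six_eq_zero (n : ℕ) :
    (pentagonalSeries (ZMod 7) ^ 6).coeff (7 * n + 5) = 0 := by
  rw [show 6 = 3 + 3 by rfl, pow_add, coeff_mul]
  refine sum_eq_zero fun ⟨a, b⟩ hab => ?_
  have hab : a + b = 7 * n + 5 := by simpa using hab
  by_cases ha : a % 7 ≠ 0 ∧ a % 7 ≠ 1 ∧ a % 7 ≠ 3
  · rw [coeff_cube_eq_zero a ha.1 ha.2.1 ha.2.2, zero_mul]
  · rw [coeff_cube_eq_zero b (by omega) (by omega) (by omega), mul_zero]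

/-! ### The congruence -/

theorem ramanujan_mod_7 (n : ℕ) : partitionCount (7 * n + 5) ≡ 0 [MOD 7] := by
  rw [← ZMod.natCast_eq_natCast_iff, Nat.cast_zero]
  induction n using Nat.strong_induction_on with
  | _ n ih =>
    have h6 : partGen * expand 7 (by norm_num) (pentagonalSeries (ZMod 7)) =
        pentagonalSeries (ZMod 7) ^ 6 := by
      rw [← pow_seven_eq]
      linear_combination pentagonalSeries (ZMod 7) ^ 6 * partGen_mul
    have hc := congrArg (coeff (7 * n + 5)) h6
    rw [coeff_pow_six_eq_zero, coeff_mul, sum_eq_single (7 * n + 5, 0)] at hc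
    · have h0 : (pentagonalSeries (ZMod 7)).constantCoeff = 1 := by
        rw [← coeff_zero_eq_constantCoeff_apply]
        have h := coeff_pentagonalSeries_pentagonal (ZMod 7) 0
        rw [show pentagonal 0 = 0 by simp [pentagonal_def]] at h
        rw [h]; simp
      simpa [partGen, h0] using hc
    -- Every other contribution involves a smaller `p(7m + 5)` or an exponent `b` with `¬ 7 ∣ b`.
    · rintro ⟨a, b⟩ hab hne
      have hab : a + b = 7 * n + 5 := by simpa using hab
      by_cases hb : 7 ∣ b
      · obtain ⟨c, rfl⟩ := hb
        have hc0 : c ≠ 0 := by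
          rintro rfl
          exact hne (by simpa using hab)
        have ha : a = 7 * (n - c) + 5 := by omega
        simp only [partGen, coeff_mk]
        rw [ha, ih (n - c) (by omega), zero_mul]
      · rw [coeff_expand_of_not_dvd _ _ _ hb, mul_zero]
    · intro h
      exact absurd (by simp) h
end

section
/- For every natural number n, the number of partitions of 11n + 6 is divisible by 11, i.e. p(11n + 6) ≡ 0 (mod 11). -/
open PowerSeries

/-! ### Gaussian binomials and Jacobi's identity -/

section Jacobi

variable {R : Type*} [CommRing R]

/-- The finite product `(q; q)_n = (1 - q)(1 - q²)⋯(1 - qⁿ)`. -/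
def qPoch (q : R) (n : ℕ) : R := ∏ i ∈ Finset.range n, (1 - q ^ (i + 1))

theorem qPoch_succ (q : R) (n : ℕ) : qPoch q (n + 1) = qPoch q n * (1 - q ^ (n + 1)) :=
  Finset.prod_range_succ _ _

/-- The Gaussian binomial coefficient `[n, k]_q`, defined by the `q`-Pascal rule so that no division
is needed. -/
def gauss (q : R) : ℕ → ℕ → R
  | _, 0 => 1
  | 0, _ + 1 => 0
  | n + 1, k + 1 => gauss q n k + q ^ (k + 1) * gauss q n (k + 1)

theorem gauss_zero_right (q : R) (n : ℕ) : gauss q n 0 = 1 := by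
  cases n <;> rfl

theorem gauss_eq_zero (q : R) (n k : ℕ) (h : n < k) : gauss q n k = 0 := by
  induction n generalizing k with
  | zero => obtain _ | k := k <;> [omega; rfl]
  | succ n ih =>
    obtain _ | k := k
    · omega
    · rw [gauss, ih k (by omega), ih (k + 1) (by omega)]
      ring

/-- The product formula `[k + m, k]_q (q; q)_k (q; q)_m = (q; q)_{k + m}`. -/
theorem gauss_mul (q : R) (n k m : ℕ) (h : n = k + m) :
    gauss q n k * (qPoch q k * qPoch q m) = qPoch q n := by
  induction n generalizing k m with
  | zero =>
    obtain ⟨rfl, rfl⟩ : k = 0 ∧ m = 0 := by omega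
    simp [gauss, qPoch]
  | succ n ih =>
    obtain _ | k := k
    · simp [gauss_zero_right, qPoch, h]
    have h1 := ih k m (by omega)
    obtain _ | m := m
    · obtain rfl : n = k := by omega
      rw [gauss, gauss_eq_zero q n (n + 1) (by omega), qPoch_succ q n]
      linear_combination (1 - q ^ (n + 1)) * h1
    · have h2 := ih (k + 1) m (by omega)
      rw [gauss, qPoch_succ q n]
      obtain rfl : n = k + m + 1 := by omega
      rw [qPoch_succ q k, qPoch_succ q m] at *
      linear_combination (1 - q ^ (k + 1)) * h1 + q ^ (k + 1) * (1 - q ^ (m + 1)) * h2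

theorem map_gauss {S : Type*} [CommRing S] (f : R →+* S) (q : R) (n k : ℕ) :
    f (gauss q n k) = gauss (f q) n k := by
  induction n generalizing k with
  | zero => cases k <;> simp [gauss]
  | succ n ih => cases k <;> simp [gauss, ih]

/-- The finite `q`-binomial theorem. -/
theorem prod_add_mul_pow (q x y : R) (N : ℕ) :
    ∏ i ∈ Finset.range N, (x + y * q ^ i) =
      ∑ k ∈ Finset.range (N + 1), q ^ k.choose 2 * gauss q N k * x ^ (N - k) * y ^ k := by
  induction N generalizing y with
  | zero => simp [gauss]
  | succ N ih =>
    have hx : x * ∑ k ∈ Finset.range (N + 1),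
        q ^ k.choose 2 * gauss q N k * x ^ (N - k) * (y * q) ^ k =
        ∑ k ∈ Finset.range (N + 1),
          q ^ (k + 1).choose 2 * (q ^ (k + 1) * gauss q N (k + 1)) * x ^ (N - k) * y ^ (k + 1)
          + x ^ (N + 1) := by
      let g : ℕ → R := fun k => q ^ k.choose 2 * (q ^ k * gauss q N k) * x ^ (N + 1 - k) * y ^ k
      have h1 := Finset.sum_range_succ' g (N + 1)
      rw [Finset.sum_range_succ] at h1
      have h2 : g (N + 1) = 0 := by simp [g, gauss_eq_zero q N (N + 1)]
      have h3 : g 0 = x ^ (N + 1) := by simp [g, gauss_zero_right]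
      rw [h2, h3, add_zero] at h1
      simp only [g, Nat.add_sub_add_right] at h1
      rw [← h1, Finset.mul_sum]
      refine Finset.sum_congr rfl fun k hk => ?_
      rw [Nat.sub_add_comm (Nat.lt_succ_iff.1 (Finset.mem_range.1 hk))]
      ring
    have hy : y * ∑ k ∈ Finset.range (N + 1),
        q ^ k.choose 2 * gauss q N k * x ^ (N - k) * (y * q) ^ k =
        ∑ k ∈ Finset.range (N + 1),
          q ^ (k + 1).choose 2 * gauss q N k * x ^ (N - k) * y ^ (k + 1) := by
      rw [Finset.mul_sum]
      refine Finset.sum_congr rfl fun k _ => ?_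
      rw [Nat.choose_succ_succ' k 1, Nat.choose_one_right]
      ring
    have h0 : ∏ i ∈ Finset.range N, (x + y * q ^ (i + 1)) =
        ∏ i ∈ Finset.range N, (x + y * q * q ^ i) :=
      Finset.prod_congr rfl fun i _ => by ring
    rw [Finset.prod_range_succ', h0, ih, pow_zero, mul_one, mul_comm, add_mul, hx, hy,
      Finset.sum_range_succ' _ (N + 1), add_right_comm, ← Finset.sum_add_distrib]
    congr 1
    · refine Finset.sum_congr rfl fun k _ => ?_
      rw [gauss, Nat.add_sub_add_right]
      ring
    · simp [gauss]

open Polynomial in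
/-- The derivative at `z = 1` of the `q`-binomial expansion of `∏_{i ≤ 2n} (qⁿ - z qⁱ)`; on the
product side only the factor `i = n`, which vanishes at `z = 1`, is differentiated. -/
theorem sum_gauss_mul_cast (q : R) (n : ℕ) :
    ∑ k ∈ Finset.range (2 * n + 1 + 1),
      q ^ k.choose 2 * gauss q (2 * n + 1) k * (q ^ n) ^ (2 * n + 1 - k) * ((-1) ^ k * k) =
    -(q ^ n * (∏ i ∈ Finset.range n, (q ^ n - q ^ i)) *
      ∏ i ∈ Finset.range n, (q ^ n - q ^ (n + 1 + i))) := by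
  have h := prod_add_mul_pow (Polynomial.C q) (Polynomial.C q ^ n) (-Polynomial.X) (2 * n + 1)
  rw [show 2 * n + 1 = (n + 1) + n by ring, Finset.prod_range_add, Finset.prod_range_succ] at h
  have h0 : ∀ k ∈ Finset.range (n + 1 + n + 1),
      Polynomial.C q ^ k.choose 2 * gauss (Polynomial.C q) (n + 1 + n) k *
        (Polynomial.C q ^ n) ^ (n + 1 + n - k) * (-Polynomial.X) ^ k =
      Polynomial.C (q ^ k.choose 2 * gauss q (n + 1 + n) k * (q ^ n) ^ (n + 1 + n - k) * (-1) ^ k) *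
        Polynomial.X ^ k := by
    intro k _
    rw [neg_pow]
    simp only [map_mul, map_pow, map_gauss, map_neg, map_one, mul_assoc]
  rw [Finset.sum_congr rfl h0] at h
  have h' := congrArg (fun p => (derivative p).eval 1) h
  simp only [derivative_mul, eval_add, eval_mul, eval_prod, derivative_sum, eval_finsetSum,
    derivative_X_pow, ← Polynomial.C_pow, Polynomial.derivative_C, eval_C, Polynomial.derivative_X,
    eval_X, eval_pow, one_pow, zero_mul, zero_add, mul_one, mul_zero, add_zero, neg_mul, one_mul,
    ← sub_eq_add_neg, eval_sub, derivative_sub, zero_sub, mul_neg, sub_self] at h'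
  rw [show 2 * n + 1 = (n + 1) + n by ring]
  simp only [← mul_assoc]
  rw [← h']
  ring

theorem two_mul_choose_two (a : ℕ) : 2 * a.choose 2 + a = a * a := by
  induction a with
  | zero => rfl
  | succ a ih => rw [Nat.choose_succ_succ' a 1, Nat.choose_one_right]; linarith

theorem prod_pow_sub_pow (q : R) (n : ℕ) :
    ∏ i ∈ Finset.range n, (q ^ n - q ^ i) = (-1) ^ n * q ^ n.choose 2 * qPoch q n := by
  have h1 : ∏ i ∈ Finset.range n, q ^ (n - 1 - i) = q ^ n.choose 2 := by
    rw [Finset.prod_range_reflect (fun i => q ^ i), Finset.prod_pow_eq_pow_sum,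
      Finset.sum_range_id, Nat.choose_two_right]
  have h2 : (-1 : R) ^ n = ∏ i ∈ Finset.range n, (-1 : R) := by simp
  rw [← Finset.prod_range_reflect, ← h1, h2, qPoch, ← Finset.prod_mul_distrib,
    ← Finset.prod_mul_distrib]
  refine Finset.prod_congr rfl fun i hi => ?_
  have : n = (n - 1 - i) + (i + 1) := by have := Finset.mem_range.1 hi; omega
  nth_rewrite 1 [this]
  ring

theorem prod_pow_sub_pow' (q : R) (n : ℕ) :
    ∏ i ∈ Finset.range n, (q ^ n - q ^ (n + 1 + i)) = q ^ (n * n) * qPoch q n := by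
  have h2 : q ^ (n * n) = ∏ i ∈ Finset.range n, q ^ n := by simp [pow_mul]
  rw [h2, qPoch, ← Finset.prod_mul_distrib]
  refine Finset.prod_congr rfl fun i _ => ?_
  ring

theorem isUnit_qPoch (n : ℕ) : IsUnit (qPoch (X : R⟦X⟧) n) := by
  rw [isUnit_iff_constantCoeff]
  simp [qPoch, map_prod]

theorem gauss_symm (m k : ℕ) : gauss (X : R⟦X⟧) (k + m) k = gauss X (k + m) m := by
  have h1 := gauss_mul (X : R⟦X⟧) (k + m) k m rfl
  have h2 := gauss_mul (X : R⟦X⟧) (k + m) m k (add_comm _ _)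
  rw [mul_comm (qPoch _ m)] at h2
  exact ((isUnit_qPoch k).mul (isUnit_qPoch m)).mul_right_cancel (h1.trans h2.symm)

/-- A finite form of Jacobi's identity for `∏ (1 - Xⁱ)³`. -/
theorem qPoch_sq [IsDomain R] (n : ℕ) : qPoch (X : R⟦X⟧) n ^ 2 =
    ∑ j ∈ Finset.range (n + 1),
      (-1 : R⟦X⟧) ^ j * (2 * (j : R⟦X⟧) + 1) * X ^ (j + 1).choose 2 * gauss X (2 * n + 1) (n - j) := by
  have h := sum_gauss_mul_cast (X : R⟦X⟧) n
  rw [prod_pow_sub_pow, prod_pow_sub_pow', show 2 * n + 1 + 1 = (n + 1) + (n + 1) by ring,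
    Finset.sum_range_add, ← Finset.sum_range_reflect, ← Finset.sum_add_distrib] at h
  have hX : (-1) ^ (n + 1) * (X : R⟦X⟧) ^ (n + n.choose 2 + n * n) ≠ 0 :=
    mul_ne_zero (pow_ne_zero _ (by simp)) (pow_ne_zero _ X_ne_zero)
  apply mul_left_cancel₀ hX
  trans -(X ^ n * ((-1) ^ n * X ^ n.choose 2 * qPoch X n) * (X ^ (n * n) * qPoch (X : R⟦X⟧) n))
  · ring
  rw [← h, Finset.mul_sum]
  refine Finset.sum_congr rfl fun j hj => ?_
  -- The terms `k = n - j` and `k = n + 1 + j` carry the same power of `X` and opposite signs.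
  obtain ⟨m, rfl⟩ : ∃ m, n = j + m := ⟨n - j, by have := Finset.mem_range.1 hj; omega⟩
  have s : gauss (X : R⟦X⟧) (2 * (j + m) + 1) (j + m + 1 + j) = gauss X (2 * (j + m) + 1) m := by
    rw [show 2 * (j + m) + 1 = (j + m + 1 + j) + m by ring]
    exact gauss_symm _ _
  have a1 := two_mul_choose_two m
  have a2 := two_mul_choose_two (j + m)
  have a3 := two_mul_choose_two (j + 1)
  have a4 := two_mul_choose_two (j + m + 1 + j)
  have b1 : m.choose 2 + (j + m) * (2 * j + m + 1) =
      (j + m + (j + m).choose 2 + (j + m) * (j + m)) + (j + 1).choose 2 := by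
    linarith
  have b2 : (j + m + 1 + j).choose 2 + (j + m) * m =
      (j + m + (j + m).choose 2 + (j + m) * (j + m)) + (j + 1).choose 2 := by
    linarith
  rw [show j + m + 1 - 1 - j = m by omega, show j + m - j = m by omega, s,
    show 2 * (j + m) + 1 - m = 2 * j + m + 1 by omega,
    show 2 * (j + m) + 1 - (j + m + 1 + j) = m by omega, ← pow_mul, ← pow_mul]
  have c1 := congrArg (fun e => (X : R⟦X⟧) ^ e) b1
  have c2 := congrArg (fun e => (X : R⟦X⟧) ^ e) b2
  simp only [pow_add _ (Nat.choose m 2), pow_add _ (Nat.choose (j + m + 1 + j) 2),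
    pow_add _ _ (Nat.choose (j + 1) 2)] at c1 c2
  have d : ((-1 : R⟦X⟧)) ^ j * (-1) ^ j = 1 := by rw [← mul_pow]; simp
  push_cast
  linear_combination ((-1) ^ m * m * gauss X (2 * (j + m) + 1) m) * c1
    + ((-1) ^ (j + m + 1 + j) * (j + m + 1 + j) * gauss X (2 * (j + m) + 1) m) * c2
    - ((-1) ^ m * m * gauss X (2 * (j + m) + 1) m *
      (X ^ (j + m + (j + m).choose 2 + (j + m) * (j + m)) * X ^ (j + 1).choose 2)) * d

theorem X_pow_dvd_qPoch_sub (m t : ℕ) :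
    (X : R⟦X⟧) ^ (m + 1) ∣ qPoch X (m + t) - qPoch X m := by
  induction t with
  | zero => simp
  | succ t ih =>
    rw [← add_assoc, qPoch_succ, mul_one_sub, sub_right_comm]
    exact dvd_sub ih (Dvd.dvd.mul_left (pow_dvd_pow _ (by omega)) _)

/-- By the pentagonal number theorem, the finite products `(X; X)_n` converge to Euler's series. -/
theorem X_pow_dvd_pentagonalSeries_sub (n : ℕ) :
    (X : R⟦X⟧) ^ (n + 1) ∣ pentagonalSeries R - qPoch X n := by
  rw [X_pow_dvd_iff]
  intro m hm
  obtain ⟨N, hN, hn⟩ := ((Filter.tendsto_finset_range.eventually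
    (coeff_prod_one_sub_X_pow_eventually_eq R m)).and (Filter.eventually_ge_atTop n)).exists
  obtain ⟨t, rfl⟩ := Nat.exists_eq_add_of_le hn
  have := X_pow_dvd_iff.1 (X_pow_dvd_qPoch_sub (R := R) n t) m hm
  rw [map_sub] at this ⊢
  rw [← hN]
  exact this

/-- With `n = j + m`, the product `[2n + 1, n - j] (X; X)_n` is 1 up to terms of degree above
`n - j`. -/
theorem X_pow_dvd_gauss_mul_sub (m j : ℕ) :
    (X : R⟦X⟧) ^ (m + 1) ∣ gauss X (2 * (j + m) + 1) m * qPoch X (j + m) - 1 := by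
  have h1 := gauss_mul (X : R⟦X⟧) (2 * (j + m) + 1) m (2 * j + m + 1) (by ring)
  have h2 := X_pow_dvd_qPoch_sub (R := R) m j
  have h3 := X_pow_dvd_qPoch_sub (R := R) (2 * j + m + 1) m
  rw [show 2 * j + m + 1 + m = 2 * (j + m) + 1 by ring, ← h1] at h3
  have h4 := (pow_dvd_pow (X : R⟦X⟧) (show m + 1 ≤ 2 * j + m + 1 + 1 by omega)).trans h3
  rw [← (isUnit_qPoch (2 * j + m + 1)).dvd_mul_right]
  convert dvd_add h4 (h2.mul_left (gauss X (2 * (j + m) + 1) m * qPoch X (2 * j + m + 1))) using 1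
  rw [add_comm m j]
  ring

/-- **Jacobi's identity** `∏ (1 - Xⁱ)³ = ∑ (-1)ʲ (2j + 1) X^(j(j+1)/2)`, modulo `X ^ (n + 1)`. -/
theorem X_pow_dvd_jacobi [IsDomain R] (n : ℕ) :
    (X : R⟦X⟧) ^ (n + 1) ∣ pentagonalSeries R ^ 3 -
      ∑ j ∈ Finset.range (n + 1), (-1 : R⟦X⟧) ^ j * (2 * (j : R⟦X⟧) + 1) * X ^ (j + 1).choose 2 := by
  have h1 : (X : R⟦X⟧) ^ (n + 1) ∣ pentagonalSeries R ^ 3 - qPoch X n ^ 3 :=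
    (X_pow_dvd_pentagonalSeries_sub n).trans (sub_dvd_pow_sub_pow _ _ 3)
  rw [← sub_add_sub_cancel]
  refine dvd_add h1 ?_
  rw [pow_succ (qPoch _ _) 2, qPoch_sq, Finset.sum_mul, ← Finset.sum_sub_distrib]
  refine Finset.dvd_sum fun j hj => ?_
  obtain ⟨m, rfl⟩ : ∃ m, n = j + m := ⟨n - j, by have := Finset.mem_range.1 hj; omega⟩
  have h2 : (X : R⟦X⟧) ^ (j + m + 1) ∣ X ^ (j + 1).choose 2 *
      (gauss X (2 * (j + m) + 1) m * qPoch X (j + m) - 1) := by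
    rw [add_assoc, pow_add]
    refine mul_dvd_mul (pow_dvd_pow _ ?_) (X_pow_dvd_gauss_mul_sub m j)
    rw [Nat.choose_succ_succ' j 1, Nat.choose_one_right]
    omega
  rw [show j + m - j = m by omega]
  convert h2.mul_left ((-1 : R⟦X⟧) ^ j * (2 * (j : R⟦X⟧) + 1)) using 1
  ring

/-- Jacobi's identity, read off at a single coefficient. -/
theorem coeff_pentagonalSeries_cube [IsDomain R] (n : ℕ) :
    coeff n (pentagonalSeries R ^ 3) = ∑ j ∈ Finset.range (n + 1),
      if n = (j + 1).choose 2 then (-1 : R) ^ j * (2 * (j : R) + 1) else 0 := by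
  have h := X_pow_dvd_iff.1 (X_pow_dvd_jacobi (R := R) n) n (Nat.lt_succ_self n)
  rw [map_sub, sub_eq_zero] at h
  rw [h, map_sum]
  refine Finset.sum_congr rfl fun j _ => ?_
  rw [show (-1 : R⟦X⟧) ^ j * (2 * (j : R⟦X⟧) + 1) = C ((-1 : R) ^ j * (2 * (j : R) + 1)) by
    simp only [map_mul, map_pow, map_neg, map_one, map_add, map_natCast, map_ofNat], coeff_C_mul,
    coeff_X_pow]
  simp

end Jacobi

/-! ### Components by exponent residue modulo 11 -/

/-- The part of `f` supported on the exponents congruent to `r` modulo 11. -/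
noncomputable def comp (r : ZMod 11) (f : (ZMod 11)⟦X⟧) : (ZMod 11)⟦X⟧ :=
  .mk fun n => if (n : ZMod 11) = r then coeff n f else 0

theorem coeff_comp (r : ZMod 11) (f : (ZMod 11)⟦X⟧) (n : ℕ) :
    coeff n (comp r f) = if (n : ZMod 11) = r then coeff n f else 0 := by
  simp [comp]

theorem comp_mul_eq_sum (r : ZMod 11) (f g : (ZMod 11)⟦X⟧) :
    comp r (f * g) = ∑ s : ZMod 11, comp s f * comp (r - s) g := by
  ext n
  simp only [coeff_comp, map_sum, coeff_mul]
  rw [Finset.sum_comm]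
  have key : ∀ x ∈ Finset.HasAntidiagonal.antidiagonal n, ∑ s : ZMod 11,
      ((if (x.1 : ZMod 11) = s then coeff x.1 f else 0) *
        if (x.2 : ZMod 11) = r - s then coeff x.2 g else 0) =
      if (n : ZMod 11) = r then coeff x.1 f * coeff x.2 g else 0 := by
    intro x hx
    rw [Finset.HasAntidiagonal.mem_antidiagonal] at hx
    simp only [ite_mul, zero_mul, Finset.sum_ite_eq, Finset.mem_univ, if_true]
    simp only [← hx, Nat.cast_add, eq_sub_iff_add_eq, add_comm (x.2 : ZMod 11), mul_ite, mul_zero]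
  rw [Finset.sum_congr rfl key]
  split_ifs <;> simp

theorem comp_mul (r : ZMod 11) (f g : (ZMod 11)⟦X⟧) :
    comp r (f * g) = comp 0 f * comp (r - 0) g + comp 1 f * comp (r - 1) g + comp 2 f * comp (r - 2) g +
      comp 3 f * comp (r - 3) g + comp 4 f * comp (r - 4) g + comp 5 f * comp (r - 5) g +
      comp 6 f * comp (r - 6) g + comp 7 f * comp (r - 7) g + comp 8 f * comp (r - 8) g +
      comp 9 f * comp (r - 9) g + comp 10 f * comp (r - 10) g := by
  have h (F : Fin 11 → (ZMod 11)⟦X⟧) : ∑ s, F s =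
      F 0 + F 1 + F 2 + F 3 + F 4 + F 5 + F 6 + F 7 + F 8 + F 9 + F 10 := by
    rw [Fin.sum_univ_castSucc, Fin.sum_univ_castSucc, Fin.sum_univ_castSucc, Fin.sum_univ_eight]
    rfl
  rw [comp_mul_eq_sum]
  exact h (fun s : ZMod 11 => comp s f * comp (r - s) g)

/-- Eleventh powers only involve exponents divisible by 11, because their derivative vanishes. -/
theorem comp_pow_eleven (f : (ZMod 11)⟦X⟧) (r : ZMod 11) (hr : r ≠ 0) : comp r (f ^ 11) = 0 := by
  ext n
  rw [coeff_comp, map_zero]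
  split_ifs with h
  · obtain _ | n := n
    · exact absurd (by simpa using h.symm) hr
    have h1 : d⁄dX (ZMod 11) (f ^ 11) = 0 := by
      rw [Derivation.leibniz_pow, ← Nat.cast_smul_eq_nsmul (ZMod 11),
        show ((11 : ℕ) : ZMod 11) = 0 from rfl, zero_smul]
    have h2 := congrArg (coeff n) h1
    rw [coeff_derivative, ← Nat.cast_succ, h, map_zero] at h2
    have : Fact (Nat.Prime 11) := ⟨by norm_num⟩
    exact (mul_eq_zero.1 h2).resolve_right hr
  · rfl

theorem comp_mul_pow_eleven (f g : (ZMod 11)⟦X⟧) (r : ZMod 11) :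
    comp r (f * g ^ 11) = comp r f * comp 0 (g ^ 11) := by
  rw [comp_mul_eq_sum, Finset.sum_eq_single r]
  · rw [sub_self]
  · intro s _ hs
    rw [comp_pow_eleven _ _ (sub_ne_zero.2 hs.symm), mul_zero]
  · simp

/-- The generating function of partitions is the inverse of Euler's product `∏ (1 - Xⁱ)`. -/
theorem mk_partitionCount_mul :
    (PowerSeries.mk fun n => (partitionCount n : ZMod 11)) * pentagonalSeries (ZMod 11) = 1 := by
  let : TopologicalSpace (ZMod 11) := ⊥
  have : DiscreteTopology (ZMod 11) := ⟨rfl⟩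
  open scoped PowerSeries.WithPiTopology in
  have h1 := Nat.Partition.hasProd_powerSeriesMk_card_restricted (ZMod 11) (fun _ => True)
  have h2 := h1.mul (WithPiTopology.hasProd_one_sub_X_pow (ZMod 11))
  have h3 (i : ℕ) : (∑' j : ℕ, (X : (ZMod 11)⟦X⟧) ^ ((i + 1) * j)) * (1 - X ^ (i + 1)) = 1 := by
    simp only [pow_mul]
    exact WithPiTopology.tsum_pow_mul_one_sub_of_constantCoeff_eq_zero (by simp)
  simp only [if_true, h3] at h2
  simpa [Nat.Partition.restricted, partitionCount] using h2.unique hasProd_one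

/-- Pentagonal numbers only have the residues 0, 1, 2, 4, 5, 7 modulo 11. -/
theorem comp_pentagonalSeries (r : ZMod 11) (hr : r ∈ ({3, 6, 8, 9, 10} : Finset (ZMod 11))) :
    comp r (pentagonalSeries (ZMod 11)) = 0 := by
  have key : ∀ r ∈ ({3, 6, 8, 9, 10} : Finset (ZMod 11)), ∀ x : ZMod 11,
      2 * r = x * (3 * x - 1) → False := by
    decide
  ext n
  rw [coeff_comp, map_zero]
  split_ifs with h
  · apply coeff_pentagonalSeries_eq_zero
    rintro ⟨k, rfl⟩
    have h1 := congrArg (Int.cast : ℤ → ZMod 11) (two_mul_natCast_pentagonal k)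
    push_cast at h1
    rw [h] at h1
    exact key r hr k h1
  · rfl

/-- Triangular numbers `j(j+1)/2` only have the residues 0, 1, 3, 4, 6, 10 modulo 11, and 4 occurs
only for `j ≡ 5`, when the coefficient `2j + 1` in Jacobi's identity vanishes modulo 11. -/
theorem comp_pentagonalSeries_cube (r : ZMod 11)
    (hr : r ∈ ({2, 4, 5, 7, 8, 9} : Finset (ZMod 11))) :
    comp r (pentagonalSeries (ZMod 11) ^ 3) = 0 := by
  have key : ∀ r ∈ ({2, 4, 5, 7, 8, 9} : Finset (ZMod 11)), ∀ x : ZMod 11,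
      2 * r + (x + 1) = (x + 1) * (x + 1) → 2 * x + 1 = 0 := by
    decide
  have : Fact (Nat.Prime 11) := ⟨by norm_num⟩
  ext n
  rw [coeff_comp, map_zero]
  split_ifs with h
  · rw [coeff_pentagonalSeries_cube]
    refine Finset.sum_eq_zero fun j _ => ?_
    split_ifs with hj
    · have h1 := congrArg (Nat.cast : ℕ → ZMod 11) (two_mul_choose_two (j + 1))
      rw [← hj] at h1
      push_cast at h1
      rw [h] at h1
      rw [key r hr j h1, mul_zero]
    · rfl
  · rfl


/-- The algebraic core. Write `F = a + b + c + d + e` for the splitting of `F` by the exponent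
residues 0, 1, 3, 6, 10. The vanishing of five components of `F ^ 4` gives five quartic relations
between `a, …, e`, and modulo 11 the degree-7 form `comp 6 (F ^ 7)` lies in the ideal they
generate. -/
theorem comp_six_pow_seven (F : (ZMod 11)⟦X⟧)
    (hF : ∀ r ∈ ({2, 4, 5, 7, 8, 9} : Finset (ZMod 11)), comp r F = 0)
    (hF4 : ∀ r ∈ ({3, 6, 8, 9, 10} : Finset (ZMod 11)), comp r (F ^ 4) = 0) :
    comp 6 (F ^ 7) = 0 := by
  simp only [Finset.forall_mem_insert, Finset.mem_singleton, forall_eq] at hF hF4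
  obtain ⟨h2, h4, h5, h7, h8, h9⟩ := hF
  obtain ⟨R3, R6, R8, R9, R10⟩ := hF4
  rw [show F ^ 4 = F * F * (F * F) by ring] at R3 R6 R8 R9 R10
  rw [show F ^ 7 = F * F * (F * F) * (F * F * F) by ring]
  simp only [comp_mul] at R3 R6 R8 R9 R10 ⊢
  reduce_mod_char at R3 R6 R8 R9 R10 ⊢
  simp only [h2, h4, h5, h7, h8, h9, mul_zero, zero_mul, add_zero, zero_add] at R3 R6 R8 R9 R10 ⊢
  have h11 : (11 : (ZMod 11)⟦X⟧) = 0 := by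
    rw [← map_ofNat C 11, show (OfNat.ofNat 11 : ZMod 11) = 0 from rfl, map_zero]
  generalize comp 0 F = a at *
  generalize comp 1 F = b at *
  generalize comp 3 F = c at *
  generalize comp 6 F = d at *
  generalize comp 10 F = e at *
  -- The cubic cofactors come from linear algebra over `ZMod 11`; the multiple of `h11` collects the
  -- multiples of 11 left over when the coefficients are lifted to integers.
  linear_combination
    (-b*c*e - b^3 + 4*a^2*c) * R3 +
    (4*d^2*e - a*b*e - a^3) * R6 +
    (-c^3 + 4*a*e^2 - a*c*d) * R8 +
    (-e^3 - c*d*e + 4*b^2*d) * R9 +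
    (-d^3 + 4*b*c^2 - a*b*d) * R10 +
    (d^5*e^2 + c*d^6 + c^6*e + b*e^6 + 22*b*c*d*e^4 + 54*b*c^2*d^2*e^2 + 12*b*c^3*d^3 +
      b^2*c^5 + 12*b^3*d*e^3 + 30*b^3*c*d^2*e + b^5*d^2 + 12*a*c^3*e^3 + 22*a*c^4*d*e +
      30*a*b*d^3*e^2 + 22*a*b*c*d^4 + 54*a*b^2*c^2*e^2 + 30*a*b^2*c^3*d + 22*a*b^4*c*e +
      a*b^6 + a^2*e^5 + 30*a^2*c*d*e^3 + 54*a^2*c^2*d^2*e + 54*a^2*b^2*d*e^2 +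
      54*a^2*b^2*c*d^2 + 12*a^3*d^3*e + 30*a^3*b*c^2*e + 12*a^3*b^3*c + 22*a^4*b*d*e +
      a^5*c^2 + a^6*d) * h11

theorem ramanujan_mod_11 (n : ℕ) : partitionCount (11 * n + 6) ≡ 0 [MOD 11] := by
  have : Fact (Nat.Prime 11) := ⟨by norm_num⟩
  set E := pentagonalSeries (ZMod 11)
  set P : (ZMod 11)⟦X⟧ := PowerSeries.mk fun n => (partitionCount n : ZMod 11) with hP
  have hPE : P * E = 1 := mk_partitionCount_mul
  have h7 : comp 6 ((E ^ 3) ^ 7) = 0 := by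
    refine comp_six_pow_seven _ comp_pentagonalSeries_cube fun r hr => ?_
    rw [show (E ^ 3) ^ 4 = E * E ^ 11 by ring, comp_mul_pow_eleven, comp_pentagonalSeries r hr,
      zero_mul]
  have h21 : (E ^ 3) ^ 7 = P * (E ^ 2) ^ 11 := by linear_combination (-E ^ 21) * hPE
  rw [h21, comp_mul_pow_eleven] at h7
  have hne : comp 0 ((E ^ 2) ^ 11) ≠ 0 := by
    intro h0
    have h1 := congrArg (coeff 0) h0
    rw [coeff_comp, if_pos Nat.cast_zero] at h1
    have hE : constantCoeff E ≠ 0 := fun hE => by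
      simpa [hE] using congrArg constantCoeff hPE
    simp [hE] at h1
  have h6 := congrArg (coeff (11 * n + 6)) ((mul_eq_zero.1 h7).resolve_right hne)
  have h11 : ((11 : ℕ) : ZMod 11) = 0 := rfl
  rw [coeff_comp, if_pos (by rw [Nat.cast_add, Nat.cast_mul, h11, zero_mul, zero_add]; rfl),
    hP, coeff_mk, map_zero] at h6
  exact (Nat.modEq_zero_iff_dvd).2 ((ZMod.natCast_eq_zero_iff _ _).1 h6)
end

section
/- For every natural number n, the number of partitions of 25n + 24 is divisible by 25, i.e. p(25n + 24) ≡ 0 (mod 25). -/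
open PowerSeries PowerSeries.WithPiTopology Finset

namespace RamanujanMod25

/-- The generating function `∑ p(n) X ^ n` of the partition numbers. -/
noncomputable def partitionSeries : ℤ⟦X⟧ := PowerSeries.mk fun n ↦ (partitionCount n : ℤ)

lemma partitionSeries_mul_pentagonalSeries : partitionSeries * pentagonalSeries ℤ = 1 := by
  let _ : TopologicalSpace ℤ := ⊥
  have _ : DiscreteTopology ℤ := ⟨rfl⟩
  have h1 := Nat.Partition.hasProd_powerSeriesMk_card_restricted ℤ (fun _ ↦ True)
  have h2 := h1.mul (hasProd_one_sub_X_pow ℤ)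
  have h3 : (PowerSeries.mk fun n ↦ (#(Nat.Partition.restricted n (fun _ ↦ True)) : ℤ))
      = partitionSeries := by
    simp [partitionSeries, Nat.Partition.restricted, partitionCount]
  rw [h3] at h2
  refine h2.unique ?_
  convert! hasProd_one (α := ℤ⟦X⟧) (β := ℕ) using 2 with i
  simp only [if_true, pow_mul]
  exact tsum_pow_mul_one_sub_of_constantCoeff_eq_zero (by simp)

/-! ### Power series supported on a residue class -/

section Support
variable {R : Type*} [CommRing R]

/-- All exponents occurring in `f` are congruent to `r` modulo `M`. -/
def SuppMod (M : ℕ) (r : ZMod M) (f : R⟦X⟧) : Prop :=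
  ∀ n : ℕ, coeff n f ≠ 0 → (n : ZMod M) = r

lemma SuppMod.mul {M : ℕ} {r s t : ZMod M} {f g : R⟦X⟧} (hf : SuppMod M r f)
    (hg : SuppMod M s g) (ht : r + s = t) : SuppMod M t (f * g) := by
  intro n hn
  rw [coeff_mul] at hn
  obtain ⟨⟨i, j⟩, hij, h⟩ := exists_ne_zero_of_sum_ne_zero hn
  rw [HasAntidiagonal.mem_antidiagonal] at hij
  dsimp only at hij h
  rw [← ht, ← hf i (left_ne_zero_of_mul h), ← hg j (right_ne_zero_of_mul h), ← hij, Nat.cast_add]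

lemma SuppMod.one {M : ℕ} : SuppMod M 0 (1 : R⟦X⟧) := by
  intro n hn
  rw [coeff_one] at hn
  have : n = 0 := by by_contra h; simp [h] at hn
  simp [this]

lemma SuppMod.pow {M : ℕ} {r : ZMod M} {f : R⟦X⟧} (hf : SuppMod M r f) (k : ℕ) :
    SuppMod M (k * r) (f ^ k) := by
  induction k with
  | zero => simpa using SuppMod.one
  | succ k ih => rw [pow_succ]; exact ih.mul hf (by push_cast; ring)

/-- The sum of the terms of a power series whose exponents are congruent to `r` modulo `5`. -/
noncomputable def part (r : ZMod 5) : R⟦X⟧ →+ R⟦X⟧ where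
  toFun f := PowerSeries.mk fun n ↦ if (n : ZMod 5) = r then coeff n f else 0
  map_zero' := by ext; simp
  map_add' f g := by ext n; by_cases h : (n : ZMod 5) = r <;> simp [h]

lemma coeff_part (r : ZMod 5) (f : R⟦X⟧) (n : ℕ) :
    coeff n (part r f) = if (n : ZMod 5) = r then coeff n f else 0 := by
  simp [part]

lemma suppMod_part (r : ZMod 5) (f : R⟦X⟧) : SuppMod 5 r (part r f) := by
  intro n hn
  rw [coeff_part] at hn
  by_contra h
  simp [h] at hn

lemma part_of_suppMod {r s : ZMod 5} {f : R⟦X⟧} (hf : SuppMod 5 s f) :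
    part r f = if s = r then f else 0 := by
  ext n
  rw [coeff_part]
  by_cases h0 : coeff n f = 0
  · split_ifs <;> simp [h0]
  · rw [hf n h0]
    split_ifs <;> simp

/-- Multiplication by a power series in `X ^ 5` commutes with taking residue parts. -/
lemma part_mul {r : ZMod 5} (f : R⟦X⟧) {g : R⟦X⟧} (hg : SuppMod 5 0 g) :
    part r (f * g) = part r f * g := by
  ext n
  rw [coeff_part, coeff_mul, coeff_mul]
  by_cases hn : (n : ZMod 5) = r
  · rw [if_pos hn]
    refine sum_congr rfl fun ⟨i, j⟩ hij ↦ ?_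
    rw [HasAntidiagonal.mem_antidiagonal] at hij
    dsimp only at hij ⊢
    by_cases h0 : coeff j g = 0
    · simp [h0]
    · have hj := hg j h0
      have : (i : ZMod 5) = r := by
        rw [← hn, ← hij, Nat.cast_add, hj, add_zero]
      rw [coeff_part, if_pos this]
  · rw [if_neg hn]
    symm
    by_contra h
    rw [← coeff_mul] at h
    exact hn (((suppMod_part r f).mul hg (add_zero r)) n h)

end Support

/-! ### The sign-reversing reflection on pairs of pentagonal numbers -/

section Reflection

/-- The sign `(-1) ^ k` as an integer. -/
def sgn (k : ℤ) : ℤ := (Int.negOnePow k : ℤ)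

lemma abs_le_pentagonal (k : ℤ) : |k| ≤ (pentagonal k : ℤ) := by
  have h := two_mul_natCast_pentagonal k
  rcases le_or_gt k 0 with hk | hk
  · rw [abs_of_nonpos hk]; nlinarith
  · rw [abs_of_pos hk]; nlinarith

/-- The pairs `(k, l)` of integers whose pentagonal numbers add up to `m`. The bound `|k|, |l| ≤ m`,
which makes the set finite by construction, is automatic: see `mem_pairs`. -/
noncomputable def pairs (m : ℕ) : Finset (ℤ × ℤ) :=
  (Icc (-m : ℤ) m ×ˢ Icc (-m : ℤ) m).filter fun x ↦ pentagonal x.1 + pentagonal x.2 = m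

lemma mem_pairs {m : ℕ} {x : ℤ × ℤ} :
    x ∈ pairs m ↔ pentagonal x.1 + pentagonal x.2 = m := by
  simp only [pairs, mem_filter, mem_product, mem_Icc, and_iff_right_iff_imp]
  intro h
  have h1 := abs_le.1 (abs_le_pentagonal x.1)
  have h2 := abs_le.1 (abs_le_pentagonal x.2)
  omega

/-- Coefficients of a product of two series obtained from the pentagonal series by weighting its
terms according to their exponents. -/
lemma coeff_mul_eq_sum_pairs (v w : ℕ → ℤ) (m : ℕ) :
    coeff m (PowerSeries.mk (fun n ↦ v n * coeff n (pentagonalSeries ℤ)) *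
      PowerSeries.mk (fun n ↦ w n * coeff n (pentagonalSeries ℤ))) =
    ∑ x ∈ pairs m, v (pentagonal x.1) * w (pentagonal x.2) * (sgn x.1 * sgn x.2) := by
  rw [coeff_mul]
  symm
  refine sum_of_injOn (fun x ↦ (pentagonal x.1, pentagonal x.2)) ?_ ?_ ?_ ?_
  · rintro ⟨a, b⟩ _ ⟨c, d⟩ _ h
    simpa using h
  · intro x hx
    simpa using mem_pairs.1 hx
  · rintro ⟨i, j⟩ hij hn
    rw [HasAntidiagonal.mem_antidiagonal] at hij
    dsimp only at hij
    simp only [coeff_mk]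
    by_cases hi : i ∈ Set.range pentagonal
    · by_cases hj : j ∈ Set.range pentagonal
      · obtain ⟨k, rfl⟩ := hi
        obtain ⟨l, rfl⟩ := hj
        exact absurd ⟨(k, l), mem_coe.2 (mem_pairs.2 hij), rfl⟩ hn
      · simp [coeff_pentagonalSeries_eq_zero ℤ hj]
    · simp [coeff_pentagonalSeries_eq_zero ℤ hi]
  · intro x _
    simp only [coeff_mk, coeff_pentagonalSeries_pentagonal, sgn, Int.cast_id]
    ring

/-- In terms of `x = 6k - 1`, `y = 6l - 1`, the condition on `(k, l)` says `5 ∣ 2x + y`, i.e. `2 + i`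
divides `x + i y`. The involution is `(x, y) ↦ ((-3x - 4y) / 5, (-4x + 3y) / 5)`, a reflection,
which preserves `x ^ 2 + y ^ 2` and changes the parity of `k + l`. -/
lemma sum_reflection (m : ℕ) :
    ∑ x ∈ (pairs m).filter (fun x ↦ (2 * x.1 + x.2) % 5 = 3), sgn x.1 * sgn x.2 = 0 := by
  have key (x : ℤ × ℤ) (hx : (2 * x.1 + x.2) % 5 = 3) : ∃ j, x.2 = 3 - 2 * x.1 + 5 * j ∧
      (-3 * x.1 - 4 * x.2 + 2) / 5 = x.1 - 2 - 4 * j ∧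
      (-4 * x.1 + 3 * x.2 + 1) / 5 = -2 * x.1 + 2 + 3 * j :=
    ⟨(2 * x.1 + x.2) / 5, by omega, by omega, by omega⟩
  have hs (x : ℤ × ℤ) (hx : (2 * x.1 + x.2) % 5 = 3) :
      sgn x.1 * sgn x.2 + sgn ((-3 * x.1 - 4 * x.2 + 2) / 5) *
        sgn ((-4 * x.1 + 3 * x.2 + 1) / 5) = 0 := by
    obtain ⟨j, h1, h2, h3⟩ := key x hx
    rw [h2, h3, h1]
    simp only [sgn, ← Units.val_mul, ← Int.negOnePow_add]
    have : x.1 - 2 - 4 * j + (-2 * x.1 + 2 + 3 * j) =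
      (x.1 + (3 - 2 * x.1 + 5 * j)) + 1 + 2 * (-2 - 3 * j) := by ring
    rw [this, Int.negOnePow_add _ (2 * _), Int.negOnePow_two_mul, Int.negOnePow_succ]
    simp
  refine sum_involution (fun x _ ↦ ((-3 * x.1 - 4 * x.2 + 2) / 5, (-4 * x.1 + 3 * x.2 + 1) / 5))
    ?_ ?_ ?_ ?_
  · intro x hx
    exact hs x (mem_filter.1 hx).2
  · intro x hx h0 he
    have := hs x (mem_filter.1 hx).2
    have h1 := congrArg Prod.fst he
    have h2 := congrArg Prod.snd he
    dsimp only at h1 h2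
    rw [h1, h2] at this
    omega
  · intro x hx
    rw [mem_filter, mem_pairs] at hx ⊢
    obtain ⟨hx, hm⟩ := hx
    obtain ⟨j, h1, h2, h3⟩ := key x hm
    dsimp only
    rw [h2, h3]
    refine ⟨?_, by omega⟩
    zify at hx ⊢
    have e1 := two_mul_natCast_pentagonal x.1
    have e2 := two_mul_natCast_pentagonal x.2
    have e3 := two_mul_natCast_pentagonal (x.1 - 2 - 4 * j)
    have e4 := two_mul_natCast_pentagonal (-2 * x.1 + 2 + 3 * j)
    rw [h1] at e2 hx
    refine mul_left_cancel₀ (two_ne_zero' ℤ) ?_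
    linear_combination 2 * hx + e3 + e4 - e1 - e2
  · intro x hx
    obtain ⟨j, h1, h2, h3⟩ := key x (mem_filter.1 hx).2
    ext <;> dsimp only <;> omega

end Reflection

/-! ### The 5-dissection of the pentagonal series -/

/-- The terms of `∏ (1 - X ^ i)` with exponents congruent to `r` modulo `5`. -/
noncomputable def eulerPart (r : ZMod 5) : ℤ⟦X⟧ := part r (pentagonalSeries ℤ)

lemma cast_pentagonal (k : ℤ) :
    ((pentagonal k : ℕ) : ZMod 5) = 3 * (k * (3 * k - 1)) := by
  have h := congrArg (Int.cast : ℤ → ZMod 5) (two_mul_natCast_pentagonal k)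
  push_cast at h
  rw [← h, ← mul_assoc, show (3 * 2 : ZMod 5) = 1 from rfl, one_mul]

lemma eulerPart_eq (r : ZMod 5) : eulerPart r = PowerSeries.mk fun n ↦
    (if (n : ZMod 5) = r then 1 else 0) * coeff n (pentagonalSeries ℤ) := by
  ext n
  simp [eulerPart, coeff_part]

/-- For residues `k`, `l` modulo `5`, the weight with which the pair `(k, l)` enters
`2 * (a * c + b ^ 2)` is the number of the conditions `2k + l = 3`, `2l + k = 3` that it satisfies.
Here `3 * (k * (3k - 1))` is the residue of the pentagonal number, as `3 = 1 / 2` modulo `5`. -/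
lemma indicator_identity : ∀ k l : ZMod 5,
    ((if 3 * (k * (3 * k - 1)) = 0 then 1 else 0) * (if 3 * (l * (3 * l - 1)) = 2 then 1 else 0) +
    (if 3 * (k * (3 * k - 1)) = 2 then 1 else 0) * (if 3 * (l * (3 * l - 1)) = 0 then 1 else 0) +
    2 * ((if 3 * (k * (3 * k - 1)) = 1 then 1 else 0) *
      (if 3 * (l * (3 * l - 1)) = 1 then 1 else 0)) : ℤ) =
    (if 2 * k + l = 3 then 1 else 0) + (if 2 * l + k = 3 then 1 else 0) := by
  decide

lemma emod_iff (k l : ℤ) : (2 * k + l) % 5 = 3 ↔ (2 * k + l : ZMod 5) = 3 := by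
  have := ZMod.intCast_eq_intCast_iff (2 * k + l) 3 5
  push_cast at this
  rw [this]
  rfl

lemma eulerPart_zero_mul_two : eulerPart 0 * eulerPart 2 + eulerPart 1 ^ 2 = 0 := by
  have h2 : eulerPart 0 * eulerPart 2 + eulerPart 2 * eulerPart 0 +
      (eulerPart 1 * eulerPart 1 + eulerPart 1 * eulerPart 1) = 0 := by
    ext m
    simp only [map_add, eulerPart_eq, coeff_mul_eq_sum_pairs, ← sum_add_distrib, map_zero]
    have hr := sum_reflection m
    have hr' : ∑ x ∈ (pairs m).filter (fun x ↦ (2 * x.2 + x.1) % 5 = 3), sgn x.1 * sgn x.2 = 0 := by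
      rw [← hr]
      refine sum_nbij' Prod.swap Prod.swap ?_ ?_ ?_ ?_ ?_ <;> intro x hx <;>
        simp_all [mem_pairs, add_comm, mul_comm]
    have := congrArg₂ (· + ·) hr hr'
    simp only [sum_filter, ← sum_add_distrib, add_zero] at this
    refine Eq.trans ?_ this
    refine sum_congr rfl fun x _ ↦ ?_
    have hi := indicator_identity x.1 x.2
    simp only [emod_iff, cast_pentagonal]
    rw [← mul_boole (2 * (x.1 : ZMod 5) + x.2 = 3), ← mul_boole (2 * (x.2 : ZMod 5) + x.1 = 3)]
    linear_combination (sgn x.1 * sgn x.2) * hi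
  have h3 : (2 : ℤ⟦X⟧) * (eulerPart 0 * eulerPart 2 + eulerPart 1 ^ 2) = 0 := by
    linear_combination h2
  have h20 : (2 : ℤ⟦X⟧) ≠ 0 := by
    intro h
    have := congrArg (coeff 0) h
    rw [coeff_zero_eq_constantCoeff, map_ofNat, map_zero] at this
    norm_num at this
  exact (mul_eq_zero.1 h3).resolve_left h20

lemma pentagonalSeries_eq_add :
    pentagonalSeries ℤ = eulerPart 0 + eulerPart 1 + eulerPart 2 := by
  ext n
  simp only [map_add, eulerPart, coeff_part]
  by_cases hn : n ∈ Set.range pentagonal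
  · obtain ⟨k, rfl⟩ := hn
    have h : ∀ k : ZMod 5, 3 * (k * (3 * k - 1)) = 0 ∨ 3 * (k * (3 * k - 1)) = 1 ∨
      3 * (k * (3 * k - 1)) = 2 := by decide
    rw [cast_pentagonal]
    rcases h k with h | h | h <;> rw [h] <;>
      simp [show (0 : ZMod 5) ≠ 1 by decide, show (1 : ZMod 5) ≠ 0 by decide,
      show (2 : ZMod 5) ≠ 0 by decide, show (2 : ZMod 5) ≠ 1 by decide,
      show (1 : ZMod 5) ≠ 2 by decide, show (0 : ZMod 5) ≠ 2 by decide]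
  · simp [coeff_pentagonalSeries_eq_zero ℤ hn]

/-- A pentagonal number congruent to `1` modulo `5` has index `k = 1 + 5j`, hence is congruent to `1`
modulo `25`. -/
lemma suppMod_eulerPart_one : SuppMod 25 1 (eulerPart 1) := by
  intro n hn
  rw [eulerPart, coeff_part] at hn
  split_ifs at hn with h1
  · by_cases hp : n ∈ Set.range pentagonal
    · obtain ⟨k, rfl⟩ := hp
      rw [cast_pentagonal] at h1
      have hk : (k : ZMod 5) = (1 : ℤ) := by
        have : ∀ k : ZMod 5, 3 * (k * (3 * k - 1)) = 1 → k = 1 := by decide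
        simpa using this k h1
      obtain ⟨j, hj⟩ := ((ZMod.intCast_eq_intCast_iff _ _ 5).1 hk).symm.dvd
      obtain rfl : k = 1 + 5 * j := by push_cast at hj; linarith
      have h := congrArg (Int.cast : ℤ → ZMod 25) (two_mul_natCast_pentagonal (1 + 5 * j))
      push_cast at h
      -- `13` is the inverse of `2` modulo `25`.
      have hd : ∀ j : ZMod 25, 13 * ((1 + 5 * j) * (3 * (1 + 5 * j) - 1)) = 1 := by decide
      rw [← hd j, ← h, ← mul_assoc, show (13 * 2 : ZMod 25) = 1 from rfl, one_mul]
    · exact absurd (coeff_pentagonalSeries_eq_zero ℤ hp) hn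
  · exact absurd rfl hn

/-! ### The generating function of `p(5n + 4)` -/

lemma part_monomial (i j k : ℕ) : part 4 (eulerPart 0 ^ i * eulerPart 1 ^ j * eulerPart 2 ^ k) =
    if (j + 2 * k : ZMod 5) = 4 then eulerPart 0 ^ i * eulerPart 1 ^ j * eulerPart 2 ^ k else 0 := by
  refine part_of_suppMod (SuppMod.mul (SuppMod.mul ((suppMod_part 0 _).pow i)
    ((suppMod_part 1 _).pow j) rfl) ((suppMod_part 2 _).pow k) ?_)
  ring

/-- The terms of `P` with exponents `4` modulo `5`, times `F = a ^ 5 + 11 b ^ 5 + c ^ 5`, give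
`5 b ^ 4`. -/
lemma partFour_mul :
    part 4 partitionSeries * (eulerPart 0 ^ 5 + 11 * eulerPart 1 ^ 5 + eulerPart 2 ^ 5) =
      5 * eulerPart 1 ^ 4 := by
  have hF : SuppMod 5 0 (eulerPart 0 ^ 5 + 11 * eulerPart 1 ^ 5 + eulerPart 2 ^ 5) := by
    intro n hn
    by_contra h
    have h5 (r : ZMod 5) : coeff n (eulerPart r ^ 5) = 0 := by
      by_contra h'
      have := (suppMod_part r (pentagonalSeries ℤ)).pow 5 n h'
      rw [show ((5 : ℕ) : ZMod 5) = 0 from rfl, zero_mul] at this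
      exact h this
    apply hn
    rw [show (11 : ℤ⟦X⟧) = C 11 from (map_ofNat C 11).symm, map_add, map_add, coeff_C_mul]
    simp [h5]
  rw [← part_mul _ hF]
  have h1 := partitionSeries_mul_pentagonalSeries
  rw [pentagonalSeries_eq_add] at h1
  have h2 := eulerPart_zero_mul_two
  -- The right-hand side is the quotient of `F` by `a + b + c` modulo the relation `a c = -b ^ 2`.
  have hG : partitionSeries * (eulerPart 0 ^ 5 + 11 * eulerPart 1 ^ 5 + eulerPart 2 ^ 5) =
      eulerPart 0 ^ 4 * eulerPart 1 ^ 0 * eulerPart 2 ^ 0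
      - eulerPart 0 ^ 3 * eulerPart 1 ^ 1 * eulerPart 2 ^ 0
      + 2 • (eulerPart 0 ^ 2 * eulerPart 1 ^ 2 * eulerPart 2 ^ 0)
      - 3 • (eulerPart 0 ^ 1 * eulerPart 1 ^ 3 * eulerPart 2 ^ 0)
      + 5 • (eulerPart 0 ^ 0 * eulerPart 1 ^ 4 * eulerPart 2 ^ 0)
      - 3 • (eulerPart 0 ^ 0 * eulerPart 1 ^ 3 * eulerPart 2 ^ 1)
      + 2 • (eulerPart 0 ^ 0 * eulerPart 1 ^ 2 * eulerPart 2 ^ 2)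
      - eulerPart 0 ^ 0 * eulerPart 1 ^ 1 * eulerPart 2 ^ 3
      + eulerPart 0 ^ 0 * eulerPart 1 ^ 0 * eulerPart 2 ^ 4 := by
    generalize partitionSeries = P at *
    generalize eulerPart 0 = a at *
    generalize eulerPart 1 = b at *
    generalize eulerPart 2 = c at *
    simp only [nsmul_eq_mul]
    push_cast
    linear_combination P * (6 * b ^ 3 - 2 * b ^ 2 * c + b * c ^ 2 - c ^ 3 - a ^ 3 + a ^ 2 * b
        - 2 * a * b ^ 2) * h2 +
      (a ^ 4 - a ^ 3 * b + 2 * a ^ 2 * b ^ 2 - 3 * a * b ^ 3 + 5 * b ^ 4 - 3 * b ^ 3 * c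
        + 2 * b ^ 2 * c ^ 2 - b * c ^ 3 + c ^ 4) * h1
  -- The exponent of `a ^ i * b ^ j * c ^ k` is `j + 2k` modulo `5`; it is `4` only for `b ^ 4`.
  rw [hG]
  simp only [map_add, map_sub, map_nsmul, part_monomial]
  rw [if_neg (by decide), if_neg (by decide), if_neg (by decide), if_neg (by decide),
    if_pos (by decide), if_neg (by decide), if_neg (by decide), if_neg (by decide),
    if_neg (by decide)]
  simp

/-! ### Reduction modulo 5 -/

lemma pow_five_eq_expand (f : (ZMod 5)⟦X⟧) : f ^ 5 = expand 5 (by norm_num) f := by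
  have : Fact (Nat.Prime 5) := ⟨by norm_num⟩
  have h := MvPowerSeries.map_frobenius_expand (σ := Unit) (R := ZMod 5) 5 (by norm_num) (f := f)
  rw [ZMod.frobenius_zmod] at h
  rw [← h]
  simp
  rfl

/-- `∑ p(5n + 4) X ^ (5n + 4)` is `5 * Q`, where `Q` is congruent to `P ^ 5 * b ^ 4` modulo `5`. -/
lemma exists_partFour_eq : ∃ Q K : ℤ⟦X⟧, part 4 partitionSeries = 5 * Q ∧
    Q = partitionSeries ^ 5 * eulerPart 1 ^ 4 + 5 * K := by
  have h1 := partitionSeries_mul_pentagonalSeries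
  rw [pentagonalSeries_eq_add] at h1
  have h2 := partFour_mul
  generalize part 4 partitionSeries = S at *
  generalize partitionSeries = P at *
  generalize eulerPart 0 = a at *
  generalize eulerPart 1 = b at *
  generalize eulerPart 2 = c at *
  -- From `(a + b + c) ^ 5 - a ^ 5 - b ^ 5 - c ^ 5 = 5 (a + b) (b + c) (c + a) (a ^ 2 + ⋯ + c a)`.
  obtain ⟨K, hK⟩ : ∃ K, a ^ 5 + 11 * b ^ 5 + c ^ 5 = (a + b + c) ^ 5 + 5 * K :=
    ⟨2 * b ^ 5 - (a + b) * (b + c) * (c + a) * (a ^ 2 + b ^ 2 + c ^ 2 + a * b + b * c + c * a),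
      by ring⟩
  have h3 : P ^ 5 * (a + b + c) ^ 5 = 1 := by rw [← mul_pow, h1, one_pow]
  have h4 : S = 5 * (P ^ 5 * (b ^ 4 - K * S)) := by
    rw [hK] at h2
    linear_combination P ^ 5 * h2 - S * h3
  refine ⟨P ^ 5 * (b ^ 4 - K * S), -P ^ 5 * K * (P ^ 5 * (b ^ 4 - K * S)), h4, ?_⟩
  linear_combination -P ^ 5 * K * h4

end RamanujanMod25

open RamanujanMod25 in
theorem ramanujan_mod_25 (n : ℕ) : partitionCount (25 * n + 24) ≡ 0 [MOD 25] := by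
  obtain ⟨Q, K, hS, hQ⟩ := exists_partFour_eq
  have hcoeff (m : ℕ) (hm : (m : ZMod 5) = 4) : (partitionCount m : ℤ) = 5 * coeff m Q := by
    have := congrArg (coeff m) hS
    rw [coeff_part, if_pos hm, show (5 : ℤ⟦X⟧) = C 5 from (map_ofNat C 5).symm, coeff_C_mul] at this
    simpa [partitionSeries] using this
  have hQ5 : PowerSeries.map (Int.castRingHom (ZMod 5)) Q =
      PowerSeries.map (Int.castRingHom (ZMod 5)) (eulerPart 1 ^ 4) *
        expand 5 (by norm_num) (PowerSeries.map (Int.castRingHom (ZMod 5)) partitionSeries) := by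
    have h5 : (5 : (ZMod 5)⟦X⟧) = 0 := by
      rw [← map_ofNat (C (R := ZMod 5)) 5, show (OfNat.ofNat 5 : ZMod 5) = 0 from rfl, map_zero]
    rw [← pow_five_eq_expand, hQ, map_add, map_mul, map_mul, map_pow, map_ofNat, h5]
    ring
  have hzero : coeff (25 * n + 24) (PowerSeries.map (Int.castRingHom (ZMod 5)) Q) = 0 := by
    rw [hQ5, coeff_mul]
    refine sum_eq_zero fun ⟨i, j⟩ hij ↦ ?_
    rw [HasAntidiagonal.mem_antidiagonal] at hij
    dsimp only at hij ⊢
    by_cases hi : coeff i (eulerPart 1 ^ 4) = 0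
    · rw [coeff_map, hi, map_zero, zero_mul]
    have hi25 : i % 25 = 4 := by
      have := suppMod_eulerPart_one.pow 4 i hi
      rw [mul_one] at this
      exact (ZMod.natCast_eq_natCast_iff' _ _ _).1 this
    obtain ⟨t, rfl⟩ : ∃ t, j = 5 * t := ⟨j / 5, by omega⟩
    have ht : (t : ZMod 5) = 4 := (ZMod.natCast_eq_natCast_iff' t 4 5).2 (by omega)
    rw [coeff_expand_mul, coeff_map, coeff_map, partitionSeries, coeff_mk, hcoeff t ht, map_mul,
      show Int.castRingHom (ZMod 5) 5 = 0 from rfl, zero_mul, mul_zero]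
  rw [coeff_map] at hzero
  obtain ⟨d, hd⟩ := (ZMod.intCast_zmod_eq_zero_iff_dvd _ 5).1 hzero
  have h := hcoeff (25 * n + 24) ((ZMod.natCast_eq_natCast_iff' _ 4 5).2 (by omega))
  rw [Nat.modEq_zero_iff_dvd]
  zify
  exact ⟨d, by rw [h, hd]; push_cast; ring⟩
end

section
/- Let l be one of the primes 5, 7, 11 and set θ_l = (l² − 1)/24 (so θ_5 = 1, θ_7 = 2, θ_11 = 5). Then for every positive integer n, p(l·n − θ_l) ≡ 0 (mod l). -/
namespace RamanujanCongruences

open PowerSeries Finset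

/-! ### Gaussian binomial coefficients -/

/-- The Gaussian (`q`-)binomial coefficient, by the `q`-Pascal rule
`[n + 1, k + 1] = [n, k] + q ^ (k + 1) [n, k + 1]`. -/
def gauss {A : Type*} [CommRing A] (q : A) : ℕ → ℕ → A
  | _, 0 => 1
  | 0, _ + 1 => 0
  | n + 1, k + 1 => gauss q n k + q ^ (k + 1) * gauss q n (k + 1)

section Gauss
variable {A : Type*} [CommRing A]

@[simp] lemma gauss_zero_right (q : A) (n : ℕ) : gauss q n 0 = 1 := by cases n <;> rfl

lemma gauss_succ (q : A) (n k : ℕ) :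
    gauss q (n + 1) (k + 1) = gauss q n k + q ^ (k + 1) * gauss q n (k + 1) := rfl

lemma gauss_of_lt (q : A) {n k : ℕ} (h : n < k) : gauss q n k = 0 := by
  induction n generalizing k with
  | zero => obtain ⟨k, rfl⟩ := Nat.exists_eq_add_of_lt h; simp [gauss]
  | succ n ih =>
    obtain ⟨k, rfl⟩ : ∃ j, k = j + 1 := ⟨k - 1, by omega⟩
    rw [gauss_succ, ih (by omega), ih (by omega)]; simp

lemma gauss_self (q : A) (n : ℕ) : gauss q n n = 1 := by
  induction n with
  | zero => simp
  | succ n ih => rw [gauss_succ, ih, gauss_of_lt q (Nat.lt_succ_self n)]; simp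

lemma map_gauss {B : Type*} [CommRing B] (f : A →+* B) (q : A) (n k : ℕ) :
    f (gauss q n k) = gauss (f q) n k := by
  induction n generalizing k with
  | zero => cases k <;> simp [gauss]
  | succ n ih => cases k <;> simp [gauss_succ, ih]

/-- The `q`-binomial theorem, in homogeneous form so that no inverse of `q` is needed later. -/
lemma prod_add_mul_pow (q y z : A) (n : ℕ) :
    ∏ i ∈ range n, (y + z * q ^ i) =
      ∑ k ∈ range (n + 1), q ^ (k.choose 2) * gauss q n k * z ^ k * y ^ (n - k) := by
  induction n generalizing z with
  | zero => simp
  | succ n ih =>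
    have h1 : ∏ i ∈ range n, (y + z * q ^ (i + 1)) = ∏ i ∈ range n, (y + (z * q) * q ^ i) :=
      prod_congr rfl fun i _ => by ring
    have hy : y * ∑ k ∈ range (n + 1),
          q ^ (k.choose 2) * gauss q n k * (z * q) ^ k * y ^ (n - k) =
        ∑ k ∈ range (n + 2), q ^ (k.choose 2) * gauss q n k * (z * q) ^ k * y ^ (n + 1 - k) := by
      rw [sum_range_succ _ (n + 1), gauss_of_lt q (Nat.lt_succ_self n), mul_sum]
      simp only [mul_zero, zero_mul, add_zero]
      refine sum_congr rfl fun k hk => ?_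
      rw [mem_range] at hk
      rw [Nat.sub_add_comm (by omega), pow_succ]
      ring
    rw [prod_range_succ', h1, ih, pow_zero, mul_one, mul_comm, add_mul, hy, sum_range_succ',
      sum_range_succ' _ (n + 1), mul_sum, add_right_comm, ← sum_add_distrib]
    congr 1
    · refine sum_congr rfl fun k _ => ?_
      rw [gauss_succ, Nat.succ_sub_succ, Nat.choose_succ_succ' k 1, Nat.choose_one_right]
      ring
    · simp

end Gauss

/-! ### The Euler product, its cube and its inverse -/

section Jacobi
variable (R : Type*) [CommRing R]

/-- The finite Euler product `(q; q)ₙ = (1 - X)(1 - X ^ 2) ⋯ (1 - X ^ n)`. -/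
noncomputable def qp (n : ℕ) : R⟦X⟧ := ∏ i ∈ range n, (1 - X ^ (i + 1))

lemma qp_succ (n : ℕ) : qp R (n + 1) = qp R n * (1 - X ^ (n + 1)) := prod_range_succ _ _

/-- `[a + b, a] = (q; q)_{a + b} / ((q; q)_a (q; q)_b)`, with denominators cleared. -/
lemma qp_mul_qp_mul_gauss (a b : ℕ) :
    qp R a * qp R b * gauss (X : R⟦X⟧) (a + b) a = qp R (a + b) := by
  suffices ∀ n a b, a + b = n → qp R a * qp R b * gauss (X : R⟦X⟧) n a = qp R n from
    this _ a b rfl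
  intro n
  induction n with
  | zero =>
    intro a b h
    obtain ⟨rfl, rfl⟩ : a = 0 ∧ b = 0 := by omega
    simp [qp]
  | succ n ih =>
    rintro (_ | a) b h
    · obtain rfl : b = n + 1 := by omega
      simp [qp]
    rcases b with _ | b
    · obtain rfl : a = n := by omega
      rw [gauss_self]; simp [qp]
    · have h1 := ih a (b + 1) (by omega)
      have h2 := ih (a + 1) b (by omega)
      obtain rfl : n = a + b + 1 := by omega
      rw [gauss_succ, qp_succ R (a + b + 1)]
      calc _ = (1 - X ^ (a + 1)) * (qp R a * qp R (b + 1) * gauss X (a + b + 1) a) +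
            X ^ (a + 1) * (1 - X ^ (b + 1)) *
              (qp R (a + 1) * qp R b * gauss X (a + b + 1) (a + 1)) := by
            rw [qp_succ R a, qp_succ R b]; ring
        _ = _ := by rw [h1, h2]; ring

lemma isUnit_qp (n : ℕ) : IsUnit (qp R n) := by
  rw [PowerSeries.isUnit_iff_constantCoeff]
  simp [qp, map_prod]

lemma gauss_symm (a b : ℕ) : gauss (X : R⟦X⟧) (a + b) a = gauss X (a + b) b := by
  have h1 := qp_mul_qp_mul_gauss R a b
  have h2 := qp_mul_qp_mul_gauss R b a
  rw [add_comm b a, ← h1, mul_comm (qp R b)] at h2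
  exact (((isUnit_qp R a).mul (isUnit_qp R b)).mul_left_cancel h2).symm

lemma choose_two_eq (n : ℕ) : (n.choose 2 : ℤ) * 2 = n * (n - 1) := by
  induction n with
  | zero => simp
  | succ n ih => rw [Nat.choose_succ_succ' n 1, Nat.choose_one_right]; push_cast; linarith

/-- Finite form of Jacobi's identity for the cube of the Euler product. The `q`-binomial theorem for
`∏ i ≤ 2 * m, (X ^ m - z * X ^ i)` is differentiated at `z = 1`: on the left only the factor
`i = m` vanishes there, and on the right the terms of index `m - j` and `m + 1 + j` combine. -/
theorem qp_sq (m : ℕ) : qp R m ^ 2 =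
    ∑ j ∈ range (m + 1), (-1) ^ j * (2 * (j : R⟦X⟧) + 1) * X ^ ((j + 1).choose 2) *
      gauss (X : R⟦X⟧) (2 * m + 1) (m - j) := by
  have key := prod_add_mul_pow (Polynomial.C (X : R⟦X⟧)) (Polynomial.C (X ^ m)) (-Polynomial.X)
    (2 * m + 1)
  have hL : ∏ i ∈ range (2 * m + 1),
      (Polynomial.C (X ^ m : R⟦X⟧) + -Polynomial.X * Polynomial.C (X : R⟦X⟧) ^ i) =
      (∏ i ∈ range m, (Polynomial.C (X ^ m : R⟦X⟧) + -Polynomial.X * Polynomial.C X ^ i)) *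
      (∏ i ∈ range m,
        (Polynomial.C (X ^ m : R⟦X⟧) + -Polynomial.X * Polynomial.C X ^ (m + 1 + i))) *
      (Polynomial.C (X ^ m) * (1 - Polynomial.X)) := by
    rw [show 2 * m + 1 = m + 1 + m by ring, prod_range_add, prod_range_succ, map_pow]
    ring
  have e1 : ∏ i ∈ range m, ((X : R⟦X⟧) ^ m - X ^ i) =
      (-1) ^ m * X ^ (m.choose 2) * qp R m := by
    have h : ∀ n, ∏ i ∈ range n, ((X : R⟦X⟧) ^ n - X ^ i) =
        (-1) ^ n * X ^ (n.choose 2) * qp R n := by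
      intro n
      have h3 : ∏ i ∈ range n, (X : R⟦X⟧) ^ i = X ^ n.choose 2 := by
        rw [prod_pow_eq_pow_sum, sum_range_id, Nat.choose_two_right]
      have h4 : qp R n = ∏ i ∈ range n, (1 - X ^ (n - i)) := by
        rw [qp, ← prod_range_reflect]
        refine prod_congr rfl fun i hi => ?_
        rw [mem_range] at hi
        rw [show n - 1 - i + 1 = n - i by omega]
      have h5 : (-1 : R⟦X⟧) ^ n = ∏ i ∈ range n, -1 := by simp
      rw [h4, ← h3, h5, ← prod_mul_distrib, ← prod_mul_distrib]
      refine prod_congr rfl fun i hi => ?_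
      rw [mem_range] at hi
      rw [show (X : R⟦X⟧) ^ n = X ^ i * X ^ (n - i) by rw [← pow_add]; congr 1; omega]
      ring
    exact h m
  have e2 : ∏ i ∈ range m, ((X : R⟦X⟧) ^ m - X ^ (m + 1 + i)) = X ^ (m * m) * qp R m := by
    have h5 : (X : R⟦X⟧) ^ (m * m) = ∏ i ∈ range m, X ^ m := by simp [pow_mul]
    rw [qp, h5, ← prod_mul_distrib]
    exact prod_congr rfl fun i _ => by ring
  have hR : ∑ k ∈ range (2 * m + 1 + 1), Polynomial.C (X : R⟦X⟧) ^ (k.choose 2) *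
        gauss (Polynomial.C X) (2 * m + 1) k * (-Polynomial.X) ^ k *
        Polynomial.C (X ^ m) ^ (2 * m + 1 - k) =
      ∑ k ∈ range (2 * m + 1 + 1), Polynomial.C ((-1) ^ k * X ^ (k.choose 2 + m * (2 * m + 1 - k)) *
        gauss (X : R⟦X⟧) (2 * m + 1) k) * Polynomial.X ^ k := by
    refine sum_congr rfl fun k _ => ?_
    rw [← map_gauss, neg_pow, pow_add, pow_mul]
    simp only [map_mul, map_pow, map_neg, map_one]
    ring
  rw [hL, hR] at key
  have key2 := congrArg (fun f => (Polynomial.derivative f).eval 1) key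
  simp only [Polynomial.derivative_mul, Polynomial.eval_add, Polynomial.eval_mul,
    Polynomial.derivative_C, Polynomial.derivative_sub, Polynomial.derivative_one,
    Polynomial.derivative_X, Polynomial.eval_prod, Polynomial.eval_sub, Polynomial.eval_one,
    Polynomial.eval_X, Polynomial.eval_C, Polynomial.eval_neg, Polynomial.eval_pow, sub_self,
    mul_zero, zero_mul, zero_add, zero_sub, neg_one_mul,
    ← sub_eq_add_neg, e1, e2, Polynomial.derivative_sum, Polynomial.eval_finsetSum,
    Polynomial.derivative_X_pow, one_pow, mul_one] at key2
  -- pair the index `m - j` with `m + 1 + j`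
  rw [show 2 * m + 1 + 1 = (m + 1) + (m + 1) by ring, sum_range_add, ← sum_range_reflect,
    ← sum_add_distrib] at key2
  have e3 (j : ℕ) (hj : j ≤ m) : (m - j).choose 2 + m * (2 * m + 1 - (m - j)) =
      m.choose 2 + m * m + m + (j + 1).choose 2 := by
    obtain ⟨i, rfl⟩ := Nat.exists_eq_add_of_le hj
    have h1 := choose_two_eq i
    have h2 := choose_two_eq (j + i)
    have h3 := choose_two_eq (j + 1)
    rw [Nat.add_sub_cancel_left, show 2 * (j + i) + 1 - i = 2 * j + i + 1 by omega]
    zify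
    push_cast at h1 h2 h3 ⊢
    refine mul_right_cancel₀ (two_ne_zero (α := ℤ)) ?_
    linear_combination h1 - h2 - h3
  have e4 (j : ℕ) (hj : j ≤ m) : (m + 1 + j).choose 2 + m * (2 * m + 1 - (m + 1 + j)) =
      m.choose 2 + m * m + m + (j + 1).choose 2 := by
    obtain ⟨i, rfl⟩ := Nat.exists_eq_add_of_le hj
    have h1 := choose_two_eq (j + i + 1 + j)
    have h2 := choose_two_eq (j + i)
    have h3 := choose_two_eq (j + 1)
    rw [show 2 * (j + i) + 1 - (j + i + 1 + j) = i by omega]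
    zify
    push_cast at h1 h2 h3 ⊢
    refine mul_right_cancel₀ (two_ne_zero (α := ℤ)) ?_
    linear_combination h1 - h2 - h3
  refine PowerSeries.X_pow_mul_cancel (k := m.choose 2 + m * m + m) ?_
  have hs : ((-1 : R⟦X⟧) ^ m) * (-1) ^ m = 1 := by rw [← mul_pow]; simp
  calc X ^ (m.choose 2 + m * m + m) * qp R m ^ 2
      = -(-1) ^ m * ((-1) ^ m * X ^ m.choose 2 * qp R m * (X ^ (m * m) * qp R m) *
          (X ^ m * -1)) := by
        linear_combination (-X ^ (m.choose 2 + m * m + m) * qp R m ^ 2) * hs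
    _ = _ := by
      rw [key2, mul_sum, mul_sum]
      refine sum_congr rfl fun x hx => ?_
      have hx' : x ≤ m := Nat.lt_succ_iff.mp (mem_range.mp hx)
      rw [Nat.add_sub_cancel, e3 x hx', e4 x hx']
      have hg : gauss (X : R⟦X⟧) (2 * m + 1) (m + 1 + x) = gauss X (2 * m + 1) (m - x) := by
        have h := gauss_symm R (m - x) (m + 1 + x)
        rw [show m - x + (m + 1 + x) = 2 * m + 1 by omega] at h
        exact h.symm
      have hsg : (-1 : R⟦X⟧) ^ (m - x) = (-1) ^ m * (-1) ^ x := by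
        obtain ⟨i, rfl⟩ := Nat.exists_eq_add_of_le hx'
        rw [Nat.add_sub_cancel_left, pow_add, mul_right_comm, ← mul_pow]
        simp
      rw [hg, hsg, Nat.cast_sub hx']
      push_cast
      simp only [pow_add, pow_one]
      linear_combination (X ^ m.choose 2 * X ^ (m * m) * X ^ m * X ^ (x + 1).choose 2 *
        gauss X (2 * m + 1) (m - x) * (-1) ^ x * (2 * (x : R⟦X⟧) + 1)) * hs

lemma X_pow_dvd_euler_sub_qp {k M : ℕ} (h : k ≤ M + 1) :
    (X : R⟦X⟧) ^ k ∣ pentagonalSeries R - qp R M := by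
  rw [X_pow_dvd_iff]
  intro j hj
  obtain ⟨N, hN, hMN⟩ := ((Filter.tendsto_finset_range.eventually
    (coeff_prod_one_sub_X_pow_eventually_eq R j)).and (Filter.eventually_ge_atTop M)).exists
  have hd : (X : R⟦X⟧) ^ (M + 1) ∣ qp R N - qp R M := by
    clear hN
    induction N, hMN using Nat.le_induction with
    | base => simp
    | succ N hMN ih =>
      rw [qp_succ, show qp R N * (1 - X ^ (N + 1)) - qp R M =
        (qp R N - qp R M) - qp R N * X ^ (N + 1) by ring]
      exact ih.sub ((pow_dvd_pow X (by omega)).mul_left _)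
  rw [map_sub, ← hN, sub_eq_zero]
  have := X_pow_dvd_iff.mp hd j (by omega)
  rwa [map_sub, sub_eq_zero] at this

lemma isUnit_euler : IsUnit (pentagonalSeries R) := by
  have h := X_pow_dvd_iff.mp (X_pow_dvd_euler_sub_qp R (show 1 ≤ 0 + 1 by rfl)) 0 one_pos
  rw [map_sub, sub_eq_zero, coeff_zero_eq_constantCoeff_apply] at h
  rw [PowerSeries.isUnit_iff_constantCoeff, h]
  simp [qp]

/-- The coefficients `[a + b, a]` converge `X`-adically to the inverse of the Euler product. -/
lemma X_pow_dvd_euler_mul_gauss {a b : ℕ} (h : a ≤ b) :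
    (X : R⟦X⟧) ^ (a + 1) ∣ pentagonalSeries R * gauss X (a + b) a - 1 := by
  have h1 := X_pow_dvd_euler_sub_qp R (show a + 1 ≤ a + 1 by rfl)
  have h2 := X_pow_dvd_euler_sub_qp R (show a + 1 ≤ b + 1 by omega)
  have h3 := X_pow_dvd_euler_sub_qp R (show a + 1 ≤ (a + b) + 1 by omega)
  have hq := qp_mul_qp_mul_gauss R a b
  rw [← (isUnit_euler R).dvd_mul_left]
  have : pentagonalSeries R * (pentagonalSeries R * gauss X (a + b) a - 1) =
      (pentagonalSeries R - qp R a) * (pentagonalSeries R * gauss X (a + b) a) +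
      (pentagonalSeries R - qp R b) * (qp R a * gauss X (a + b) a) -
      (pentagonalSeries R - qp R (a + b)) := by
    linear_combination hq
  rw [this]
  exact ((h1.mul_right _).add (h2.mul_right _)).sub h3

/-- Jacobi's identity `∏ (1 - X ^ n) ^ 3 = ∑ (-1) ^ j (2 j + 1) X ^ (j (j + 1) / 2)`, in truncated
form. -/
theorem X_pow_dvd_euler_cube_sub (m : ℕ) : (X : R⟦X⟧) ^ (m + 1) ∣ pentagonalSeries R ^ 3 -
    ∑ j ∈ range (m + 1), (-1) ^ j * (2 * (j : R⟦X⟧) + 1) * X ^ ((j + 1).choose 2) := by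
  have h1 := X_pow_dvd_euler_sub_qp R (show m + 1 ≤ m + 1 by rfl)
  have h2 : (X : R⟦X⟧) ^ (m + 1) ∣ pentagonalSeries R * qp R m ^ 2 -
      ∑ j ∈ range (m + 1), (-1) ^ j * (2 * (j : R⟦X⟧) + 1) * X ^ ((j + 1).choose 2) := by
    rw [qp_sq, mul_sum, ← sum_sub_distrib]
    refine dvd_sum fun j hj => ?_
    have hj' : j ≤ m := Nat.lt_succ_iff.mp (mem_range.mp hj)
    have h := X_pow_dvd_euler_mul_gauss R (show m - j ≤ m + 1 + j by omega)
    rw [show m - j + (m + 1 + j) = 2 * m + 1 by omega] at h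
    have hT : j ≤ (j + 1).choose 2 := by
      rw [Nat.choose_succ_succ' j 1, Nat.choose_one_right]; omega
    -- the error in the `j`-th term starts at degree `j (j + 1) / 2 + (m - j) + 1 ≥ m + 1`
    have h3 := (pow_dvd_pow (X : R⟦X⟧) (show m + 1 ≤ (j + 1).choose 2 + (m - j + 1) by omega)).trans
      ((pow_add (X : R⟦X⟧) _ _).dvd.trans (mul_dvd_mul_left (X ^ ((j + 1).choose 2)) h))
    convert! h3.mul_left ((-1) ^ j * (2 * (j : R⟦X⟧) + 1)) using 1
    ring
  have h3 : pentagonalSeries R ^ 3 -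
      ∑ j ∈ range (m + 1), (-1) ^ j * (2 * (j : R⟦X⟧) + 1) * X ^ ((j + 1).choose 2) =
      (pentagonalSeries R - qp R m) *
        (pentagonalSeries R * (pentagonalSeries R + qp R m)) +
      (pentagonalSeries R * qp R m ^ 2 -
      ∑ j ∈ range (m + 1), (-1) ^ j * (2 * (j : R⟦X⟧) + 1) * X ^ ((j + 1).choose 2)) := by ring
  rw [h3]
  exact (h1.mul_right _).add h2

/-- The exponents surviving in the cube of the Euler product are the triangular numbers
`N = j (j + 1) / 2` with `s = 2 j + 1` nonzero in `R`. -/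
lemma exists_of_coeff_euler_cube_ne_zero {N : ℕ} (h : coeff N (pentagonalSeries R ^ 3) ≠ 0) :
    ∃ s : R, s ≠ 0 ∧ 8 * (N : R) + 1 = s ^ 2 := by
  have hd := X_pow_dvd_iff.mp (X_pow_dvd_euler_cube_sub R N) N (Nat.lt_succ_self N)
  rw [map_sub, sub_eq_zero, map_sum] at hd
  rw [hd] at h
  obtain ⟨j, -, hj⟩ := exists_ne_zero_of_sum_ne_zero h
  have hC : (-1) ^ j * (2 * (j : R⟦X⟧) + 1) = C ((-1) ^ j * (2 * (j : R) + 1)) := by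
    simp [map_ofNat (C (R := R)) 2]
  rw [hC, coeff_C_mul, coeff_X_pow] at hj
  split_ifs at hj with hN
  · refine ⟨2 * j + 1, fun h0 => hj (by rw [h0]; simp), ?_⟩
    have h2 := congrArg (Int.cast : ℤ → R) (choose_two_eq (j + 1))
    rw [hN]
    push_cast at h2 ⊢
    linear_combination 4 * h2
  · simp at hj

/-- The exponents in the Euler product are the pentagonal numbers `N = k (3 k - 1) / 2`, for which
`s = 6 k - 1`. -/
lemma exists_of_coeff_euler_ne_zero {N : ℕ} (h : coeff N (pentagonalSeries R) ≠ 0) :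
    ∃ s : R, 24 * (N : R) + 1 = s ^ 2 := by
  obtain ⟨k, rfl⟩ : N ∈ Set.range pentagonal := by
    by_contra hN; exact h (coeff_pentagonalSeries_eq_zero R hN)
  refine ⟨6 * k - 1, ?_⟩
  have h2 := congrArg (Int.cast : ℤ → R) (two_mul_natCast_pentagonal k)
  push_cast at h2
  linear_combination 12 * h2

open scoped PowerSeries.WithPiTopology in
theorem partition_mul_euler :
    PowerSeries.mk (fun n => (partitionCount n : R)) * pentagonalSeries R = 1 := by
  let _ : TopologicalSpace R := ⊥
  have : DiscreteTopology R := ⟨rfl⟩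
  have h1 := Nat.Partition.hasProd_powerSeriesMk_card_restricted R (fun _ => True)
  have h2 := WithPiTopology.hasProd_one_sub_X_pow R
  have h3 := h1.mul h2
  have hP : (fun n => ((Nat.Partition.restricted n fun _ => True).card : R)) =
      fun n => (partitionCount n : R) := by
    ext n; simp [Nat.Partition.restricted, partitionCount]
  rw [hP] at h3
  refine h3.unique ?_
  convert! hasProd_one using 2 with i
  simp only [if_true, pow_mul]
  exact WithPiTopology.tsum_pow_mul_one_sub_of_constantCoeff_eq_zero (by simp)

end Jacobi

/-! ### Splitting power series by residue classes of exponents -/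

section Classes
variable {R : Type*} [CommRing R] {l : ℕ}

/-- The part of `f` supported on the exponents whose remainder modulo `l` is `r`. -/
noncomputable def comp (l r : ℕ) (f : R⟦X⟧) : R⟦X⟧ :=
  PowerSeries.mk fun n => if n % l = r then coeff n f else 0

lemma coeff_comp (r n : ℕ) (f : R⟦X⟧) :
    coeff n (comp l r f) = if n % l = r then coeff n f else 0 := coeff_mk _ _

lemma comp_mul {r : ℕ} (hr : r < l) (f g : R⟦X⟧) :
    comp l r (f * g) = ∑ s ∈ range l, comp l s f * comp l ((r + (l - s)) % l) g := by
  ext n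
  simp only [coeff_comp, map_sum, coeff_mul]
  rw [sum_comm]
  have hl : 0 < l := by omega
  have h (p : ℕ × ℕ) : (∑ s ∈ range l, (if p.1 % l = s then coeff p.1 f else 0) *
      (if p.2 % l = (r + (l - s)) % l then coeff p.2 g else 0)) =
      if (p.1 + p.2) % l = r then coeff p.1 f * coeff p.2 g else 0 := by
    rw [sum_eq_single (p.1 % l)]
    · have hlt : p.1 % l < l := Nat.mod_lt _ hl
      have : p.2 % l = (r + (l - p.1 % l)) % l ↔ (p.1 + p.2) % l = r := by
        rw [← Nat.mod_eq_of_lt hr]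
        change Nat.ModEq l _ _ ↔ Nat.ModEq l _ _
        simp only [← ZMod.natCast_eq_natCast_iff]
        push_cast [Nat.cast_sub hlt.le, ZMod.natCast_mod, ZMod.natCast_self]
        constructor <;> intro h <;> linear_combination h
      simp [this]
    · intro s _ hs
      simp [hs.symm]
    · intro hs
      exact absurd (mem_range.mpr (Nat.mod_lt _ hl)) hs
  simp only [h]
  split_ifs with hn
  · exact sum_congr rfl fun p hp => by rw [mem_antidiagonal.mp hp, if_pos hn]
  · exact (sum_eq_zero fun p hp => by rw [mem_antidiagonal.mp hp, if_neg hn]).symm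

lemma comp_mul_of_class_zero {r : ℕ} (hr : r < l) (f g : R⟦X⟧)
    (hg : ∀ n, coeff n g ≠ 0 → l ∣ n) : comp l r (f * g) = comp l r f * g := by
  have hl : 0 < l := by omega
  have h0 : comp l 0 g = g := by
    ext n
    rw [coeff_comp]
    by_cases hn : coeff n g = 0
    · simp [hn]
    · rw [if_pos (Nat.mod_eq_zero_of_dvd (hg n hn))]
  have h1 (s : ℕ) (hs : s ≠ 0) : comp l s g = 0 := by
    ext n
    rw [coeff_comp]
    by_cases hn : coeff n g = 0
    · simp [hn]
    · rw [Nat.mod_eq_zero_of_dvd (hg n hn), if_neg hs.symm, map_zero]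
  rw [comp_mul hr, sum_eq_single r]
  · rw [Nat.add_sub_cancel' hr.le, Nat.mod_self, h0]
  · intro s hs hne
    rw [mem_range] at hs
    rw [h1, mul_zero]
    intro h
    obtain ⟨c, hc⟩ := Nat.dvd_of_mod_eq_zero h
    have : c = 1 := by
      rcases c with _ | _ | c
      · omega
      · rfl
      · have : l * (c + 1 + 1) = l * c + l + l := by ring
        have := Nat.zero_le (l * c)
        omega
    subst this
    omega
  · intro h; exact absurd (mem_range.mpr hr) h

lemma comp_eq_zero {r : ℕ} {f : R⟦X⟧} (h : ∀ n, n % l = r → coeff n f = 0) :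
    comp l r f = 0 := by
  ext n
  rw [coeff_comp]
  split_ifs with hn
  · simp [h n hn]
  · simp

end Classes

/-! ### Residue classes modulo a prime -/

section Prime
variable {l : ℕ} [Fact l.Prime]

/-- Over `𝔽_l` one has `f(X) ^ l = f(X ^ l)`, so only exponents divisible by `l` occur. -/
lemma dvd_of_coeff_pow_ne_zero (f : (ZMod l)⟦X⟧) {n : ℕ} (h : coeff n (f ^ l) ≠ 0) : l ∣ n := by
  have hl : l ≠ 0 := (Fact.out : l.Prime).ne_zero
  by_contra hn
  apply h
  have hf := MvPowerSeries.map_frobenius_expand (R := ZMod l) l hl (f := f)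
  rw [ZMod.frobenius_zmod, MvPowerSeries.map_id] at hf
  exact (congrArg (coeff n) hf).symm.trans (coeff_expand_of_not_dvd l hl f hn)

/-- If `E` is the Euler product and `k ≡ -1` modulo `l`, the generating function of `p` is `E ^ k`
divided by an `l`-th power, so the vanishing of a residue class of `E ^ k` passes to `p`. -/
theorem dvd_partitionCount {k r : ℕ} (hr : r < l)
    (h : comp l r (pentagonalSeries (ZMod l) ^ k) = 0) (j : ℕ) (hk : k + 1 = l * j)
    {n : ℕ} (hn : n % l = r) : partitionCount n ≡ 0 [MOD l] := by
  set E := pentagonalSeries (ZMod l)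
  have hP := partition_mul_euler (ZMod l)
  have hE : PowerSeries.mk (fun n => (partitionCount n : ZMod l)) * (E ^ j) ^ l = E ^ k := by
    rw [← pow_mul, mul_comm j l, ← hk, pow_succ']
    rw [← mul_assoc, hP, one_mul]
  rw [← hE, comp_mul_of_class_zero hr _ _ fun n hn => dvd_of_coeff_pow_ne_zero _ hn] at h
  have h0 := ((((isUnit_euler (ZMod l)).pow j).pow l).mul_left_eq_zero).mp h
  have h1 := congrArg (coeff n) h0
  rw [coeff_comp, if_pos hn, coeff_mk, map_zero] at h1
  rw [← ZMod.natCast_eq_natCast_iff]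
  simpa using h1

lemma comp_euler_eq_zero {r : ℕ} (hr : ∀ s : ZMod l, 24 * (r : ZMod l) + 1 ≠ s ^ 2) :
    comp l r (pentagonalSeries (ZMod l)) = 0 := by
  refine comp_eq_zero fun n hn => ?_
  by_contra h
  obtain ⟨s, hs⟩ := exists_of_coeff_euler_ne_zero (ZMod l) h
  rw [← ZMod.natCast_mod, hn] at hs
  exact hr s hs

lemma comp_euler_cube_eq_zero {r : ℕ}
    (hr : ∀ s : ZMod l, s ≠ 0 → 8 * (r : ZMod l) + 1 ≠ s ^ 2) :
    comp l r (pentagonalSeries (ZMod l) ^ 3) = 0 := by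
  refine comp_eq_zero fun n hn => ?_
  by_contra h
  obtain ⟨s, hs0, hs⟩ := exists_of_coeff_euler_cube_ne_zero (ZMod l) h
  rw [← ZMod.natCast_mod, hn] at hs
  exact hr s hs0 hs

end Prime

/-! ### The moduli 5, 7 and 11 -/

instance : Fact (Nat.Prime 5) := ⟨by norm_num⟩
instance : Fact (Nat.Prime 7) := ⟨by norm_num⟩
instance : Fact (Nat.Prime 11) := ⟨by norm_num⟩

theorem mod_five {n : ℕ} (hn : n % 5 = 4) : partitionCount n ≡ 0 [MOD 5] := by
  refine dvd_partitionCount (k := 4) (by norm_num) ?_ 1 rfl hn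
  have e3 : comp 5 3 (pentagonalSeries (ZMod 5)) = 0 := comp_euler_eq_zero (by decide)
  have e4 : comp 5 4 (pentagonalSeries (ZMod 5)) = 0 := comp_euler_eq_zero (by decide)
  have c2 : comp 5 2 (pentagonalSeries (ZMod 5) ^ 3) = 0 := comp_euler_cube_eq_zero (by decide)
  have c3 : comp 5 3 (pentagonalSeries (ZMod 5) ^ 3) = 0 := comp_euler_cube_eq_zero (by decide)
  have c4 : comp 5 4 (pentagonalSeries (ZMod 5) ^ 3) = 0 := comp_euler_cube_eq_zero (by decide)
  rw [pow_succ', comp_mul (by norm_num)]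
  simp [sum_range_succ, e3, e4, c2, c3, c4]

theorem mod_seven {n : ℕ} (hn : n % 7 = 5) : partitionCount n ≡ 0 [MOD 7] := by
  refine dvd_partitionCount (k := 6) (by norm_num) ?_ 1 rfl hn
  have c2 : comp 7 2 (pentagonalSeries (ZMod 7) ^ 3) = 0 := comp_euler_cube_eq_zero (by decide)
  have c4 : comp 7 4 (pentagonalSeries (ZMod 7) ^ 3) = 0 := comp_euler_cube_eq_zero (by decide)
  have c5 : comp 7 5 (pentagonalSeries (ZMod 7) ^ 3) = 0 := comp_euler_cube_eq_zero (by decide)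
  have c6 : comp 7 6 (pentagonalSeries (ZMod 7) ^ 3) = 0 := comp_euler_cube_eq_zero (by decide)
  rw [show 6 = 3 + 3 by rfl, pow_add, comp_mul (by norm_num)]
  simp [sum_range_succ, c2, c4, c5, c6]

/-- Since `E ^ 12 = E * E ^ 11`, with `J = E ^ 3` the series `J ^ 4` has no exponent in the classes
missed by the pentagonal numbers modulo `11`. These five quartic relations between the classes of
`J` force the class of `6` in `J ^ 7 = E ^ 21` to vanish. -/
theorem mod_eleven {n : ℕ} (hn : n % 11 = 6) : partitionCount n ≡ 0 [MOD 11] := by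
  refine dvd_partitionCount (k := 21) (by norm_num) ?_ 2 rfl hn
  set E := pentagonalSeries (ZMod 11)
  have z (r : ℕ) (hr : ∀ s : ZMod 11, s ≠ 0 → 8 * (r : ZMod 11) + 1 ≠ s ^ 2) :
      comp 11 r (E ^ 3) = 0 := comp_euler_cube_eq_zero hr
  have c2 := z 2 (by decide)
  have c4 := z 4 (by decide)
  have c5 := z 5 (by decide)
  have c7 := z 7 (by decide)
  have c8 := z 8 (by decide)
  have c9 := z 9 (by decide)
  have w (r : ℕ) (hr : r < 11) (hs : ∀ s : ZMod 11, 24 * (r : ZMod 11) + 1 ≠ s ^ 2) :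
      comp 11 r ((E ^ 3 * E ^ 3) * (E ^ 3 * E ^ 3)) = 0 := by
    rw [show (E ^ 3 * E ^ 3) * (E ^ 3 * E ^ 3) = E * E ^ 11 by ring,
      comp_mul_of_class_zero hr _ _ fun n hn => dvd_of_coeff_pow_ne_zero _ hn,
      comp_euler_eq_zero hs, zero_mul]
  have w3 := w 3 (by norm_num) (by decide)
  have w6 := w 6 (by norm_num) (by decide)
  have w8 := w 8 (by norm_num) (by decide)
  have w9 := w 9 (by norm_num) (by decide)
  have w10 := w 10 (by norm_num) (by decide)
  have h11 : (11 : (ZMod 11)⟦X⟧) = 0 := by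
    have : ((11 : ℕ) : ZMod 11) = 0 := ZMod.natCast_self 11
    exact (map_ofNat (C (R := ZMod 11)) 11).symm.trans ((congrArg C this).trans (map_zero C))
  rw [show E ^ 21 = ((E ^ 3 * E ^ 3) * (E ^ 3 * E ^ 3)) * (E ^ 3 * (E ^ 3 * E ^ 3)) by ring]
  clear_value E
  generalize E ^ 3 = J at *
  simp only [comp_mul, Nat.reduceLT, sum_range_succ, range_zero, sum_empty, Nat.reduceSub,
    Nat.reduceAdd, Nat.reduceMod, c2, c4, c5, c7, c8, c9, zero_mul, mul_zero, add_zero,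
    zero_add] at w3 w6 w8 w9 w10 ⊢
  generalize comp 11 0 J = a at *
  generalize comp 11 1 J = b at *
  generalize comp 11 3 J = c at *
  generalize comp 11 6 J = d at *
  generalize comp 11 10 J = e at *
  -- The class-`6` part of `J ^ 7` lies, modulo `11`, in the ideal generated by the class-`3`, `6`,
  -- `8`, `9` and `10` parts of `J ^ 4`; the cubic multipliers come from linear algebra over `𝔽₁₁`,
  -- and the coefficient of `h11` is the remaining integer multiple of `11`.
  linear_combination (4 * a ^ 2 * c - b ^ 3 - b * c * e) * w3 +
    (-a ^ 3 - a * b * e + 4 * d ^ 2 * e) * w6 +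
    (-a * c * d + 4 * a * e ^ 2 - c ^ 3) * w8 +
    (4 * b ^ 2 * d - c * d * e - e ^ 3) * w9 +
    (-a * b * d + 4 * b * c ^ 2 - d ^ 3) * w10 +
    (a ^ 6 * d + a ^ 5 * c ^ 2 + 22 * a ^ 4 * b * d * e + 12 * a ^ 3 * b ^ 3 * c +
      30 * a ^ 3 * b * c ^ 2 * e + 12 * a ^ 3 * d ^ 3 * e + 54 * a ^ 2 * b ^ 2 * c * d ^ 2 +
      54 * a ^ 2 * b ^ 2 * d * e ^ 2 + 54 * a ^ 2 * c ^ 2 * d ^ 2 * e +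
      30 * a ^ 2 * c * d * e ^ 3 + a ^ 2 * e ^ 5 + a * b ^ 6 + 22 * a * b ^ 4 * c * e +
      30 * a * b ^ 2 * c ^ 3 * d + 54 * a * b ^ 2 * c ^ 2 * e ^ 2 + 22 * a * b * c * d ^ 4 +
      30 * a * b * d ^ 3 * e ^ 2 + 22 * a * c ^ 4 * d * e + 12 * a * c ^ 3 * e ^ 3 +
      b ^ 5 * d ^ 2 + 30 * b ^ 3 * c * d ^ 2 * e + 12 * b ^ 3 * d * e ^ 3 + b ^ 2 * c ^ 5 +
      12 * b * c ^ 3 * d ^ 3 + 54 * b * c ^ 2 * d ^ 2 * e ^ 2 + 22 * b * c * d * e ^ 4 +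
      b * e ^ 6 + c ^ 6 * e + c * d ^ 6 + d ^ 5 * e ^ 2) * h11

end RamanujanCongruences

theorem ramanujan_congruences (l : ℕ) (hl : l = 5 ∨ l = 7 ∨ l = 11) (n : ℕ) (hn : 0 < n) :
    partitionCount (l * n - (l ^ 2 - 1) / 24) ≡ 0 [MOD l] := by
  rcases hl with rfl | rfl | rfl
  · exact RamanujanCongruences.mod_five (by omega)
  · exact RamanujanCongruences.mod_seven (by omega)
  · exact RamanujanCongruences.mod_eleven (by omega)
end

section
/- (Ramanujan–Watson, modulus powers of 5) For every positive integer k and every natural number n, if 24n ≡ 1 (mod 5^k) then p(n) ≡ 0 (mod 5^k). -/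
namespace RamanujanWatson

open PowerSeries Finset

theorem five_ne : (5 : ℕ) ≠ 0 := by norm_num

/-- The substitution `X ↦ X ^ 5`. -/
noncomputable def V {R : Type*} [CommRing R] : R⟦X⟧ →ₐ[R] R⟦X⟧ := expand 5 five_ne

/-- Extraction of the terms of exponent `r` modulo 5: `∑ aₙ Xⁿ ↦ ∑ a₅ₙ₊ᵣ Xⁿ`. -/
noncomputable def U {R : Type*} [CommRing R] (r : ℕ) : R⟦X⟧ →ₗ[R] R⟦X⟧ where
  toFun f := mk fun n => coeff (5 * n + r) f
  map_add' f g := by ext n; simp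
  map_smul' c f := by ext n; simp

/-! ### Dissecting a power series modulo 5 -/

section Dissection

variable {R : Type*} [CommRing R]

theorem coeff_U (r n : ℕ) (f : R⟦X⟧) : coeff n (U r f) = coeff (5 * n + r) f := by
  simp [U]

theorem coeff_V (n : ℕ) (f : R⟦X⟧) :
    coeff n (V f) = if 5 ∣ n then coeff (n / 5) f else 0 := coeff_expand ..

theorem V_X : V (X : R⟦X⟧) = X ^ 5 := expand_X ..

theorem coeff_X_pow_mul_V (r n : ℕ) (f : R⟦X⟧) :
    coeff n (X ^ r * V f) = if r ≤ n ∧ 5 ∣ n - r then coeff ((n - r) / 5) f else 0 := by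
  rw [coeff_X_pow_mul', coeff_V]
  split_ifs <;> simp_all

theorem U_V (f : R⟦X⟧) : U 0 (V f) = f := by
  ext n
  simp [coeff_U, coeff_V]

theorem V_injective : Function.Injective (V : R⟦X⟧ → R⟦X⟧) :=
  Function.LeftInverse.injective U_V

theorem dissection (f : R⟦X⟧) :
    f = V (U 0 f) + X * V (U 1 f) + X ^ 2 * V (U 2 f) + X ^ 3 * V (U 3 f)
      + X ^ 4 * V (U 4 f) := by
  have h0 : V (U 0 f) = X ^ 0 * V (U 0 f) := by simp
  have h1 : X * V (U 1 f) = X ^ 1 * V (U 1 f) := by simp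
  rw [h0, h1]
  ext n
  simp only [map_add, coeff_X_pow_mul_V, coeff_U]
  obtain ⟨m, r, hr, rfl⟩ : ∃ m r, r < 5 ∧ n = 5 * m + r :=
    ⟨n / 5, n % 5, Nat.mod_lt _ (by norm_num), (Nat.div_add_mod n 5).symm⟩
  have key : ∀ s, s < 5 → (if s ≤ 5 * m + r ∧ 5 ∣ 5 * m + r - s then
      coeff (5 * ((5 * m + r - s) / 5) + s) f else 0)
      = if s = r then coeff (5 * m + r) f else 0 := by
    intro s hs
    by_cases h : s = r
    · subst h
      have : s ≤ 5 * m + s ∧ 5 ∣ 5 * m + s - s := by omega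
      rw [if_pos this, if_pos rfl]
      congr 2
      omega
    · have : ¬ (s ≤ 5 * m + r ∧ 5 ∣ 5 * m + r - s) := by omega
      rw [if_neg this, if_neg h]
  rw [key 0 (by norm_num), key 1 (by norm_num), key 2 (by norm_num), key 3 (by norm_num),
    key 4 (by norm_num)]
  interval_cases r <;> simp

theorem U_X_pow_mul_V (r k : ℕ) (hr : r < 5) (hk : k < 5) (f : R⟦X⟧) :
    U r (X ^ k * V f) = if r = k then f else 0 := by
  ext n
  rw [coeff_U, coeff_X_pow_mul_V]
  by_cases h : r = k
  · subst h
    rw [if_pos (by omega), if_pos rfl]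
    congr 2
    omega
  · rw [if_neg (by omega), if_neg h]
    simp

/-- `U r` is linear over the image of `V`; this is what makes `U 0` computable below. -/
theorem U_V_mul (r : ℕ) (hr : r < 5) (f g : R⟦X⟧) : U r (V f * g) = f * U r g := by
  have h : V f * g = X ^ 0 * V (f * U 0 g) + X ^ 1 * V (f * U 1 g) + X ^ 2 * V (f * U 2 g)
      + X ^ 3 * V (f * U 3 g) + X ^ 4 * V (f * U 4 g) := by
    conv_lhs => rw [dissection g]
    simp only [map_mul]
    ring
  rw [h]
  simp only [map_add]
  rw [U_X_pow_mul_V _ _ hr, U_X_pow_mul_V _ _ hr, U_X_pow_mul_V _ _ hr, U_X_pow_mul_V _ _ hr,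
    U_X_pow_mul_V _ _ hr] <;> try norm_num
  interval_cases r <;> simp

theorem U_X_pow (k : ℕ) (hk : ¬ 5 ∣ k) : U 0 (X ^ k : R⟦X⟧) = 0 := by
  ext n
  rw [coeff_U, coeff_X_pow, if_neg (by omega)]
  simp

theorem U_X_pow_five_mul (f : R⟦X⟧) : U 0 (X ^ 5 * f) = X * U 0 f := by
  rw [← V_X, U_V_mul 0 (by norm_num)]

end Dissection

/-! ### Congruences modulo powers of X -/

section Congruence

variable {R : Type*} [CommRing R]

theorem eq_of_forall_X_pow_dvd {f g : R⟦X⟧} (h : ∀ n, X ^ n ∣ f - g) : f = g := by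
  rw [← sub_eq_zero]
  ext n
  have := X_pow_dvd_iff.1 (h (n + 1)) n (by omega)
  simpa using this

theorem X_pow_dvd_V {n : ℕ} {f : R⟦X⟧} (h : X ^ n ∣ f) : X ^ n ∣ V f := by
  obtain ⟨g, rfl⟩ := h
  rw [map_mul, map_pow, V_X]
  exact Dvd.dvd.mul_right (pow_dvd_pow_of_dvd (dvd_pow_self _ (by norm_num)) _) _

theorem X_pow_dvd_rescale {n : ℕ} (c : R) {f : R⟦X⟧} (h : X ^ n ∣ f) : X ^ n ∣ rescale c f := by
  obtain ⟨g, rfl⟩ := h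
  rw [map_mul, map_pow, rescale_X, mul_pow]
  exact Dvd.dvd.mul_right (Dvd.intro_left _ rfl) _

theorem X_pow_dvd_sub_iff {n : ℕ} {f g : R⟦X⟧} : X ^ n ∣ f - g ↔
    Ideal.Quotient.mk (Ideal.span {(X : R⟦X⟧) ^ n}) f = Ideal.Quotient.mk _ g := by
  rw [Ideal.Quotient.eq, Ideal.mem_span_singleton]

end Congruence

/-! ### The Euler product and the partition series -/

section Euler

/-- The finite product `(1 - X)(1 - X²)⋯(1 - Xⁿ)`. -/
noncomputable def qfac (n : ℕ) : ℤ⟦X⟧ := ∏ i ∈ range n, (1 - X ^ (i + 1))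

theorem qfac_succ (n : ℕ) : qfac (n + 1) = qfac n * (1 - X ^ (n + 1)) := prod_range_succ _ _

/-- Euler's product `∏ (1 - Xⁿ)`, encoded through the pentagonal number theorem as the series
`∑ (-1)ᵏ X ^ (k(3k-1)/2)`; `E_sub_qfac` ties it to the product. -/
noncomputable def E : ℤ⟦X⟧ := pentagonalSeries ℤ

/-- The generating function of the partition numbers. -/
noncomputable def P : ℤ⟦X⟧ := mk fun n => (partitionCount n : ℤ)

theorem qfac_sub_qfac (n d : ℕ) : X ^ (n + 1) ∣ qfac (n + d) - qfac n := by
  induction d with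
  | zero => simp
  | succ d ih =>
    have : qfac (n + (d + 1)) - qfac n
        = (qfac (n + d) - qfac n) - X ^ (n + 1) * (X ^ d * qfac (n + d)) := by
      rw [← add_assoc, qfac_succ]
      ring
    rw [this]
    exact dvd_sub ih (Dvd.intro _ rfl)

theorem E_sub_qfac (n : ℕ) : X ^ (n + 1) ∣ E - qfac n := by
  rw [X_pow_dvd_iff]
  intro m hm
  obtain ⟨s, hs⟩ := Filter.eventually_atTop.1 (coeff_prod_one_sub_X_pow_eventually_eq ℤ m)
  obtain ⟨N, hN⟩ := s.exists_nat_subset_range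
  have h1 := hs (range (n + N)) (hN.trans (range_mono (by omega)))
  have h2 := X_pow_dvd_iff.1 (qfac_sub_qfac n N) m hm
  rw [map_sub, sub_eq_zero] at h2 ⊢
  rw [← h2]
  exact h1.symm

/-- Euler: the partition series is the inverse of Euler's product. -/
theorem P_mul_E : P * E = 1 := by
  let _ : TopologicalSpace ℤ := ⊥
  have _ : DiscreteTopology ℤ := ⟨rfl⟩
  open PowerSeries.WithPiTopology in
  have h1 := Nat.Partition.hasProd_powerSeriesMk_card_restricted ℤ (fun _ => True)
  have h2 := PowerSeries.WithPiTopology.hasProd_one_sub_X_pow ℤ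
  have h3 := h1.mul h2
  have h4 : (mk fun n => (#(Nat.Partition.restricted n (fun _ => True)) : ℤ)) = P := by
    ext n
    simp [P, Nat.Partition.restricted, partitionCount]
  rw [h4] at h3
  refine h3.unique ?_
  convert! hasProd_one using 2 with i
  simp only [if_true, pow_mul]
  rw [PowerSeries.WithPiTopology.tsum_pow_mul_one_sub_of_constantCoeff_eq_zero (by simp)]

end Euler

/-! ### Jacobi's identity for the cube of the Euler product -/

section Jacobi

/-- The inverse of `qfac n`. -/
noncomputable def qinv (n : ℕ) : ℤ⟦X⟧ := invOfUnit (qfac n) 1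

theorem constantCoeff_qfac (n : ℕ) : constantCoeff (qfac n) = 1 := by
  simp [qfac, map_prod]

theorem qfac_mul_qinv (n : ℕ) : qfac n * qinv n = 1 :=
  mul_invOfUnit _ _ (by simp [constantCoeff_qfac])

theorem qinv_eq_succ (n : ℕ) : qinv n = (1 - X ^ (n + 1)) * qinv (n + 1) := by
  have h1 := qfac_mul_qinv n
  have h2 := qfac_mul_qinv (n + 1)
  rw [qfac_succ] at h2
  linear_combination (1 - X ^ (n + 1)) * qinv (n + 1) * h1 - qinv n * h2

theorem qfac_mul_qinv_sub_one (n d : ℕ) : X ^ (n + 1) ∣ qfac (n + d) * qinv n - 1 := by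
  rw [← qfac_mul_qinv n, ← sub_mul]
  exact (qfac_sub_qfac n d).mul_right _

/-- The triangular number `j(j+1)/2`. -/
def tri (j : ℕ) : ℕ := j * (j + 1) / 2

theorem tri_succ (j : ℕ) : tri (j + 1) = tri j + (j + 1) := by
  unfold tri
  rw [show (j + 1) * (j + 1 + 1) = j * (j + 1) + (j + 1) * 2 by ring,
    Nat.add_mul_div_right _ _ (by norm_num)]

theorem le_tri (j : ℕ) : j ≤ tri j := by
  induction j with
  | zero => simp
  | succ j ih => rw [tri_succ]; omega

/-- The summand `(-1)ʲ X ^ (j(j+1)/2) (X;X)₂ₙ₊₁ / ((X;X)ₙ₋ⱼ (X;X)ₙ₊ⱼ₊₁)` of a finite form of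
Jacobi's identity, set to zero for `j > n`. As `n → ∞` it tends to
`(-1)ʲ X ^ (j(j+1)/2) / (X;X)_∞`. -/
noncomputable def jac (n j : ℕ) : ℤ⟦X⟧ :=
  if j ≤ n then (-1) ^ j * X ^ tri j * (qfac (2 * n + 1) * qinv (n - j) * qinv (n + j + 1)) else 0

theorem jac_of_lt {n j : ℕ} (h : n < j) : jac n j = 0 := if_neg (by omega)

theorem jac_add (j d : ℕ) : jac (j + d) j =
    (-1) ^ j * X ^ tri j * (qfac (2 * (j + d) + 1) * qinv d * qinv (j + d + j + 1)) := by
  rw [jac, if_pos (by omega), Nat.add_sub_cancel_left]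

/-- Boundary case of `jac_succ_succ`: reflecting `j ↦ -1 - j` changes the sign of the summand, so
the missing term `jac n (-1)` is `-jac n 0`. -/
theorem jac_succ_zero (n : ℕ) : jac (n + 1) 0 =
    (1 + X ^ (n + 1) + (X ^ (n + 1)) ^ 2) * jac n 0 - X ^ (n + 1) * jac n 1 := by
  have e0 : jac (n + 1) 0 = qfac (2 * n + 3) * qinv (n + 1) * qinv (n + 2) := by
    simp [jac, tri, show 2 * (n + 1) + 1 = 2 * n + 3 by ring]
  have e1 : jac n 0 = qfac (2 * n + 1) * qinv n * qinv (n + 1) := by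
    simp [jac, tri]
  have q1 : qfac (2 * n + 3) = qfac (2 * n + 1) * (1 - X ^ (2 * n + 2)) * (1 - X ^ (2 * n + 3)) := by
    rw [qfac_succ, qfac_succ]
  have e2 : jac n 1 = - X * (1 - X ^ n) * qfac (2 * n + 1) * qinv n * qinv (n + 2) := by
    rcases n with _ | n
    · simp [jac]
    · rw [jac, if_pos (by omega), Nat.add_sub_cancel, qinv_eq_succ n]
      simp [tri]
      ring
  rw [e0, e1, e2, q1, qinv_eq_succ n, qinv_eq_succ (n + 1)]
  ring

theorem jac_succ_succ (n j : ℕ) : jac (n + 1) (j + 1) =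
    (1 + (X ^ (n + 1)) ^ 2) * jac n (j + 1) - X ^ (n + 1) * (jac n j + jac n (j + 2)) := by
  have q1 : qfac (2 * (n + 1) + 1)
      = qfac (2 * n + 1) * (1 - X ^ (2 * n + 2)) * (1 - X ^ (2 * n + 3)) := by
    rw [show 2 * (n + 1) + 1 = 2 * n + 1 + 1 + 1 by ring, qfac_succ, qfac_succ]
  rcases lt_trichotomy n j with h | rfl | h
  · rw [jac_of_lt (by omega), jac_of_lt (by omega), jac_of_lt h, jac_of_lt (by omega)]
    ring
  · rw [jac_of_lt (show n < n + 1 by omega), jac_of_lt (show n < n + 2 by omega)]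
    rw [jac, jac, if_pos le_rfl, if_pos le_rfl, Nat.sub_self, Nat.sub_self, q1,
      show n + n + 1 = 2 * n + 1 by ring, show n + 1 + (n + 1) + 1 = 2 * n + 1 + 1 + 1 by ring,
      qinv_eq_succ (2 * n + 1), qinv_eq_succ (2 * n + 1 + 1), tri_succ]
    ring
  · obtain ⟨d, rfl⟩ := Nat.exists_eq_add_of_lt h
    have e0 := jac_add j (d + 1)
    have e1 := jac_add (j + 1) d
    have e2 := jac_add (j + 1) (d + 1)
    have e3 : jac (j + d + 1) (j + 2) = (-1) ^ j * X ^ tri (j + 2) * (1 - X ^ d) *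
        (qfac (2 * (j + d + 1) + 1) * qinv d * qinv (j + d + 1 + j + 1 + 2)) := by
      rcases d with _ | d
      · rw [jac_of_lt (by omega)]
        simp
      · have := jac_add (j + 2) d
        rw [show j + 2 + d = j + (d + 1) + 1 by ring] at this
        rw [this, qinv_eq_succ d, show j + (d + 1) + 1 + (j + 2) + 1 = j + (d + 1) + 1 + j + 1 + 2 by ring]
        ring
    rw [show j + (d + 1) = j + d + 1 by ring] at e0
    rw [show j + 1 + d = j + d + 1 by ring,
      show j + d + 1 + (j + 1) + 1 = j + d + 1 + j + 1 + 1 by ring] at e1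
    rw [show j + 1 + (d + 1) = j + d + 1 + 1 by ring,
      show j + d + 1 + 1 + (j + 1) + 1 = j + d + 1 + j + 1 + 2 by ring] at e2
    rw [e0, e1, e2, e3, q1, qinv_eq_succ d, qinv_eq_succ (j + d + 1 + j + 1),
      qinv_eq_succ (j + d + 1 + j + 1 + 1), tri_succ (j + 1), tri_succ j]
    ring

/-- Partial summation of the three-term recurrence of `jac_succ_succ` against the weights `2j + 1`.
These are annihilated by the second difference, so only the factor `(1 - x)²` and two boundary terms
remain. -/
theorem sum_odd_mul_recurrence {R : Type*} [CommRing R] (b c : ℕ → R) (x : R)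
    (h0 : c 0 = (1 + x + x ^ 2) * b 0 - x * b 1)
    (h1 : ∀ j, c (j + 1) = (1 + x ^ 2) * b (j + 1) - x * (b j + b (j + 2))) (m : ℕ) :
    ∑ j ∈ range (m + 1), (2 * (j : R) + 1) * c j =
      (1 - x) ^ 2 * ∑ j ∈ range (m + 1), (2 * (j : R) + 1) * b j
        + x * ((2 * m + 3) * b m - (2 * m + 1) * b (m + 1)) := by
  induction m with
  | zero =>
    simp [h0]
    ring
  | succ m ih =>
    rw [sum_range_succ, ih, sum_range_succ _ (m + 1), h1]
    push_cast
    ring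

/-- Finite form of Jacobi's identity `∏ (1 - Xⁿ)³ = ∑ (-1)ʲ (2j+1) X ^ (j(j+1)/2)`. -/
theorem sum_jac (n : ℕ) :
    ∑ j ∈ range (n + 1), (2 * (j : ℤ⟦X⟧) + 1) * jac n j = qfac n ^ 2 := by
  induction n with
  | zero =>
    have := qfac_mul_qinv 1
    have h0 : qinv 0 = 1 := by simpa [qfac] using qfac_mul_qinv 0
    simp [jac, tri, h0, this]
    simp [qfac]
  | succ n ih =>
    rw [sum_odd_mul_recurrence (jac n) (jac (n + 1)) (X ^ (n + 1)) (jac_succ_zero n)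
      (jac_succ_succ n) (n + 1), sum_range_succ, ih, jac_of_lt (show n < n + 1 by omega),
      jac_of_lt (show n < n + 1 + 1 by omega), qfac_succ]
    ring

/-- Jacobi's identity modulo `X ^ (n + 1)`. -/
theorem qfac_cube_sub (n : ℕ) : X ^ (n + 1) ∣ qfac n ^ 3 -
    ∑ j ∈ range (n + 1), (2 * (j : ℤ⟦X⟧) + 1) * ((-1) ^ j * X ^ tri j) := by
  rw [pow_succ (qfac n), ← sum_jac, sum_mul, ← sum_sub_distrib]
  refine dvd_sum fun j hj => ?_
  obtain ⟨d, rfl⟩ := Nat.exists_eq_add_of_le (Nat.lt_succ_iff.1 (mem_range.1 hj))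
  obtain ⟨u, hu⟩ := qfac_mul_qinv_sub_one d j
  obtain ⟨v, hv⟩ := qfac_mul_qinv_sub_one (j + d + j + 1) d
  obtain ⟨k, hk⟩ := Nat.exists_eq_add_of_le (le_tri j)
  rw [jac_add, show 2 * (j + d) + 1 = j + d + j + 1 + d by ring, add_comm j d] at *
  refine ⟨(2 * (j : ℤ⟦X⟧) + 1) * (-1) ^ j * X ^ k *
    (u * (qfac (d + j + j + 1 + d) * qinv (d + j + j + 1)) + X ^ (j + j + 1) * v), ?_⟩
  rw [hk]
  linear_combination (2 * (j : ℤ⟦X⟧) + 1) * (-1) ^ j * X ^ (j + k) *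
    ((qfac (d + j + j + 1 + d) * qinv (d + j + j + 1)) * hu + hv)

theorem tri_mod_five (j : ℕ) : tri j % 5 ≠ 2 := by
  have h : 2 * tri j = j * (j + 1) := Nat.mul_div_cancel' (Nat.even_mul_succ_self j).two_dvd
  have h5 : (j * (j + 1)) % 5 = (j % 5) * (j % 5 + 1) % 5 := by
    simp [Nat.mul_mod, Nat.add_mod]
  have : j % 5 < 5 := Nat.mod_lt _ (by norm_num)
  intro h2
  interval_cases h' : j % 5 <;> omega

/-- No triangular number is 2 modulo 5, so by Jacobi's identity `E ^ 3` has no such exponents. -/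
theorem U_two_E_cube : U 2 (E ^ 3) = 0 := by
  ext m
  rw [coeff_U]
  set n := 5 * m + 2
  have h1 : X ^ (n + 1) ∣ E ^ 3 - qfac n ^ 3 := (E_sub_qfac n).trans (sub_dvd_pow_sub_pow _ _ 3)
  have h2 := X_pow_dvd_iff.1 (dvd_add h1 (qfac_cube_sub n)) n (by omega)
  rw [sub_add_sub_cancel, map_sub, sub_eq_zero] at h2
  rw [h2, map_sum, map_zero]
  refine sum_eq_zero fun j _ => ?_
  have h3 : (2 * (j : ℤ⟦X⟧) + 1) * ((-1) ^ j * X ^ tri j)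
      = C ((2 * (j : ℤ) + 1) * (-1) ^ j) * X ^ tri j := by
    simp
    ring
  rw [h3, coeff_C_mul, coeff_X_pow, if_neg, mul_zero]
  have := tri_mod_five j
  omega

end Jacobi

/-! ### The 5-dissection of the Euler product -/

section EulerDissection

/-- No pentagonal number is 3 or 4 modulo 5. -/
theorem U_E_eq_zero {r : ℕ} (hr : r = 3 ∨ r = 4) : U r E = 0 := by
  ext n
  rw [coeff_U, E, map_zero]
  refine coeff_pentagonalSeries_eq_zero ℤ ?_
  rintro ⟨k, hk⟩
  have h := two_mul_natCast_pentagonal k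
  rw [hk] at h
  have h5 : (k * (3 * k - 1)) % 5 = (k % 5) * (3 * (k % 5) - 1) % 5 := by
    simp [Int.mul_emod, Int.sub_emod]
  have h0 := Int.emod_nonneg k (show (5 : ℤ) ≠ 0 by norm_num)
  have h1 := Int.emod_lt_of_pos k (show (0 : ℤ) < 5 by norm_num)
  push_cast at h
  interval_cases h' : k % 5 <;> omega

/-- The pentagonal numbers that are 1 modulo 5 are those of index `1 - 5l`, and they equal
`1 + 25 l(3l-1)/2`, with opposite sign. -/
theorem U_one_E : U 1 E = - V E := by
  ext n
  rw [coeff_U, map_neg, coeff_V]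
  by_cases hp : 5 * n + 1 ∈ Set.range pentagonal
  · obtain ⟨k, hk⟩ := hp
    have h := two_mul_natCast_pentagonal k
    have h5 : (k * (3 * k - 1)) % 5 = (k % 5) * (3 * (k % 5) - 1) % 5 := by
      simp [Int.mul_emod, Int.sub_emod]
    have h0 := Int.emod_nonneg k (show (5 : ℤ) ≠ 0 by norm_num)
    have h1 := Int.emod_lt_of_pos k (show (0 : ℤ) < 5 by norm_num)
    have hk1 : k % 5 = 1 := by
      rw [hk] at h
      push_cast at h
      interval_cases h' : k % 5 <;> omega
    obtain ⟨l, rfl⟩ : ∃ l, k = 5 * (-l) + 1 := ⟨-(k / 5), by omega⟩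
    have hl := two_mul_natCast_pentagonal l
    have hn : n = 5 * pentagonal l := by
      rw [hk] at h
      push_cast at h
      zify
      linarith
    rw [← hk, hn, if_pos (Dvd.intro _ rfl), Nat.mul_div_cancel_left _ (by norm_num), E,
      coeff_pentagonalSeries_pentagonal, coeff_pentagonalSeries_pentagonal]
    rw [Int.negOnePow_add, show 5 * -l = l + 2 * (-3 * l) by ring, Int.negOnePow_add]
    simp
  · rw [E, coeff_pentagonalSeries_eq_zero ℤ hp]
    split_ifs with h
    · obtain ⟨m, rfl⟩ := h
      rw [Nat.mul_div_cancel_left _ (by norm_num), coeff_pentagonalSeries_eq_zero, neg_zero]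
      rintro ⟨l, rfl⟩
      refine hp ⟨5 * (-l) + 1, ?_⟩
      have hl := two_mul_natCast_pentagonal l
      have h := two_mul_natCast_pentagonal (5 * (-l) + 1)
      zify
      linarith
    · simp

theorem E_dissection : E = V (U 0 E) - X * V (V E) + X ^ 2 * V (U 2 E) := by
  conv_lhs => rw [dissection E, U_E_eq_zero (.inl rfl), U_E_eq_zero (.inr rfl), U_one_E]
  simp
  ring

theorem constantCoeff_E : constantCoeff E = 1 := by
  have := X_pow_dvd_iff.1 (E_sub_qfac 0) 0 (by norm_num)
  rw [map_sub, sub_eq_zero] at this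
  simpa [qfac] using this

theorem U_two_components (a b c d e : ℤ⟦X⟧) :
    U 2 (X ^ 0 * V a + X ^ 1 * V b + X ^ 2 * V c + X ^ 3 * V d + X ^ 4 * V e) = c := by
  simp only [map_add]
  rw [U_X_pow_mul_V, U_X_pow_mul_V, U_X_pow_mul_V, U_X_pow_mul_V, U_X_pow_mul_V] <;> norm_num

/-- The two nontrivial components of `E` have a product known in closed form: this is the vanishing of
the component of `E ^ 3` of exponent 2 modulo 5. -/
theorem U_zero_mul_U_two : U 0 E * U 2 E = - V E ^ 2 := by
  have h3 : E ^ 3 = X ^ 0 * V (U 0 E ^ 3 - 3 * X * V E * U 2 E ^ 2)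
      + X ^ 1 * V (-3 * U 0 E ^ 2 * V E + X * U 2 E ^ 3)
      + X ^ 2 * V (3 * (U 0 E * (U 0 E * U 2 E + V E ^ 2)))
      + X ^ 3 * V (-6 * U 0 E * V E * U 2 E - V E ^ 3)
      + X ^ 4 * V (3 * U 0 E * U 2 E ^ 2 + 3 * V E ^ 2 * U 2 E) := by
    simp only [map_mul, map_add, map_sub, map_neg, map_pow, map_ofNat, V_X]
    conv_lhs => rw [E_dissection]
    ring
  have h := U_two_E_cube
  rw [h3, U_two_components] at h
  have h3 : (3 : ℤ⟦X⟧) ≠ 0 := by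
    intro h3
    have := congrArg constantCoeff h3
    rw [map_ofNat, map_zero] at this
    norm_num at this
  have h0 : U 0 E ≠ 0 := by
    intro h0
    have : constantCoeff (U 0 E) = 1 := by
      rw [← coeff_zero_eq_constantCoeff_apply, coeff_U]
      simpa using constantCoeff_E
    simp [h0] at this
  have h4 := (mul_eq_zero.1 ((mul_eq_zero.1 h).resolve_left h3)).resolve_left h0
  linear_combination h4

end EulerDissection

/-! ### Norms over the fifth roots of unity -/

section Norm

variable {R : Type*} [CommRing R]

/-- The norm `∏ f(wᵏ X)`, `k < 5`, of a power series, where `w` is meant to be a primitive fifth root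
of unity. -/
noncomputable def N (w : R) (f : R⟦X⟧) : R⟦X⟧ :=
  f * rescale w f * rescale (w ^ 2) f * rescale (w ^ 3) f * rescale (w ^ 4) f

theorem N_mul (w : R) (f g : R⟦X⟧) : N w (f * g) = N w f * N w g := by
  simp only [N, map_mul]
  ring

theorem N_congr (w : R) {n : ℕ} {f g : R⟦X⟧} (h : X ^ n ∣ f - g) : X ^ n ∣ N w f - N w g := by
  have hr : ∀ c : R, X ^ n ∣ rescale c f - rescale c g := fun c => by
    rw [← map_sub]
    exact X_pow_dvd_rescale c h
  have h1 := hr w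
  have h2 := hr (w ^ 2)
  have h3 := hr (w ^ 3)
  have h4 := hr (w ^ 4)
  rw [X_pow_dvd_sub_iff] at *
  simp only [N, map_mul, h, h1, h2, h3, h4]

theorem rescale_V (f : R⟦X⟧) (c : R) (hc : c ^ 5 = 1) : rescale c (V f) = V f := by
  ext n
  rw [coeff_rescale, coeff_V]
  split_ifs with h
  · obtain ⟨m, rfl⟩ := h
    rw [pow_mul, hc, one_pow, one_mul]
  · rw [mul_zero]

theorem N_V {w : R} (hw : w ^ 5 = 1) (f : R⟦X⟧) : N w (V f) = V f ^ 5 := by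
  have h := rescale_V f
  have hk : ∀ k, (w ^ k) ^ 5 = 1 := fun k => by rw [← pow_mul, mul_comm, pow_mul, hw, one_pow]
  rw [N, h _ hw, h _ (hk 2), h _ (hk 3), h _ (hk 4)]
  ring

theorem prod_one_sub {S : Type*} [CommRing S] {w : S} (hw : 1 + w + w ^ 2 + w ^ 3 + w ^ 4 = 0)
    (y : S) :
    (1 - y) * (1 - w * y) * (1 - w ^ 2 * y) * (1 - w ^ 3 * y) * (1 - w ^ 4 * y) = 1 - y ^ 5 := by
  have h5 : w ^ 5 = 1 := by linear_combination (w - 1) * hw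
  have h1 : (1 - w * y) * (1 - w ^ 4 * y) = 1 - (w + w ^ 4) * y + y ^ 2 := by
    linear_combination y ^ 2 * h5
  have h2 : (1 - w ^ 2 * y) * (1 - w ^ 3 * y) = 1 + (1 + w + w ^ 4) * y + y ^ 2 := by
    linear_combination y ^ 2 * h5 - y * hw
  have h3 : (w + w ^ 4) * (1 + w + w ^ 4) = 1 := by
    linear_combination hw + (2 + w ^ 3) * h5
  linear_combination (1 - y) * ((1 - w ^ 2 * y) * (1 - w ^ 3 * y) * h1 +
    (1 - (w + w ^ 4) * y + y ^ 2) * h2) - (1 - y) * y ^ 2 * h3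

/-- The norm of `a - y - b y²` with `a b = 1`. The factors are paired by complex conjugation, and
`s = w + w⁴` satisfies `s² + s = 1`. -/
theorem prod_dissected {S : Type*} [CommRing S] {w : S} (hw : 1 + w + w ^ 2 + w ^ 3 + w ^ 4 = 0)
    (a b y : S) (hab : a * b = 1) :
    (a - y - y ^ 2 * b) * (a - w * y - (w * y) ^ 2 * b) * (a - w ^ 2 * y - (w ^ 2 * y) ^ 2 * b) *
      (a - w ^ 3 * y - (w ^ 3 * y) ^ 2 * b) * (a - w ^ 4 * y - (w ^ 4 * y) ^ 2 * b)
      = a ^ 5 - 11 * y ^ 5 - y ^ 10 * b ^ 5 := by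
  have h5 : w ^ 5 = 1 := by linear_combination (w - 1) * hw
  obtain ⟨s, hs⟩ : ∃ s, s = w + w ^ 4 := ⟨_, rfl⟩
  have hs' : w ^ 2 + w ^ 3 = - 1 - s := by linear_combination hw + hs
  have hss : s ^ 2 = 1 - s := by
    rw [hs]
    linear_combination hw + (2 + w ^ 3) * h5
  have w6 : w ^ 6 = w := by linear_combination w * h5
  have w7 : w ^ 7 = w ^ 2 := by linear_combination w ^ 2 * h5
  have w8 : w ^ 8 = w ^ 3 := by linear_combination w ^ 3 * h5
  have w9 : w ^ 9 = w ^ 4 := by linear_combination w ^ 4 * h5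
  have w10 : w ^ 10 = 1 := by linear_combination (w ^ 5 + 1) * h5
  have h1 : (a - w * y - (w * y) ^ 2 * b) * (a - w ^ 4 * y - (w ^ 4 * y) ^ 2 * b) =
      a ^ 2 + y ^ 2 + y ^ 4 * b ^ 2 - s * a * y + (1 + s) * y ^ 2 + s * y ^ 3 * b := by
    linear_combination (y ^ 2) * h5 + y ^ 4 * b ^ 2 * w10 - a * b * y ^ 2 * w8
      + b * y ^ 3 * w6 + b * y ^ 3 * w9 + (a * y - y ^ 3 * b) * hs - a * b * y ^ 2 * hs'
      + (1 + s) * y ^ 2 * hab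
  have h2 : (a - w ^ 2 * y - (w ^ 2 * y) ^ 2 * b) * (a - w ^ 3 * y - (w ^ 3 * y) ^ 2 * b) =
      a ^ 2 + y ^ 2 + y ^ 4 * b ^ 2 + (1 + s) * a * y - s * y ^ 2 - (1 + s) * y ^ 3 * b := by
    linear_combination (y ^ 2) * h5 + y ^ 4 * b ^ 2 * w10 - a * b * y ^ 2 * w6
      + b * y ^ 3 * w8 + b * y ^ 3 * w7 + a * b * y ^ 2 * hs - (a * y - y ^ 3 * b) * hs'
      - s * y ^ 2 * hab
  have h3 : (a ^ 2 + y ^ 2 + y ^ 4 * b ^ 2 - s * a * y + (1 + s) * y ^ 2 + s * y ^ 3 * b) *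
      (a ^ 2 + y ^ 2 + y ^ 4 * b ^ 2 + (1 + s) * a * y - s * y ^ 2 - (1 + s) * y ^ 3 * b) =
      a ^ 4 + a ^ 3 * y + 2 * a ^ 2 * y ^ 2 + 3 * a * y ^ 3 + 5 * y ^ 4 - 3 * y ^ 5 * b
        + 2 * y ^ 6 * b ^ 2 - y ^ 7 * b ^ 3 + y ^ 8 * b ^ 4 := by
    linear_combination (-(-a * y + y ^ 2 + y ^ 3 * b) ^ 2) * hss
      + (2 * y ^ 4 * (a * b + 1) - a * y ^ 3 + b * y ^ 5 + 2 * y ^ 4) * hab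
  have h4 : (a - y - y ^ 2 * b) * (a ^ 4 + a ^ 3 * y + 2 * a ^ 2 * y ^ 2 + 3 * a * y ^ 3
      + 5 * y ^ 4 - 3 * y ^ 5 * b + 2 * y ^ 6 * b ^ 2 - y ^ 7 * b ^ 3 + y ^ 8 * b ^ 4) =
      a ^ 5 - 11 * y ^ 5 - y ^ 10 * b ^ 5 := by
    linear_combination (-6 * y ^ 5 + 2 * y ^ 6 * b - y ^ 7 * b ^ 2 + y ^ 8 * b ^ 3 - a ^ 3 * y ^ 2
      - a ^ 2 * y ^ 3 - 2 * a * y ^ 4) * hab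
  rw [← h4, ← h3, ← h1, ← h2]
  ring

end Norm

/-! ### The norm of the Euler product -/

section NormOfEuler

/-- Extension of scalars from ℤ to ℂ, where the fifth roots of unity live. -/
noncomputable def toC : ℤ⟦X⟧ →+* ℂ⟦X⟧ := PowerSeries.map (Int.castRingHom ℂ)

theorem toC_injective : Function.Injective toC := map_injective _ Int.cast_injective

theorem toC_V (f : ℤ⟦X⟧) : toC (V f) = V (toC f) := map_expand ..

theorem toC_X : toC X = X := map_X _

theorem X_pow_dvd_toC {n : ℕ} {f : ℤ⟦X⟧} (h : X ^ n ∣ f) : X ^ n ∣ toC f := by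
  simpa [toC_X] using map_dvd toC h

/-- For `k` prime to 5, the powers of `w ^ k` run over all fifth roots of unity. -/
theorem N_one_sub {R : Type*} [CommRing R] {w : R} (hw : 1 + w + w ^ 2 + w ^ 3 + w ^ 4 = 0)
    (k : ℕ) (hk : ¬ 5 ∣ k) :
    N w (1 - X ^ k) = 1 - (X : R⟦X⟧) ^ (5 * k) := by
  have h5 : w ^ 5 = 1 := by linear_combination (w - 1) * hw
  have hv : 1 + w ^ k + (w ^ k) ^ 2 + (w ^ k) ^ 3 + (w ^ k) ^ 4 = 0 := by
    obtain ⟨m, r, hr, rfl⟩ : ∃ m r, r < 5 ∧ k = 5 * m + r :=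
      ⟨k / 5, k % 5, Nat.mod_lt _ (by norm_num), (Nat.div_add_mod k 5).symm⟩
    rw [pow_add, pow_mul, h5, one_pow, one_mul]
    interval_cases r
    · omega
    · linear_combination hw
    · linear_combination hw + (w + w ^ 3) * h5
    · linear_combination hw + (w + w ^ 4 + w ^ 2 * w ^ 5 + w ^ 2) * h5
    · linear_combination hw + (w ^ 3 + w ^ 2 * (w ^ 5 + 1) + w * (w ^ 10 + w ^ 5 + 1)) * h5
  have hC := congrArg (C (R := R)) hv
  simp only [map_add, map_one, map_pow, map_zero] at hC
  have key := prod_one_sub (w := C (w ^ k)) (by simpa only [map_pow] using hC) (X ^ k)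
  rw [← pow_mul, mul_comm k 5] at key
  rw [← key]
  simp only [N, map_sub, map_one, map_pow, rescale_X, mul_pow]
  ring

theorem N_one_sub_mul_five {R : Type*} [CommRing R] {w : R} (h5 : w ^ 5 = 1) (k : ℕ) :
    N w (1 - X ^ (5 * k)) = (1 - (X : R⟦X⟧) ^ (5 * k)) ^ 5 := by
  have : (1 - (X : R⟦X⟧) ^ (5 * k)) = V (1 - X ^ k) := by
    rw [map_sub, map_one, map_pow, V_X, pow_mul]
  rw [this, N_V h5]

/-- The norm of a finite Euler product, obtained factor by factor: `1 - Xᵏ` has norm `1 - X⁵ᵏ`, except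
for `5 ∣ k`, when it has norm `(1 - Xᵏ)⁵`. -/
theorem N_qfac {w : ℂ} (hw : 1 + w + w ^ 2 + w ^ 3 + w ^ 4 = 0) (n : ℕ) :
    N w (toC (qfac (5 * n))) * V (V (toC (qfac n)))
    = V (toC (qfac (5 * n))) * V (toC (qfac n)) ^ 5 := by
  have h5 : w ^ 5 = 1 := by linear_combination (w - 1) * hw
  induction n with
  | zero => simp [qfac, N]
  | succ n ih =>
    have hq : qfac (5 * (n + 1)) = qfac (5 * n) * (1 - X ^ (5 * n + 1)) * (1 - X ^ (5 * n + 2))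
        * (1 - X ^ (5 * n + 3)) * (1 - X ^ (5 * n + 4)) * (1 - X ^ (5 * (n + 1))) := by
      rw [show 5 * (n + 1) = 5 * n + 4 + 1 by ring, qfac_succ, qfac_succ, qfac_succ, qfac_succ,
        qfac_succ]
    rw [hq, qfac_succ]
    simp only [map_mul, map_sub, map_one, map_pow, toC_X, N_mul, V_X]
    rw [N_one_sub hw _ (by omega), N_one_sub hw _ (by omega), N_one_sub hw _ (by omega),
      N_one_sub hw _ (by omega), N_one_sub_mul_five h5]
    simp only [← pow_mul]
    linear_combination (1 - X ^ (5 * (5 * n + 1))) * (1 - X ^ (5 * (5 * n + 2))) *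
      (1 - X ^ (5 * (5 * n + 3))) * (1 - X ^ (5 * (5 * n + 4))) * (1 - X ^ (5 * (n + 1))) ^ 5 *
      (1 - X ^ (5 * (5 * (n + 1)))) * ih

/-- The norm of Euler's product is `E(X⁵)⁶ / E(X²⁵)`. -/
theorem N_E {w : ℂ} (hw : 1 + w + w ^ 2 + w ^ 3 + w ^ 4 = 0) :
    N w (toC E) * V (V (toC E)) = V (toC E) ^ 6 := by
  refine eq_of_forall_X_pow_dvd fun n => ?_
  have h1 : X ^ n ∣ toC E - toC (qfac n) := by
    rw [← map_sub]
    exact X_pow_dvd_toC ((pow_dvd_pow _ (by omega)).trans (E_sub_qfac n))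
  have h2 : X ^ n ∣ toC E - toC (qfac (5 * n)) := by
    rw [← map_sub]
    exact X_pow_dvd_toC ((pow_dvd_pow _ (by omega)).trans (E_sub_qfac (5 * n)))
  have hV : ∀ {f g : ℂ⟦X⟧}, X ^ n ∣ f - g → X ^ n ∣ V f - V g := fun h => by
    rw [← map_sub]
    exact X_pow_dvd_V h
  have h3 := N_congr w h2
  have h4 := hV (hV h1)
  have h5 := hV h1
  have h6 := hV h2
  have h7 := N_qfac hw n
  rw [X_pow_dvd_sub_iff] at *
  rw [map_mul, h3, h4, ← map_mul, h7, map_mul, map_pow, map_pow, ← h6, ← h5]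
  ring

end NormOfEuler

/-! ### Ramanujan's quotient and the modular equation -/

/-- The component of exponent 0 in the 5-dissection of `E(X) / E(X²⁵)`, as a series in `X⁵`. -/
noncomputable def α : ℤ⟦X⟧ := U 0 E * V P

/-- Minus the component of exponent 2 in the 5-dissection of `E(X) / E(X²⁵)`; the inverse of `α`. -/
noncomputable def β : ℤ⟦X⟧ := - (U 2 E * V P)

theorem V_P_mul_V_E : V P * V E = 1 := by rw [← map_mul, P_mul_E, map_one]

theorem α_mul_β : α * β = 1 := by
  rw [α, β]
  linear_combination (-V P ^ 2) * U_zero_mul_U_two + (V P * V E + 1) * V_P_mul_V_E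

theorem E_eq : E = V (V E) * (V α - X - X ^ 2 * V β) := by
  have h := congrArg V V_P_mul_V_E
  simp only [map_mul, map_one] at h
  rw [α, β]
  simp only [map_mul, map_neg]
  conv_lhs => rw [E_dissection]
  linear_combination (-V (U 0 E) - X ^ 2 * V (U 2 E)) * h

/-- Ramanujan's identity `E(X)⁶ / E(X⁵)⁶ = α⁵ - 11 X - X² β⁵`: take the norm of `E_eq` and compare
it with `N_E`. -/
theorem E_pow_six : E ^ 6 = V E ^ 6 * (α ^ 5 - 11 * X - X ^ 2 * β ^ 5) := by
  obtain ⟨w, hw⟩ : ∃ w : ℂ, 1 + w + w ^ 2 + w ^ 3 + w ^ 4 = 0 := by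
    have h := Complex.isPrimitiveRoot_exp 5 (by norm_num)
    have := h.geom_sum_eq_zero (by norm_num)
    exact ⟨_, by simpa [sum_range_succ] using this⟩
  have h5 : w ^ 5 = 1 := by linear_combination (w - 1) * hw
  have hk : ∀ k, (w ^ k) ^ 5 = 1 := fun k => by rw [← pow_mul, mul_comm, pow_mul, h5, one_pow]
  apply V_injective
  apply toC_injective
  have h1 := N_E hw
  have h2 : toC E = V (V (toC E)) * (V (toC α) - X - X ^ 2 * V (toC β)) := by
    conv_lhs => rw [E_eq]
    simp only [map_mul, map_sub, map_pow, toC_X, toC_V]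
  have hr := rescale_V (R := ℂ)
  have h3 : N w (V (toC α) - X - X ^ 2 * V (toC β))
      = V (toC α) ^ 5 - 11 * X ^ 5 - X ^ 10 * V (toC β) ^ 5 := by
    have hC := congrArg (C (R := ℂ)) hw
    simp only [map_add, map_one, map_pow, map_zero] at hC
    rw [← prod_dissected hC (V (toC α)) (V (toC β)) X]
    · simp only [N, map_sub, map_mul, map_pow, rescale_X, hr _ _ h5, hr _ _ (hk _)]
    · rw [← map_mul, ← map_mul, α_mul_β, map_one, map_one]
  have h4 : N w (toC E) = V (V (toC E)) ^ 5 * N w (V (toC α) - X - X ^ 2 * V (toC β)) := by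
    conv_lhs => rw [h2, N_mul, N_V h5]
  rw [h4, h3] at h1
  simp only [map_mul, map_sub, map_pow, toC_X, toC_V, V_X, map_ofNat]
  linear_combination -h1

/-! ### The values of `U 0` on powers of `z` -/

section ModularEquation

/-- The series `X E(X²⁵) / E(X)`. -/
noncomputable def z : ℤ⟦X⟧ := X * V (V E) * P

/-- The series `X E(X⁵)⁶ / E(X)⁶`. -/
noncomputable def t : ℤ⟦X⟧ := X * V E ^ 6 * P ^ 6

/-- The series `E(X)⁶ / E(X⁵)⁶`, written in terms of `α` and `β`. -/
noncomputable def γ : ℤ⟦X⟧ := α ^ 5 - 11 * X - X ^ 2 * β ^ 5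

/-- The series `E(X) / E(X²⁵)`, written in terms of `α` and `β`. -/
noncomputable def e : ℤ⟦X⟧ := V α - X - X ^ 2 * V β

theorem V_α_mul_V_β : V α * V β = 1 := by rw [← map_mul, α_mul_β, map_one]

theorem z_mul_e : z * e = X := by
  have h : E = V (V E) * e := E_eq
  rw [z]
  linear_combination (-X * P) * h + X * P_mul_E

theorem t_mul_γ : t * γ = X := by
  have h : E ^ 6 = V E ^ 6 * γ := E_pow_six
  have h6 : P ^ 6 * E ^ 6 = 1 := by rw [← mul_pow, P_mul_E, one_pow]
  rw [t]
  linear_combination (-X * P ^ 6) * h + X * h6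

theorem t_ne_zero : t ≠ 0 := by
  intro h
  have := t_mul_γ
  rw [h, zero_mul] at this
  exact X_ne_zero this.symm

theorem t_mul_V_t : t * V t = z ^ 6 := by
  have h := congrArg (· ^ 6) V_P_mul_V_E
  simp only [t, z, map_mul, map_pow, V_X, mul_pow, one_pow] at h ⊢
  linear_combination X ^ 6 * P ^ 6 * V (V E) ^ 6 * h

/-- The equation of `e = a - X - X² b` (where `a b = 1`) over the series in `X⁵`. -/
theorem e_quintic :
    e ^ 5 + 5 * X * e ^ 4 + 15 * X ^ 2 * e ^ 3 + 25 * X ^ 3 * e ^ 2 + 25 * X ^ 4 * e = V γ := by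
  have h := V_α_mul_V_β
  rw [e, γ]
  simp only [map_sub, map_mul, map_pow, map_ofNat, V_X]
  generalize V α = a at *
  generalize V β = b at *
  linear_combination (-5 * a ^ 3 * X ^ 2 + 10 * a ^ 2 * b * X ^ 4 - 5 * a * X ^ 4
    - 10 * a * b ^ 2 * X ^ 6 + 5 * b * X ^ 6 + 5 * b ^ 3 * X ^ 8) * h

theorem e_sq : e ^ 2 = V (α ^ 2) - 2 * X * V α - X ^ 2 + 2 * X ^ 3 * V β + X ^ 4 * V (β ^ 2) := by
  rw [e, map_pow, map_pow]
  linear_combination (-2 * X ^ 2) * V_α_mul_V_β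

theorem e_cube : e ^ 3 = V (α ^ 3) - 3 * X * V (α ^ 2) + 5 * X ^ 3 - 3 * X ^ 5 * V (β ^ 2)
    - X ^ 6 * V (β ^ 3) := by
  rw [e, map_pow, map_pow, map_pow, map_pow]
  linear_combination (-3 * V α * X ^ 2 + 6 * X ^ 3 + 3 * X ^ 4 * V β) * V_α_mul_V_β

theorem e_four : e ^ 4 = V (α ^ 4) - 4 * X * V (α ^ 3) + 2 * X ^ 2 * V (α ^ 2) + 8 * X ^ 3 * V α
    - 5 * X ^ 4 - 8 * X ^ 5 * V β + 2 * X ^ 6 * V (β ^ 2) + 4 * X ^ 7 * V (β ^ 3)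
    + X ^ 8 * V (β ^ 4) := by
  simp only [e, map_pow]
  linear_combination (-4 * V α ^ 2 * X ^ 2 + 12 * X ^ 3 * V α - 12 * X ^ 4
    + 6 * X ^ 4 * (V α * V β + 1) - 12 * X ^ 5 * V β - 4 * X ^ 6 * V β ^ 2) * V_α_mul_V_β

theorem U_V_mul_X_pow (k : ℕ) (hk : ¬ 5 ∣ k) (f : ℤ⟦X⟧) : U 0 (V f * X ^ k) = 0 := by
  rw [U_V_mul 0 (by norm_num), U_X_pow k hk, mul_zero]

theorem U_X_five : U 0 (X ^ 5 : ℤ⟦X⟧) = X := by rw [← V_X, U_V]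

theorem U_one : U 0 (1 : ℤ⟦X⟧) = 1 := by
  simpa using U_V (1 : ℤ⟦X⟧)

theorem U_e : U 0 (X ^ 4 * e) = -X := by
  have h : X ^ 4 * e = V α * X ^ 4 - X ^ 5 - V β * X ^ 6 := by rw [e]; ring
  rw [h, map_sub, map_sub, U_X_five, U_V_mul_X_pow _ (by norm_num), U_V_mul_X_pow _ (by norm_num)]
  ring

theorem U_e_sq : U 0 (X ^ 3 * e ^ 2) = -X := by
  have h : X ^ 3 * e ^ 2 = V (α ^ 2) * X ^ 3 - (2 : ℤ) • (V α * X ^ 4) - X ^ 5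
      + (2 : ℤ) • (V β * X ^ 6) + V (β ^ 2) * X ^ 7 := by
    rw [e_sq]
    simp only [zsmul_eq_mul]
    push_cast
    ring
  rw [h]
  simp only [map_add, map_sub, map_zsmul]
  rw [U_X_five, U_V_mul_X_pow _ (by norm_num), U_V_mul_X_pow _ (by norm_num),
    U_V_mul_X_pow _ (by norm_num), U_V_mul_X_pow _ (by norm_num)]
  simp

theorem U_e_cube : U 0 (X ^ 2 * e ^ 3) = 5 * X := by
  have h : X ^ 2 * e ^ 3 = V (α ^ 3) * X ^ 2 - (3 : ℤ) • (V (α ^ 2) * X ^ 3) + (5 : ℤ) • X ^ 5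
      - (3 : ℤ) • (V (β ^ 2) * X ^ 7) - V (β ^ 3) * X ^ 8 := by
    rw [e_cube]
    simp only [zsmul_eq_mul]
    push_cast
    ring
  rw [h]
  simp only [map_add, map_sub, map_zsmul]
  rw [U_X_five, U_V_mul_X_pow _ (by norm_num), U_V_mul_X_pow _ (by norm_num),
    U_V_mul_X_pow _ (by norm_num), U_V_mul_X_pow _ (by norm_num)]
  simp

theorem U_e_four : U 0 (X * e ^ 4) = -5 * X := by
  have h : X * e ^ 4 = V (α ^ 4) * X ^ 1 - (4 : ℤ) • (V (α ^ 3) * X ^ 2)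
      + (2 : ℤ) • (V (α ^ 2) * X ^ 3) + (8 : ℤ) • (V α * X ^ 4) - (5 : ℤ) • X ^ 5
      - (8 : ℤ) • (V β * X ^ 6) + (2 : ℤ) • (V (β ^ 2) * X ^ 7) + (4 : ℤ) • (V (β ^ 3) * X ^ 8)
      + V (β ^ 4) * X ^ 9 := by
    rw [e_four]
    simp only [zsmul_eq_mul]
    push_cast
    ring
  rw [h]
  simp only [map_add, map_sub, map_zsmul]
  rw [U_X_five]
  repeat rw [U_V_mul_X_pow _ (by norm_num)]
  simp

/-- The modular equation of degree 5 between `z(X)` and `t(X⁵)`. -/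
theorem z_quintic :
    z ^ 5 = V t * (1 + 5 * z + 15 * z ^ 2 + 25 * z ^ 3 + 25 * z ^ 4) := by
  have h1 := z_mul_e
  have h2 := e_quintic
  have h3 : V t * V γ = X ^ 5 := by rw [← map_mul, t_mul_γ, V_X]
  have h4 : z ^ 5 * V γ = X ^ 5 * (1 + 5 * z + 15 * z ^ 2 + 25 * z ^ 3 + 25 * z ^ 4) := by
    rw [← h2]
    have p2 : z ^ 2 * e ^ 2 = X ^ 2 := by rw [← mul_pow, h1]
    have p3 : z ^ 3 * e ^ 3 = X ^ 3 := by rw [← mul_pow, h1]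
    have p4 : z ^ 4 * e ^ 4 = X ^ 4 := by rw [← mul_pow, h1]
    have p5 : z ^ 5 * e ^ 5 = X ^ 5 := by rw [← mul_pow, h1]
    linear_combination p5 + 5 * z * X * p4 + 15 * z ^ 2 * X ^ 2 * p3 + 25 * z ^ 3 * X ^ 3 * p2
      + 25 * z ^ 4 * X ^ 4 * h1
  apply mul_left_cancel₀ (pow_ne_zero 5 (X_ne_zero (R := ℤ)))
  linear_combination V t * h4 - z ^ 5 * h3

/-- Computing `U 0 f` from a multiple of `f` by the element `V γ = X⁵ / V t`. -/
theorem U_of_z_mul {f g : ℤ⟦X⟧} (h : f * V γ = g) : U 0 f * X = t * U 0 g := by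
  rw [← h, mul_comm f, U_V_mul 0 (by norm_num)]
  linear_combination (-U 0 f) * t_mul_γ

theorem z_mul_V_γ :
    z * V γ = X * e ^ 4 + (5 : ℤ) • (X ^ 2 * e ^ 3) + (15 : ℤ) • (X ^ 3 * e ^ 2)
      + (25 : ℤ) • (X ^ 4 * e) + (25 : ℤ) • X ^ 5 := by
  simp only [zsmul_eq_mul]
  push_cast
  linear_combination (-z) * e_quintic + (e ^ 4 + 5 * X * e ^ 3 + 15 * X ^ 2 * e ^ 2
    + 25 * X ^ 3 * e + 25 * X ^ 4) * z_mul_e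

theorem U_z : U 0 z = 5 * t := by
  have h := U_of_z_mul z_mul_V_γ
  simp only [map_add, map_zsmul, U_e, U_e_sq, U_e_cube, U_e_four, U_X_five] at h
  simp only [zsmul_eq_mul] at h
  push_cast at h
  apply mul_right_cancel₀ (X_ne_zero (R := ℤ))
  linear_combination h

theorem U_z_sq : U 0 (z ^ 2) = 10 * t + 125 * t ^ 2 := by
  have h0 : z ^ 2 * V γ = X ^ 2 * e ^ 3 + (5 : ℤ) • (X ^ 3 * e ^ 2) + (15 : ℤ) • (X ^ 4 * e)
      + (25 : ℤ) • X ^ 5 + (25 : ℤ) • (X ^ 5 * z) := by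
    have h := z_mul_V_γ
    simp only [zsmul_eq_mul] at h ⊢
    push_cast at h ⊢
    linear_combination z * h + (X * e ^ 3 + 5 * X ^ 2 * e ^ 2 + 15 * X ^ 3 * e
      + 25 * X ^ 4) * z_mul_e
  have h := U_of_z_mul h0
  simp only [map_add, map_zsmul, U_e, U_e_sq, U_e_cube, U_X_five, U_X_pow_five_mul, U_z] at h
  simp only [zsmul_eq_mul] at h
  push_cast at h
  apply mul_right_cancel₀ (X_ne_zero (R := ℤ))
  linear_combination h

theorem U_z_cube : U 0 (z ^ 3) = 9 * t + 375 * t ^ 2 + 3125 * t ^ 3 := by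
  have h0 : z ^ 3 * V γ = X ^ 3 * e ^ 2 + (5 : ℤ) • (X ^ 4 * e) + (15 : ℤ) • X ^ 5
      + (25 : ℤ) • (X ^ 5 * z) + (25 : ℤ) • (X ^ 5 * z ^ 2) := by
    have h := z_mul_V_γ
    simp only [zsmul_eq_mul] at h ⊢
    push_cast at h ⊢
    linear_combination z ^ 2 * h + ((X * z * e ^ 3 + X ^ 2 * e ^ 2)
      + 5 * (X ^ 2 * z * e ^ 2 + X ^ 3 * e) + 15 * (X ^ 3 * z * e + X ^ 4)
      + 25 * X ^ 4 * z) * z_mul_e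
  have h := U_of_z_mul h0
  simp only [map_add, map_zsmul, U_e, U_e_sq, U_X_five, U_X_pow_five_mul, U_z, U_z_sq] at h
  simp only [zsmul_eq_mul] at h
  push_cast at h
  apply mul_right_cancel₀ (X_ne_zero (R := ℤ))
  linear_combination h

theorem U_z_four : U 0 (z ^ 4) = 4 * t + 550 * t ^ 2 + 12500 * t ^ 3 + 78125 * t ^ 4 := by
  have h0 : z ^ 4 * V γ = X ^ 4 * e + (5 : ℤ) • X ^ 5
      + (15 : ℤ) • (X ^ 5 * z) + (25 : ℤ) • (X ^ 5 * z ^ 2) + (25 : ℤ) • (X ^ 5 * z ^ 3) := by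
    have h := z_mul_V_γ
    simp only [zsmul_eq_mul] at h ⊢
    push_cast at h ⊢
    linear_combination z ^ 3 * h + ((X * z ^ 2 * e ^ 3 + X ^ 2 * z * e ^ 2 + X ^ 3 * e)
      + 5 * (X ^ 2 * z ^ 2 * e ^ 2 + X ^ 3 * z * e + X ^ 4)
      + 15 * (X ^ 3 * z ^ 2 * e + X ^ 4 * z) + 25 * X ^ 4 * z ^ 2) * z_mul_e
  have h := U_of_z_mul h0
  simp only [map_add, map_zsmul, U_e, U_X_five, U_X_pow_five_mul, U_z, U_z_sq, U_z_cube] at h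
  simp only [zsmul_eq_mul] at h
  push_cast at h
  apply mul_right_cancel₀ (X_ne_zero (R := ℤ))
  linear_combination h

/-- The modular equation turns into a recurrence with coefficients in `ℤ[t]`, because `U 0` is linear
over the image of `V`. -/
theorem U_z_add_five (i : ℕ) : U 0 (z ^ (i + 5)) = t * (U 0 (z ^ i) + 5 * U 0 (z ^ (i + 1))
    + 15 * U 0 (z ^ (i + 2)) + 25 * U 0 (z ^ (i + 3)) + 25 * U 0 (z ^ (i + 4))) := by
  have h : z ^ (i + 5) = V t * (z ^ i + (5 : ℤ) • z ^ (i + 1) + (15 : ℤ) • z ^ (i + 2)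
      + (25 : ℤ) • z ^ (i + 3) + (25 : ℤ) • z ^ (i + 4)) := by
    simp only [zsmul_eq_mul]
    push_cast
    rw [pow_add, z_quintic]
    ring
  rw [h, U_V_mul 0 (by norm_num)]
  simp only [map_add, map_zsmul]
  simp only [zsmul_eq_mul]
  push_cast
  ring

end ModularEquation

/-! ### The polynomials of the recurrence and their 5-adic size -/

section Recurrence

/-- The polynomials expressing `U 0 (z ^ i)` in terms of `t`; see `U_z_pow`. -/
noncomputable def M : ℕ → Polynomial ℤ
  | 0 => 1
  | 1 => 5 * Polynomial.X
  | 2 => 10 * Polynomial.X + 125 * Polynomial.X ^ 2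
  | 3 => 9 * Polynomial.X + 375 * Polynomial.X ^ 2 + 3125 * Polynomial.X ^ 3
  | 4 => 4 * Polynomial.X + 550 * Polynomial.X ^ 2 + 12500 * Polynomial.X ^ 3
      + 78125 * Polynomial.X ^ 4
  | i + 5 => Polynomial.X * (M i + 5 * M (i + 1) + 15 * M (i + 2) + 25 * M (i + 3)
      + 25 * M (i + 4))

/-- Evaluation of integer polynomials at `t`. -/
noncomputable def ev : Polynomial ℤ →+* ℤ⟦X⟧ := Polynomial.eval₂RingHom (Int.castRingHom _) t

theorem ev_X : ev Polynomial.X = t := by simp [ev]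

theorem ev_C (c : ℤ) : ev (Polynomial.C c) = c := by simp [ev]

theorem U_intCast_mul (c : ℤ) (f : ℤ⟦X⟧) : U 0 ((c : ℤ⟦X⟧) * f) = c * U 0 f := by
  rw [← zsmul_eq_mul, ← zsmul_eq_mul, map_zsmul]

theorem ev_eq_sum (Q : Polynomial ℤ) :
    ev Q = ∑ i ∈ Q.support, (Q.coeff i : ℤ⟦X⟧) * t ^ i := by
  simp [ev, Polynomial.eval₂_eq_sum, Polynomial.sum]

theorem U_z_pow (i : ℕ) : U 0 (z ^ i) = ev (M i) := by
  induction i using M.induct with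
  | case1 => simp [M, U_one]
  | case2 => simp [M, ev_X, map_ofNat ev, U_z]
  | case3 => simp [M, ev_X, map_ofNat ev, U_z_sq]
  | case4 => simp [M, ev_X, map_ofNat ev, U_z_cube]
  | case5 => simp [M, ev_X, map_ofNat ev, U_z_four]
  | case6 i h0 h1 h2 h3 h4 =>
    rw [U_z_add_five, h0, h1, h2, h3, h4, M]
    simp [ev_X, map_ofNat ev]

/-- `M i` has no terms of degree below `i / 5`, and its coefficients are divisible by high powers of 5.
The exponent is a truncated difference, so the bound is vacuous for `5 j ≤ i + 2`. -/
theorem M_bound (i : ℕ) : ∀ j, (5 * j < i → (M i).coeff j = 0) ∧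
    (5 : ℤ) ^ ((5 * j - i - 1) / 2) ∣ (M i).coeff j := by
  induction i using M.induct with
  | case1 =>
    rintro (_ | j)
    · simp [M]
    · simp [M, Polynomial.coeff_one]
  | case2 =>
    rintro (_ | _ | j) <;>
      simp [M, Polynomial.coeff_ofNat_mul, Polynomial.coeff_X]
  | case3 =>
    rintro (_ | _ | _ | j) <;>
      simp [M, Polynomial.coeff_ofNat_mul, Polynomial.coeff_X, Polynomial.coeff_X_pow]
  | case4 =>
    rintro (_ | _ | _ | _ | j) <;>
      simp [M, Polynomial.coeff_ofNat_mul, Polynomial.coeff_X, Polynomial.coeff_X_pow]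
  | case5 =>
    rintro (_ | _ | _ | _ | _ | j) <;>
      simp [M, Polynomial.coeff_ofNat_mul, Polynomial.coeff_X, Polynomial.coeff_X_pow]
  | case6 i h0 h1 h2 h3 h4 =>
    rintro (_ | j)
    · simp [M]
    rw [M, Polynomial.coeff_X_mul]
    rw [Polynomial.coeff_add, Polynomial.coeff_add, Polynomial.coeff_add, Polynomial.coeff_add,
      Polynomial.coeff_ofNat_mul, Polynomial.coeff_ofNat_mul, Polynomial.coeff_ofNat_mul,
      Polynomial.coeff_ofNat_mul]
    constructor
    · intro hj
      simp [(h0 j).1 (by omega), (h1 j).1 (by omega),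
        (h2 j).1 (by omega), (h3 j).1 (by omega), (h4 j).1 (by omega)]
    · have key : ∀ (l b : ℕ) (x y : ℤ), (5 : ℤ) ^ ((5 * j - (i + l) - 1) / 2) ∣ x →
          (5 : ℤ) ^ b ∣ y → l ≤ 2 * b → (5 : ℤ) ^ ((5 * (j + 1) - (i + 5) - 1) / 2) ∣ y * x := by
        intro l b x y hx hy hl
        refine (pow_dvd_pow 5 ?_).trans ((pow_add (5 : ℤ) b _).dvd.trans (mul_dvd_mul hy hx))
        omega
      refine dvd_add (dvd_add (dvd_add (dvd_add ?_ ?_) ?_) ?_) ?_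
      · simpa using key 0 0 _ 1 (h0 j).2 (by norm_num) (by norm_num)
      · exact key 1 1 _ 5 (h1 j).2 (by norm_num) (by norm_num)
      · exact key 2 1 _ 15 (h2 j).2 (by norm_num) (by norm_num)
      · exact key 3 2 _ 25 (h3 j).2 (by norm_num) (by norm_num)
      · exact key 4 2 _ 25 (h4 j).2 (by norm_num) (by norm_num)

/-- Since `t * V t = z ^ 6`, the value of `U 0` on `z ^ s * t ^ i` is `t ^ (-i)` times its value on
`z ^ (6 i + s)`. -/
theorem U_z_pow_mul_t_pow (s i : ℕ) : ∃ D : Polynomial ℤ,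
    U 0 (z ^ s * t ^ i) = ev D ∧ (0 < i → D.coeff 0 = 0) ∧
      ∀ j, (5 : ℤ) ^ ((5 * j - i - s - 1) / 2) ∣ D.coeff j := by
  have hdvd : Polynomial.X ^ i ∣ M (6 * i + s) := by
    rw [Polynomial.X_pow_dvd_iff]
    intro d hd
    exact (M_bound _ d).1 (by omega)
  obtain ⟨D, hD⟩ := hdvd
  have hc : ∀ j, D.coeff j = (M (6 * i + s)).coeff (j + i) := by
    intro j
    rw [hD, Polynomial.coeff_X_pow_mul]
  refine ⟨D, ?_, ?_, ?_⟩
  · apply mul_left_cancel₀ (pow_ne_zero i t_ne_zero)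
    have h1 : V (t ^ i) * (z ^ s * t ^ i) = z ^ (6 * i + s) := by
      rw [pow_add, pow_mul, ← t_mul_V_t, map_pow]
      ring
    rw [← U_V_mul 0 (by norm_num), h1, U_z_pow, hD]
    simp [ev_X]
  · intro hi
    rw [hc]
    exact (M_bound _ _).1 (by omega)
  · intro j
    rw [hc]
    refine (pow_dvd_pow 5 ?_).trans (M_bound _ _).2
    omega

/-- One step of the 5-adic induction: applying `f ↦ U 0 (z ^ s * f)` to a polynomial in `t` gains a
factor 5 and interchanges the two shapes of bounds, `s = 0` and `s = 1`. -/
theorem transfer (s c : ℕ) (hs : s ≤ 1) (Q : Polynomial ℤ) (h0 : Q.coeff 0 = 0)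
    (hQ : ∀ i, (5 : ℤ) ^ (c + (5 * i + s) / 2) ∣ Q.coeff (i + 1)) :
    ∃ Q' : Polynomial ℤ, U 0 (z ^ s * ev Q) = ev Q' ∧
      Q'.coeff 0 = 0 ∧
      ∀ i, (5 : ℤ) ^ (c + 1 + (5 * i + (1 - s)) / 2) ∣ Q'.coeff (i + 1) := by
  choose D hD hD0 hDb using U_z_pow_mul_t_pow s
  refine ⟨∑ i ∈ Q.support, Polynomial.C (Q.coeff i) * D i, ?_, ?_, ?_⟩
  · rw [ev_eq_sum, Finset.mul_sum, map_sum, map_sum]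
    refine Finset.sum_congr rfl fun i _ => ?_
    rw [map_mul ev, ev_C, ← hD, ← U_intCast_mul]
    congr 1
    ring
  · rw [Polynomial.finsetSum_coeff]
    refine Finset.sum_eq_zero fun i _ => ?_
    rw [Polynomial.coeff_C_mul]
    rcases i with _ | i
    · rw [h0, zero_mul]
    · rw [hD0 _ (by omega), mul_zero]
  · intro j
    rw [Polynomial.finsetSum_coeff]
    refine Finset.dvd_sum fun i _ => ?_
    rw [Polynomial.coeff_C_mul]
    rcases i with _ | i
    · rw [h0, zero_mul]
      exact dvd_zero _
    · refine (pow_dvd_pow 5 ?_).trans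
        ((pow_add (5 : ℤ) _ _).dvd.trans (mul_dvd_mul (hQ i) (hDb (i + 1) (j + 1))))
      rcases i with _ | i <;> interval_cases s <;> omega

end Recurrence

/-! ### The progressions modulo powers of 5 -/

section Induction

theorem X_mul_P : X * P = z * V (V P) := by
  have h : V (V P) * V (V E) = 1 := by rw [← map_mul, V_P_mul_V_E, map_one]
  rw [z]
  linear_combination (-X * P) * h

/-- Whenever `24 n = 24 B m + 1 - A`, the number `p(n)` is the `m`-th coefficient of `F · Q(t)`, for a
fixed polynomial `Q` without constant term whose `(i+1)`-st coefficient is divisible by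
`5 ^ (c + ⌊(5 i + s) / 2⌋)`. -/
structure Represents (A B : ℕ) (F : ℤ⟦X⟧) (s c : ℕ) : Prop where
  exists_poly : ∃ Q : Polynomial ℤ, Q.coeff 0 = 0 ∧
    (∀ i, (5 : ℤ) ^ (c + (5 * i + s) / 2) ∣ Q.coeff (i + 1)) ∧
    ∀ m n : ℕ, 24 * n + A = 24 * B * m + 1 →
      coeff m (F * ev Q) = (partitionCount n : ℤ)

/-- The series `∑ p(5m - 1) Xᵐ = U 0 (X P)` is `5 t / E(X⁵)`: Ramanujan's identity for the modulus 5. -/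
theorem represents_odd_zero : Represents 25 5 (V P) 0 1 := by
  refine ⟨5 * Polynomial.X, by simp, ?_, ?_⟩
  · rintro (_ | i)
    · simp [Polynomial.coeff_ofNat_mul]
    · simp [Polynomial.coeff_ofNat_mul, Polynomial.coeff_X]
  · intro m n h
    have h1 : U 0 (X * P) = V P * (5 * t) := by
      rw [X_mul_P, mul_comm z, U_V_mul 0 (by norm_num), U_z]
    have h2 : V P * ev (5 * Polynomial.X : Polynomial ℤ) = U 0 (X * P) := by
      simp [h1, ev_X, map_ofNat ev]
    rw [h2, coeff_U, show 5 * m + 0 = n + 1 by omega, coeff_succ_X_mul, P, coeff_mk]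

theorem Represents.even {A B c : ℕ} (h : Represents A B (V P) 0 c) :
    Represents A (5 * B) P 1 (c + 1) := by
  obtain ⟨Q, h0, hQ, hp⟩ := h
  obtain ⟨Q', hU, h0', hQ'⟩ := transfer 0 c (by norm_num) Q h0 hQ
  refine ⟨Q', h0', hQ', fun m n hmn => ?_⟩
  rw [pow_zero, one_mul] at hU
  rw [← hU, ← U_V_mul 0 (by norm_num), coeff_U]
  exact hp _ _ (by linarith)

theorem Represents.odd {A c : ℕ} (hA : 0 < A) (h : Represents A A P 1 c) :
    Represents (25 * A) (5 * A) (V P) 0 (c + 1) := by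
  obtain ⟨Q, h0, hQ, hp⟩ := h
  obtain ⟨Q', hU, h0', hQ'⟩ := transfer 1 c le_rfl Q h0 hQ
  refine ⟨Q', h0', hQ', fun m n hmn => ?_⟩
  have h1 : V P * U 0 (z ^ 1 * ev Q) = U 0 (X * (P * ev Q)) := by
    rw [← mul_assoc, X_mul_P, ← U_V_mul 0 (by norm_num)]
    congr 1
    ring
  rw [← hU, h1, coeff_U]
  obtain ⟨m, rfl⟩ : ∃ m', m = m' + 1 := by
    refine ⟨m - 1, ?_⟩
    rcases m with _ | m
    · omega
    · rfl
  rw [show 5 * (m + 1) + 0 = (5 * m + 4) + 1 by ring, coeff_succ_X_mul]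
  exact hp _ _ (by linarith)

theorem represents_odd (a : ℕ) :
    Represents (25 ^ (a + 1)) (5 * 25 ^ a) (V P) 0 (2 * a + 1) := by
  induction a with
  | zero => exact represents_odd_zero
  | succ a ih =>
    have h := ih.even
    rw [show 5 * (5 * 25 ^ a) = 25 ^ (a + 1) by ring] at h
    have h' := h.odd (by positivity)
    rw [show 25 * 25 ^ (a + 1) = 25 ^ (a + 1 + 1) by ring] at h'
    exact h'

theorem represents_even (a : ℕ) :
    Represents (25 ^ (a + 1)) (25 ^ (a + 1)) P 1 (2 * a + 2) := by
  have h := (represents_odd a).even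
  rwa [show 5 * (5 * 25 ^ a) = 25 ^ (a + 1) by ring] at h

theorem Represents.dvd {A B : ℕ} {F : ℤ⟦X⟧} {s c : ℕ} (h : Represents A B F s c) {m n : ℕ}
    (hmn : 24 * n + A = 24 * B * m + 1) : (5 : ℤ) ^ c ∣ partitionCount n := by
  obtain ⟨Q, h0, hQ, hp⟩ := h
  have hC : Polynomial.C ((5 : ℤ) ^ c) ∣ Q := by
    rw [Polynomial.C_dvd_iff_dvd_coeff]
    rintro (_ | i)
    · simp [h0]
    · exact (pow_dvd_pow 5 (Nat.le_add_right _ _)).trans (hQ i)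
  obtain ⟨R, rfl⟩ := hC
  rw [← hp m n hmn, map_mul ev, ev_C, mul_left_comm, ← zsmul_eq_mul, map_zsmul, smul_eq_mul]
  exact Dvd.intro _ rfl

end Induction

/-- Solving for the index `m`: as 24 divides both `A - 1` and `b² - 1`, the cofactor `w` in
`24 n - 1 = B w` is `-b` modulo 24. -/
theorem exists_index (B A n : ℕ) (b : ℕ) (hB : 24 * n ≡ 1 [MOD B]) (hA : A = b * B)
    (hA1 : 1 ≤ A) (q r : ℕ) (hq : A = 24 * q + 1) (hr : b * b = 24 * r + 1) :
    ∃ m, 24 * n + A = 24 * B * m + 1 := by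
  obtain ⟨w, hw⟩ := (Nat.modEq_iff_dvd.1 hB.symm)
  push_cast at hw
  have hAz : (A : ℤ) = b * B := by exact_mod_cast hA
  have hqz : (A : ℤ) = 24 * q + 1 := by exact_mod_cast hq
  have hrz : (b : ℤ) * b = 24 * r + 1 := by exact_mod_cast hr
  have hm : (24 : ℤ) ∣ w + b := by
    refine ⟨n * b - q * w, ?_⟩
    linear_combination (-b : ℤ) * hw + w * hAz - w * hqz
  obtain ⟨m, hm⟩ := hm
  have hz : (24 * n + A : ℤ) = 24 * B * m + 1 := by
    linear_combination hw + hAz + (B : ℤ) * hm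
  have hm0 : 0 ≤ m := by
    by_contra! hneg
    have hB0 : (0 : ℤ) ≤ B := by positivity
    have : (1 : ℤ) ≤ A := by exact_mod_cast hA1
    have hB1 : (1 : ℤ) ≤ B := by
      rcases B.eq_zero_or_pos with h | h
      · subst h; simp at hA; omega
      · exact_mod_cast h
    nlinarith
  lift m to ℕ using hm0
  exact ⟨m, by exact_mod_cast hz⟩

theorem exists_twentyFive_pow (a : ℕ) : ∃ q, 25 ^ a = 24 * q + 1 := by
  induction a with
  | zero => exact ⟨0, rfl⟩
  | succ a ih =>
    obtain ⟨q, hq⟩ := ih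
    exact ⟨25 * q + 1, by rw [pow_succ, hq]; ring⟩

end RamanujanWatson

theorem ramanujan_watson_pow_5 (k : ℕ) (hk : 0 < k) (n : ℕ)
    (h : 24 * n ≡ 1 [MOD 5 ^ k]) : partitionCount n ≡ 0 [MOD 5 ^ k] := by
  rw [Nat.modEq_zero_iff_dvd]
  suffices (5 : ℤ) ^ k ∣ partitionCount n by exact_mod_cast this
  obtain ⟨a, rfl | rfl⟩ : ∃ a, k = 2 * a + 1 ∨ k = 2 * a + 2 := ⟨(k - 1) / 2, by omega⟩
  all_goals obtain ⟨q, hq⟩ := RamanujanWatson.exists_twentyFive_pow (a + 1)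
  · have h5 : 5 ^ (2 * a + 1) = 5 * 25 ^ a := by rw [pow_succ, pow_mul]; ring
    rw [h5] at h
    obtain ⟨m, hm⟩ := RamanujanWatson.exists_index _ (25 ^ (a + 1)) n 5 h (by ring)
      (Nat.one_le_pow _ _ (by norm_num)) q 1 hq rfl
    exact (RamanujanWatson.represents_odd a).dvd hm
  · have h5 : 5 ^ (2 * a + 2) = 25 ^ (a + 1) := by
      rw [show 2 * a + 2 = 2 * (a + 1) by ring, pow_mul]; norm_num
    rw [h5] at h
    obtain ⟨m, hm⟩ := RamanujanWatson.exists_index _ (25 ^ (a + 1)) n 1 h (by ring)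
      (Nat.one_le_pow _ _ (by norm_num)) q 0 hq rfl
    exact (RamanujanWatson.represents_even a).dvd hm
end
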